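/- Generalized diffusion matrix identification: for the same strong solution and all $\theta\in\mathbb R^d$, $\varphi\in C_0(\mathbb R^d)$, $\lim_{t\downarrow 0}\frac{1}{t}\int_{\mathbb R^d}\varphi(z)\,\mathbb E\,(x(t,z)-z,\theta)^2\,dz=(\theta,\theta)\int_{\mathbb R^d}\varphi(z)\,dz+\int_S(\beta(z)\theta,\theta)\,\varphi(z)\,d\sigma_z$, and moreover $\lim_{t\downarrow 0}\frac{1}{t}\int_{\mathbb R^d}\varphi(z)\,\mathbb E|x(t,z)-z|^4\,dz=0$. -/

import Mathlib

/-!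
Along uniform partitions, the component of `x(t,z) - z` in the direction `θ` is approximated by
`A + M + W`: the Riemann sum `A` of the local-time drift (`asum`), the Riemann sum `M` of the
integral of `β̃ θ` against the time-changed process `w̃(η)` (`msum`), and `W = ⟪w_t, θ⟫`.

*Local time.* The normal component `x¹ = a + q η + w¹`, with `a = ⟪z, ν⟫`, is a skew Brownian motion.
Since `η` charges only the zeros of `x¹`, where `sin (l x¹)` vanishes, `exp (l² t / 2) cos (l x¹_t)`
is a martingale for every `l` (`SkewData.cos_mart`). Hence `|x¹|` has the law of a reflected Wiener
process, also conditionally on the past, and the occupation-time definition of `η` gives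
`E η_t = meanLT t a`, the time integral of the heat kernel (`SkewData.mean_eta`), as well as
`E (η_t - η_s | F_s) ≤ √(t - s)`. For `k ≥ 1` it follows that `E η_t ^ k ≤ k! (√t) ^ k exp (-a² / 2t)`
(`SkewData.moment_le`).

*Martingale part.* As `η` is a functional of `w`, given the path of `w` it is deterministic. An
`M_t`-measurable variable then depends on `w̃` only up to the time `η_t` (`exists_section`), so that
`M` is conditionally a martingale transform of a Wiener process at deterministic times: it is
centred, its variance is the mean of `∑ ‖β̃ θ‖² Δη` (`vsum`), and its fourth moment is at most a
constant times `η_t ^ 2` (`msum_moments`).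

*Moments from a fixed point.* It follows that `E |x(t,z) - z|⁴ ≤ C (t² + t exp (-a² / 2t))`
(`SolData.norm_fourth_moment`). In the second moment `A` is negligible and there is no cross term
of `M` with `W`; freezing `β̃` at the starting point gives
`E ⟪x(t,z) - z, θ⟫² = ‖θ‖² t + ‖β̃(z^S) θ‖² meanLT t a + o(√t exp (-a² / 4t))`
uniformly in `z` (`exists_sq_moment`).

*Integration over `z`.* In the coordinates `z = J y + b ν`, functions of `a / √t` charge a layer of
width of order `√t` around the hyperplane. Since `meanLT t a = √t meanLT 1 (a / √t)` and
`∫ meanLT 1 = 1`, after division by `t` the second term converges to the integral of `‖β̃ θ‖² φ`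
over the hyperplane (`tendsto_concentrate`), while the error terms and the fourth moment tend to `0`.
By symmetry of `β̃`, `‖β̃ θ‖² = ⟪β̃ β̃ θ, θ⟫`.
-/

open MeasureTheory ProbabilityTheory Filter
open scoped RealInnerProductSpace

noncomputable section

variable {Ω : Type} [MeasurableSpace Ω]

/-- A standard one-dimensional Wiener process on `(Ω, P)`. -/
structure IsWiener1 (P : Measure Ω) (w : ℝ → Ω → ℝ) : Prop where
  meas : ∀ t, Measurable (w t)
  start : ∀ᵐ ω ∂P, w 0 ω = 0
  cont : ∀ᵐ ω ∂P, Continuous fun t => w t ω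
  incr_indep : ∀ s t : ℝ, 0 ≤ s → s ≤ t →
    IndepFun (fun ω => w t ω - w s ω) (fun ω (u : Set.Icc (0:ℝ) s) => w u ω) P
  incr_law : ∀ s t : ℝ, 0 ≤ s → s ≤ t →
    Measure.map (fun ω => w t ω - w s ω) P = gaussianReal 0 (Real.toNNReal (t - s))

/-- A standard Wiener process with values in a Euclidean space `E`:
every projection on a unit vector of an increment is a centered Gaussian of
variance `t - s`, and increments are independent of the past. -/
structure IsWiener {E : Type} [NormedAddCommGroup E] [InnerProductSpace ℝ E]
    [MeasurableSpace E] [BorelSpace E] (P : Measure Ω) (w : ℝ → Ω → E) : Prop where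
  meas : ∀ t, Measurable (w t)
  start : ∀ᵐ ω ∂P, w 0 ω = 0
  cont : ∀ᵐ ω ∂P, Continuous fun t => w t ω
  incr_indep : ∀ s t : ℝ, 0 ≤ s → s ≤ t →
    IndepFun (fun ω => w t ω - w s ω) (fun ω (u : Set.Icc (0:ℝ) s) => w u ω) P
  incr_law : ∀ θ : E, ‖θ‖ = 1 → ∀ s t : ℝ, 0 ≤ s → s ≤ t →
    Measure.map (fun ω => ⟪w t ω - w s ω, θ⟫) P = gaussianReal 0 (Real.toNNReal (t - s))

/-- A standard Wiener process taking values in the hyperplane `S` orthogonal to `ν`. -/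
structure IsWienerIn {E : Type} [NormedAddCommGroup E] [InnerProductSpace ℝ E]
    [MeasurableSpace E] [BorelSpace E] (P : Measure Ω) (ν : E) (w : ℝ → Ω → E) : Prop where
  meas : ∀ t, Measurable (w t)
  start : ∀ᵐ ω ∂P, w 0 ω = 0
  cont : ∀ᵐ ω ∂P, Continuous fun t => w t ω
  mem : ∀ t ω, ⟪w t ω, ν⟫ = 0
  incr_indep : ∀ s t : ℝ, 0 ≤ s → s ≤ t →
    IndepFun (fun ω => w t ω - w s ω) (fun ω (u : Set.Icc (0:ℝ) s) => w u ω) P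
  incr_law : ∀ θ : E, ‖θ‖ = 1 → ⟪θ, ν⟫ = 0 → ∀ s t : ℝ, 0 ≤ s → s ≤ t →
    Measure.map (fun ω => ⟪w t ω - w s ω, θ⟫) P = gaussianReal 0 (Real.toNNReal (t - s))

/-- Two processes are independent (as path-valued random variables). -/
def IndepProc {E F : Type} [MeasurableSpace E] [MeasurableSpace F]
    (P : Measure Ω) (w : ℝ → Ω → E) (w' : ℝ → Ω → F) : Prop :=
  IndepFun (fun ω (t : ℝ) => w t ω) (fun ω (t : ℝ) => w' t ω) P

/-- The natural filtration `F^w_t = σ{w(u), 0 ≤ u ≤ t}` of a process `w`. -/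
def natFilt {E : Type} [MeasurableSpace E] (w : ℝ → Ω → E) (t : ℝ) : MeasurableSpace Ω :=
  ⨆ u ∈ Set.Icc (0:ℝ) t, MeasurableSpace.comap (w u) inferInstance

/-- The σ-algebra `F̃_t = σ{ {w̃(s) ∈ Γ} ∩ {η_t ≥ s} : s ≥ 0, Γ Borel }`. -/
def tildeFilt {E : Type} [MeasurableSpace E] (wt : ℝ → Ω → E) (η : ℝ → Ω → ℝ) (t : ℝ) :
    MeasurableSpace Ω :=
  MeasurableSpace.generateFrom
    {A | ∃ s : ℝ, 0 ≤ s ∧ ∃ Γ : Set E, MeasurableSet Γ ∧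
      A = {ω | wt s ω ∈ Γ ∧ s ≤ η t ω}}

/-- The enlarged filtration `M_t = F^w_t ∨ F̃_t`. -/
def MFilt {E F : Type} [MeasurableSpace E] [MeasurableSpace F]
    (w : ℝ → Ω → E) (wt : ℝ → Ω → F) (η : ℝ → Ω → ℝ) (t : ℝ) : MeasurableSpace Ω :=
  natFilt w t ⊔ tildeFilt wt η t

/-- `η` is a continuous nondecreasing process, adapted to the natural filtration of `w`,
starting at `0`. -/
structure NiceEta {E : Type} [MeasurableSpace E] (P : Measure Ω) (w : ℝ → Ω → E)
    (η : ℝ → Ω → ℝ) : Prop where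
  adapted : ∀ t : ℝ, 0 ≤ t → Measurable[natFilt w t] (η t)
  cont : ∀ᵐ ω ∂P, Continuous fun t => η t ω
  mono : ∀ᵐ ω ∂P, Monotone fun t => η t ω
  zero : ∀ᵐ ω ∂P, η 0 ω = 0

/-- `(x¹, η)` is a skew Brownian motion pair with parameter `q`, driven by the
one-dimensional Wiener process `w1` and started at `a`: `x¹(t) = a + q η_t + w¹(t)`
and `η` is the symmetric local time of `x¹` at `0`. -/
structure IsSkewLT (P : Measure Ω) (q : ℝ) (w1 : ℝ → Ω → ℝ) (a : ℝ)
    (x1 : ℝ → Ω → ℝ) (η : ℝ → Ω → ℝ) : Prop where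
  adapted_x : ∀ t : ℝ, 0 ≤ t → Measurable[natFilt w1 t] (x1 t)
  adapted_eta : ∀ t : ℝ, 0 ≤ t → Measurable[natFilt w1 t] (η t)
  cont : ∀ᵐ ω ∂P, Continuous fun t => η t ω
  mono : ∀ᵐ ω ∂P, Monotone fun t => η t ω
  zero : ∀ᵐ ω ∂P, η 0 ω = 0
  eqn : ∀ t : ℝ, 0 ≤ t → ∀ᵐ ω ∂P, x1 t ω = a + q * η t ω + w1 t ω
  localTime : ∀ t : ℝ, 0 ≤ t → ∀ᵐ ω ∂P,
    Tendsto (fun ε : ℝ =>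
        (1 / (2 * ε)) * ∫ τ in (0:ℝ)..t, (if |x1 τ ω| ≤ ε then (1:ℝ) else 0))
      (nhdsWithin 0 (Set.Ioi 0)) (nhds (η t ω))

/-- Orthogonal projection on the hyperplane orthogonal to the unit vector `ν`. -/
def projS {E : Type} [NormedAddCommGroup E] [InnerProductSpace ℝ E] (ν : E) (v : E) : E :=
  v - ⟪v, ν⟫ • ν

/-- `x` solves, on `[s, ∞)`, the SDE
`x(t) = ξ + ∫_s^t (qν + α(xˢ(τ))) dη_τ + ∫_s^t β̃(xˢ(τ)) dζ_τ + w(t) - w(s)`,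
the two integrals being understood as limits in probability of left Riemann sums
(Lebesgue–Stieltjes resp. Itô integrals). -/
structure SolvesFrom {E : Type} [NormedAddCommGroup E] [InnerProductSpace ℝ E]
    [MeasurableSpace E] [BorelSpace E]
    (P : Measure Ω) (Mfil : ℝ → MeasurableSpace Ω) (ν : E) (q : ℝ)
    (α : E → E) (βt : E → E →L[ℝ] E)
    (w : ℝ → Ω → E) (η : ℝ → Ω → ℝ) (ζ : ℝ → Ω → E)
    (s : ℝ) (ξ : Ω → E) (x : ℝ → Ω → E) : Prop where
  init : ∀ᵐ ω ∂P, x s ω = ξ ω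
  adapted : ∀ t : ℝ, s ≤ t → Measurable[Mfil t] (x t)
  cont : ∀ᵐ ω ∂P, ContinuousOn (fun t => x t ω) (Set.Ici s)
  eqn : ∀ t : ℝ, s ≤ t → ∃ A M : Ω → E,
    TendstoInMeasure P
      (fun n ω => ∑ k ∈ Finset.range n,
        (η (s + ((k:ℝ)+1) * (t - s) / n) ω - η (s + (k:ℝ) * (t - s) / n) ω) •
          (q • ν + α (projS ν (x (s + (k:ℝ) * (t - s) / n) ω)))) atTop A ∧
    TendstoInMeasure P
      (fun n ω => ∑ k ∈ Finset.range n,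
        (βt (projS ν (x (s + (k:ℝ) * (t - s) / n) ω)))
          (ζ (s + ((k:ℝ)+1) * (t - s) / n) ω - ζ (s + (k:ℝ) * (t - s) / n) ω)) atTop M ∧
    ∀ᵐ ω ∂P, x t ω = ξ ω + A ω + M ω + (w t ω - w s ω)

set_option linter.unusedSectionVars false

/-! ### Convergence and comparison of integrals -/

/-- A family bounded in `L²` is uniformly integrable, so convergence in probability passes to
the integrals. -/
lemma tendsto_integral_of_sq_bdd {P : Measure Ω} [IsFiniteMeasure P] {f : ℕ → Ω → ℝ} {g : Ω → ℝ}
    (hf : ∀ n, AEStronglyMeasurable (f n) P) (hlim : TendstoInMeasure P f atTop g)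
    {C : ENNReal} (hC : C ≠ ⊤) (hb : ∀ n, ∫⁻ ω, ‖f n ω‖ₑ ^ 2 ∂P ≤ C) :
    Integrable g P ∧ Tendsto (fun n => ∫ ω, f n ω ∂P) atTop (nhds (∫ ω, g ω ∂P)) := by
  have hL2 : ∀ n, eLpNorm (f n) 2 P ≤ C ^ (1/2 : ℝ) := by
    intro n
    rw [eLpNorm_eq_lintegral_rpow_enorm_toReal (by norm_num) (by norm_num)]
    simp only [ENNReal.toReal_ofNat]
    refine ENNReal.rpow_le_rpow ?_ (by norm_num)
    refine le_trans (le_of_eq ?_) (hb n)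
    refine lintegral_congr fun ω => ?_
    exact_mod_cast ENNReal.rpow_natCast _ 2
  have hC' : C ^ (1/2 : ℝ) ≠ ⊤ := ENNReal.rpow_ne_top_of_nonneg (by norm_num) hC
  have hmem : ∀ n, MemLp (f n) 2 P := fun n => ⟨hf n, (hL2 n).trans_lt hC'.lt_top⟩
  have hmem1 : ∀ n, MemLp (f n) 1 P := fun n => (hmem n).mono_exponent (by norm_num)
  obtain ⟨ns, hns, hae⟩ := hlim.exists_seq_tendsto_ae
  have hgm : AEStronglyMeasurable g P := aestronglyMeasurable_of_tendsto_ae atTop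
    (fun n => hf (ns n)) hae
  have hbound1 : ∀ n, eLpNorm (f n) 1 P ≤ C ^ (1/2 : ℝ) * P Set.univ ^ (1/2 : ℝ) := by
    intro n
    refine (eLpNorm_le_eLpNorm_mul_rpow_measure_univ (p := 1) (q := 2) (by norm_num) (hf n)).trans ?_
    have : (1 / (1:ENNReal).toReal - 1 / (2:ENNReal).toReal : ℝ) = 1/2 := by norm_num
    rw [this]
    gcongr
    exact hL2 n
  have hg1 : MemLp g 1 P := by
    refine ⟨hgm, ?_⟩
    have h1 : eLpNorm g 1 P ≤ liminf (fun n => eLpNorm (f (ns n)) 1 P) atTop :=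
      Lp.eLpNorm_lim_le_liminf_eLpNorm (fun n => hf (ns n)) g hae
    refine (h1.trans ?_).trans_lt (ENNReal.mul_lt_top hC'.lt_top
      (ENNReal.rpow_lt_top_of_nonneg (y := 1/2) (by norm_num) (measure_ne_top P Set.univ)))
    refine liminf_le_of_frequently_le' (Frequently.of_forall fun n => hbound1 (ns n))
  have hui : UnifIntegrable f 1 P := by
    intro ε hε
    set D : ℝ := (C ^ (1/2 : ℝ)).toReal + 1 with hD
    have hDpos : 0 < D := by positivity
    refine ⟨(ε / D) ^ 2, by positivity, fun n s hs hPs => ?_⟩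
    rw [eLpNorm_indicator_eq_eLpNorm_restrict hs]
    refine (eLpNorm_le_eLpNorm_mul_rpow_measure_univ (p := 1) (q := 2) (by norm_num)
      (hf n).restrict).trans ?_
    have : (1 / (1:ENNReal).toReal - 1 / (2:ENNReal).toReal : ℝ) = 1/2 := by norm_num
    rw [this, Measure.restrict_apply_univ]
    have h1 : eLpNorm (f n) 2 (P.restrict s) ≤ ENNReal.ofReal D := by
      refine (eLpNorm_mono_measure _ Measure.restrict_le_self).trans ((hL2 n).trans ?_)
      rw [← ENNReal.ofReal_toReal hC']
      exact ENNReal.ofReal_le_ofReal (by simp [hD])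
    have h2 : P s ^ (1/2:ℝ) ≤ ENNReal.ofReal (ε / D) := by
      refine (ENNReal.rpow_le_rpow hPs (by norm_num)).trans ?_
      rw [ENNReal.ofReal_rpow_of_nonneg (by positivity) (by norm_num), ← Real.sqrt_eq_rpow,
        Real.sqrt_sq (by positivity)]
    calc _ ≤ ENNReal.ofReal D * ENNReal.ofReal (ε / D) := mul_le_mul' h1 h2
      _ = ENNReal.ofReal ε := by
        rw [← ENNReal.ofReal_mul hDpos.le, mul_div_cancel₀ _ hDpos.ne']
  have hlp := tendsto_Lp_finite_of_tendstoInMeasure (p := 1) le_rfl (by norm_num) hf hg1 hui hlim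
  refine ⟨memLp_one_iff_integrable.1 hg1, ?_⟩
  refine tendsto_integral_of_L1' g hgm
    (Eventually.of_forall fun n => memLp_one_iff_integrable.1 (hmem1 n)) hlp

/-- If `∫_B f ≤ ∫_B g` for all `B` in a sub-σ-algebra `m`, the same holds with `B` replaced by
an `m`-measurable weight. -/
lemma lintegral_mul_le_of_forall_set {Ω' : Type} {m0 : MeasurableSpace Ω'}
    {P : Measure Ω'} [IsFiniteMeasure P]
    {m : MeasurableSpace Ω'} (hm : m ≤ m0)
    {f g : Ω' → ENNReal} (hf : AEMeasurable f P) (hg : AEMeasurable g P)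
    (h : ∀ B, MeasurableSet[m] B → ∫⁻ ω in B, f ω ∂P ≤ ∫⁻ ω in B, g ω ∂P)
    {H : Ω' → ENNReal} (hH : Measurable[m] H) :
    ∫⁻ ω, H ω * f ω ∂P ≤ ∫⁻ ω, H ω * g ω ∂P := by
  have key : ∀ {k : Ω' → ENNReal}, AEMeasurable k P →
      ∫⁻ ω, H ω * k ω ∂P = ∫⁻ ω, H ω ∂((P.withDensity k).trim hm) := by
    intro k hk
    rw [lintegral_trim hm hH, lintegral_withDensity_eq_lintegral_mul₀ hk (hH.mono hm le_rfl).aemeasurable]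
    simp [mul_comm]
  rw [key hf, key hg]
  refine lintegral_mono' ?_ le_rfl
  refine Measure.le_iff.2 fun B hB => ?_
  rw [trim_measurableSet_eq hm hB, trim_measurableSet_eq hm hB,
    withDensity_apply _ (hm B hB), withDensity_apply _ (hm B hB)]
  exact h B hB

/-! ### Uniform partitions -/

/-- A function continuous on `[s, t]` has small oscillation on the cells of a fine uniform
partition. -/
lemma partition_osc {f : ℝ → ℝ} {s t : ℝ} (hst : s ≤ t) (hf : ContinuousOn f (Set.Icc s t))
    {ε : ℝ} (hε : 0 < ε) :
    ∀ᶠ n : ℕ in atTop, ∀ k < n, ∀ u ∈ Set.Icc (s + (k:ℝ) * (t - s) / n)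
      (s + ((k:ℝ) + 1) * (t - s) / n), ∀ v ∈ Set.Icc (s + (k:ℝ) * (t - s) / n)
      (s + ((k:ℝ) + 1) * (t - s) / n), |f u - f v| ≤ ε := by
  have huc := isCompact_Icc.uniformContinuousOn_of_continuous hf
  rw [Metric.uniformContinuousOn_iff] at huc
  obtain ⟨δ, hδ, H⟩ := huc ε hε
  obtain ⟨N, hN⟩ := exists_nat_gt ((t - s) / δ)
  filter_upwards [eventually_ge_atTop (N + 1)] with n hn k hk u hu v hv
  have hn0 : (0:ℝ) < n := by exact_mod_cast (by omega : 0 < n)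
  have hnN : (N:ℝ) < n := by exact_mod_cast (by omega : N < n)
  have hmesh : (t - s) / n < δ := by
    rw [div_lt_iff₀ hn0]
    have := hN.trans hnN
    rw [div_lt_iff₀ hδ] at this
    linarith
  have hk' : ((k:ℝ) + 1) ≤ n := by exact_mod_cast hk
  have hts : 0 ≤ t - s := by linarith
  have e1 : s ≤ s + (k:ℝ) * (t - s) / n := by
    have : 0 ≤ (k:ℝ) * (t - s) / n := by positivity
    linarith
  have e2 : s + ((k:ℝ) + 1) * (t - s) / n ≤ t := by
    have : ((k:ℝ) + 1) * (t - s) / n ≤ t - s := by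
      rw [div_le_iff₀ hn0]; nlinarith
    linarith
  have e3 : s + ((k:ℝ) + 1) * (t - s) / n = s + (k:ℝ) * (t - s) / n + (t - s) / n := by ring
  have := H u ⟨e1.trans hu.1, hu.2.trans e2⟩ v ⟨e1.trans hv.1, hv.2.trans e2⟩ (by
    rw [Real.dist_eq, abs_lt]
    constructor <;> linarith [hu.1, hu.2, hv.1, hv.2])
  rw [Real.dist_eq] at this
  exact this.le

lemma partition_mem {s t : ℝ} (hst : s ≤ t) {n k : ℕ} (hk : k ≤ n) :
    s ≤ s + (k:ℝ) * (t - s) / n ∧ s + (k:ℝ) * (t - s) / n ≤ t := by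
  rcases Nat.eq_zero_or_pos n with rfl | hn
  · simp [hst]
  have hn0 : (0:ℝ) < n := by exact_mod_cast hn
  have hk' : (k:ℝ) ≤ n := by exact_mod_cast hk
  have hts : 0 ≤ t - s := by linarith
  constructor
  · have : 0 ≤ (k:ℝ) * (t - s) / n := by positivity
    linarith
  · have : (k:ℝ) * (t - s) / n ≤ t - s := by
      rw [div_le_iff₀ hn0]; nlinarith
    linarith

lemma partition_mono {s t : ℝ} (hst : s ≤ t) {n j k : ℕ} (hjk : j ≤ k) :
    s + (j:ℝ) * (t - s) / n ≤ s + (k:ℝ) * (t - s) / n := by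
  have hts : 0 ≤ t - s := by linarith
  have : (j:ℝ) ≤ k := by exact_mod_cast hjk
  gcongr

/-- Left Riemann sums of `∫ (m+1) h^m dh` for a continuous nondecreasing `h` starting at `0`. -/
lemma riemann_pow {h : ℝ → ℝ} {t : ℝ} (ht : 0 ≤ t) (hc : Continuous h) (hm : Monotone h)
    (h0 : h 0 = 0) (m : ℕ) :
    Tendsto (fun n : ℕ => ∑ k ∈ Finset.range n, ((m:ℝ) + 1) * h (0 + (k:ℝ) * (t - 0) / n) ^ m *
      (h (0 + ((k + 1 : ℕ):ℝ) * (t - 0) / n) - h (0 + (k:ℝ) * (t - 0) / n)))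
      atTop (nhds (h t ^ (m + 1))) := by
  have hht : 0 ≤ h t := h0 ▸ hm ht
  rw [Metric.tendsto_atTop']
  intro ε hε
  have hpos : 0 < ((m:ℝ) + 1) * h t ^ m + 1 := by positivity
  have hosc := partition_osc (s := 0) ht hc.continuousOn
    (ε := ε / 2 / (((m:ℝ) + 1) * h t ^ m + 1)) (by positivity)
  obtain ⟨N, hN⟩ := eventually_atTop.1 hosc
  refine ⟨N, fun n hn => ?_⟩
  specialize hN n hn.le
  have hn0 : (n:ℝ) ≠ 0 := by
    have : 0 < n := by omega
    exact_mod_cast this.ne'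
  set p : ℕ → ℝ := fun k => h (0 + (k:ℝ) * (t - 0) / n) with hp
  have hpn : p n = h t := by simp [hp, hn0]
  have hp0 : p 0 = 0 := by simp [hp, h0]
  have hpm : Monotone p := fun i j hij => hm (partition_mono ht hij)
  have hpnn : ∀ k, 0 ≤ p k := fun k => hp0 ▸ hpm (Nat.zero_le k)
  have htel : h t ^ (m+1) = ∑ k ∈ Finset.range n, (p (k+1) ^ (m+1) - p k ^ (m+1)) := by
    rw [Finset.sum_range_sub (fun k => p k ^ (m+1)), hpn, hp0]; simp
  have htel' : h t ^ m - p 0 ^ m = ∑ k ∈ Finset.range n, (p (k+1) ^ m - p k ^ m) := by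
    rw [Finset.sum_range_sub (fun k => p k ^ m), hpn]
  rw [dist_comm, Real.dist_eq, htel]
  change |_ - ∑ k ∈ Finset.range n, ((m:ℝ) + 1) * p k ^ m * (p (k+1) - p k)| < ε
  rw [← Finset.sum_sub_distrib]
  -- convexity of `x ^ (m + 1)` controls the one-step error from both sides
  have hstep : ∀ k ∈ Finset.range n,
      |p (k+1) ^ (m+1) - p k ^ (m+1) - ((m:ℝ) + 1) * p k ^ m * (p (k+1) - p k)| ≤
      ((m:ℝ) + 1) * (ε / 2 / (((m:ℝ) + 1) * h t ^ m + 1)) * (p (k+1) ^ m - p k ^ m) := by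
    intro k hk
    have hkn := Finset.mem_range.1 hk
    have hab : p k ≤ p (k+1) := hpm (Nat.le_succ k)
    have hd : p (k+1) - p k ≤ ε / 2 / (((m:ℝ) + 1) * h t ^ m + 1) := by
      have hx : (0 + (k:ℝ) * (t - 0) / n) ≤ 0 + ((k:ℝ)+1) * (t - 0) / n := by
        have := partition_mono (n := n) ht (Nat.le_succ k)
        push_cast at this; exact this
      have := hN k hkn (0 + ((k:ℝ)+1) * (t - 0) / n) ⟨hx, le_rfl⟩ _ ⟨le_rfl, hx⟩
      have h2 := (abs_le.1 this).2
      simp only [hp]; push_cast; linarith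
    have ha := hpnn k
    generalize p k = a at *
    generalize p (k+1) = b at *
    have hpow : a ^ m ≤ b ^ m := pow_le_pow_left₀ ha hab m
    have hid : b ^ (m+1) - a ^ (m+1) = (∑ i ∈ Finset.range (m+1), b ^ i * a ^ (m - i)) * (b - a) := by
      rw [← Commute.geom_sum₂_mul (Commute.all b a)]
      simp
    have hlow : ((m:ℝ)+1) * a ^ m ≤ ∑ i ∈ Finset.range (m+1), b ^ i * a ^ (m - i) := by
      have : ∑ i ∈ Finset.range (m+1), a ^ m ≤ ∑ i ∈ Finset.range (m+1), b ^ i * a ^ (m - i) := by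
        refine Finset.sum_le_sum fun i hi => ?_
        have : a ^ m = a ^ i * a ^ (m - i) := by
          rw [← pow_add]; congr 1; have := Finset.mem_range.1 hi; omega
        rw [this]; gcongr
      simpa using this
    have hup : ∑ i ∈ Finset.range (m+1), b ^ i * a ^ (m - i) ≤ ((m:ℝ)+1) * b ^ m := by
      have : ∑ i ∈ Finset.range (m+1), b ^ i * a ^ (m - i) ≤ ∑ i ∈ Finset.range (m+1), b ^ m := by
        refine Finset.sum_le_sum fun i hi => ?_
        have : b ^ m = b ^ i * b ^ (m - i) := by
          rw [← pow_add]; congr 1; have := Finset.mem_range.1 hi; omega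
        rw [this]
        have : 0 ≤ b := ha.trans hab
        gcongr
      simpa using this
    rw [hid]
    set S := ∑ i ∈ Finset.range (m+1), b ^ i * a ^ (m - i)
    rw [abs_of_nonneg (by nlinarith)]
    have h1 : S * (b - a) - ((m:ℝ)+1) * a ^ m * (b - a) ≤ ((m:ℝ)+1) * (b ^ m - a ^ m) * (b - a) := by
      nlinarith
    refine h1.trans ?_
    have : 0 ≤ ((m:ℝ)+1) * (b ^ m - a ^ m) := by
      have : 0 ≤ b ^ m - a ^ m := by linarith
      positivity
    nlinarith
  calc _ ≤ ∑ k ∈ Finset.range n, |p (k+1) ^ (m+1) - p k ^ (m+1)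
        - ((m:ℝ) + 1) * p k ^ m * (p (k+1) - p k)| := Finset.abs_sum_le_sum_abs _ _
    _ ≤ _ := Finset.sum_le_sum hstep
    _ = ((m:ℝ) + 1) * (ε / 2 / (((m:ℝ) + 1) * h t ^ m + 1)) * (h t ^ m - p 0 ^ m) := by
        rw [← Finset.mul_sum, htel']
    _ ≤ ((m:ℝ) + 1) * (ε / 2 / (((m:ℝ) + 1) * h t ^ m + 1)) * h t ^ m := by
        have : 0 ≤ p 0 ^ m := pow_nonneg (hpnn 0) m
        gcongr; linarith
    _ = (ε / 2) * ((((m:ℝ) + 1) * h t ^ m) / (((m:ℝ) + 1) * h t ^ m + 1)) := by ring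
    _ ≤ (ε / 2) * 1 := by
        gcongr
        rw [div_le_one hpos]; linarith
    _ < ε := by linarith

/-! ### Increments of the Wiener process -/

lemma natFilt_le {E : Type} [MeasurableSpace E] {w : ℝ → Ω → E} (hw : ∀ t, Measurable (w t)) (t : ℝ) :
    natFilt w t ≤ ‹MeasurableSpace Ω› :=
  iSup₂_le fun u _ => (hw u).comap_le

lemma natFilt_mono {E : Type} [MeasurableSpace E] (w : ℝ → Ω → E) {s t : ℝ} (h : s ≤ t) :
    natFilt w s ≤ natFilt w t :=
  biSup_mono fun _ hu => ⟨hu.1, hu.2.trans h⟩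

lemma natFilt_le_comap_past {E : Type} [MeasurableSpace E] (w : ℝ → Ω → E) (s : ℝ) :
    natFilt w s ≤ MeasurableSpace.comap (fun ω (u : Set.Icc (0:ℝ) s) => w u ω) inferInstance := by
  refine iSup₂_le fun u hu => ?_
  have : w u = (fun f : Set.Icc (0:ℝ) s → E => f ⟨u, hu⟩) ∘ (fun ω (u : Set.Icc (0:ℝ) s) => w u ω) := rfl
  rw [this, ← MeasurableSpace.comap_comp]
  exact MeasurableSpace.comap_mono (measurable_pi_apply _).comap_le

lemma natFilt_le_path {E : Type} [MeasurableSpace E] (w : ℝ → Ω → E) (s : ℝ) :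
    natFilt w s ≤ MeasurableSpace.comap (fun ω (u : ℝ) => w u ω) inferInstance := by
  refine iSup₂_le fun u _ => ?_
  have : w u = (fun f : ℝ → E => f u) ∘ (fun ω (u : ℝ) => w u ω) := rfl
  rw [this, ← MeasurableSpace.comap_comp]
  exact MeasurableSpace.comap_mono (measurable_pi_apply _).comap_le

lemma measurable_natFilt {E : Type} [MeasurableSpace E] (w : ℝ → Ω → E) {u t : ℝ} (hu : 0 ≤ u)
    (hut : u ≤ t) : Measurable[natFilt w t] (w u) := by
  have : MeasurableSpace.comap (w u) inferInstance ≤ natFilt w t :=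
    le_iSup₂_of_le (f := fun u (_ : u ∈ Set.Icc (0:ℝ) t) => MeasurableSpace.comap (w u) inferInstance)
      u ⟨hu, hut⟩ le_rfl
  exact Measurable.mono (comap_measurable (w u)) this le_rfl

/-- A centred Gaussian increment independent of `m` acts on `cos (l * ·)` as multiplication by
its characteristic function. -/
lemma cos_step {Ω' : Type} {m m0 : MeasurableSpace Ω'} {P : Measure Ω'} [IsProbabilityMeasure P]
    {D : Ω' → ℝ} {v : NNReal}
    (hm : m ≤ m0) (hD : Measurable D)
    (hlaw : Measure.map D P = gaussianReal 0 v)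
    (hind : Indep m (MeasurableSpace.comap D inferInstance) P)
    {B : Set Ω'} (hB : MeasurableSet[m] B) {Y : Ω' → ℝ} (hY : Measurable[m] Y) (l : ℝ) :
    ∫ ω in B, Real.cos (l * (Y ω + D ω)) ∂P =
      Real.exp (-(l ^ 2 * v / 2)) * ∫ ω in B, Real.cos (l * Y ω) ∂P := by
  have hYm : Measurable Y := hY.mono hm le_rfl
  set Z : Ω' → ℂ := B.indicator (fun ω => Complex.exp (((l * Y ω : ℝ) : ℂ) * Complex.I)) with hZ
  set G : Ω' → ℂ := fun ω => Complex.exp (((l * D ω : ℝ) : ℂ) * Complex.I) with hG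
  have hZm : Measurable[m] Z := by
    refine Measurable.indicator ?_ hB
    exact (by fun_prop : Measurable fun y : ℝ => Complex.exp (((l * y : ℝ) : ℂ) * Complex.I)).comp hY
  have hGm : Measurable[MeasurableSpace.comap D inferInstance] G :=
    (by fun_prop : Measurable fun y : ℝ => Complex.exp (((l * y : ℝ) : ℂ) * Complex.I)).comp
      (comap_measurable D)
  have hI : IndepFun Z G P := by
    rw [IndepFun_iff_Indep]
    exact indep_of_indep_of_le_left (indep_of_indep_of_le_right hind hGm.comap_le) hZm.comap_le
  have hprod := hI.integral_mul_eq_mul_integral (hZm.mono hm le_rfl).aestronglyMeasurable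
    (hGm.mono hD.comap_le le_rfl).aestronglyMeasurable
  have hGint : ∫ ω, G ω ∂P = Real.exp (-(l ^ 2 * v / 2)) := by
    have h1 : charFun (Measure.map D P) l = ∫ ω, G ω ∂P := by
      rw [charFun_apply_real, integral_map hD.aemeasurable (by fun_prop)]
      simp [hG]
    rw [← h1, hlaw, charFun_gaussianReal]
    push_cast
    congr 1
    simp; ring
  have hZint : ∀ T : Ω' → ℝ, Measurable T →
      (∫ ω in B, Complex.exp (((l * T ω : ℝ) : ℂ) * Complex.I) ∂P).re
        = ∫ ω in B, Real.cos (l * T ω) ∂P := by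
    intro T hT
    have := integral_re (𝕜 := ℂ) (μ := P.restrict B)
      (f := fun ω => Complex.exp (((l * T ω : ℝ) : ℂ) * Complex.I)) ?_
    · rw [← RCLike.re_eq_complex_re, ← this]
      refine integral_congr_ae (Eventually.of_forall fun ω => ?_)
      simp only [RCLike.re_eq_complex_re, Complex.exp_ofReal_mul_I_re]
    · refine Integrable.of_bound (C := 1) (by fun_prop) (Eventually.of_forall fun ω => ?_)
      rw [Complex.norm_exp_ofReal_mul_I]
  have hlhs : ∫ ω, (Z * G) ω ∂P
      = ∫ ω in B, Complex.exp (((l * (Y ω + D ω) : ℝ) : ℂ) * Complex.I) ∂P := by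
    rw [← integral_indicator (hm _ hB)]
    refine integral_congr_ae (Eventually.of_forall fun ω => ?_)
    by_cases h : ω ∈ B
    · simp only [Pi.mul_apply, hZ, hG, Set.indicator_of_mem h]
      rw [← Complex.exp_add]; congr 1; push_cast; ring
    · simp [hZ, h]
  have hZi : ∫ ω, Z ω ∂P = ∫ ω in B, Complex.exp (((l * Y ω : ℝ) : ℂ) * Complex.I) ∂P := by
    rw [hZ, integral_indicator (hm _ hB)]
  rw [hlhs, hGint, hZi] at hprod
  have := congrArg Complex.re hprod
  rw [hZint (fun ω => Y ω + D ω) (hYm.add hD), Complex.re_mul_ofReal, hZint Y hYm] at this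
  rw [this, mul_comm]

/-! ### Skew Brownian motion and its local time -/

/-- A skew Brownian motion `x = a + q η + W` together with its symmetric local time `η` at `0`,
adapted to a filtration `F` for which `W` is a Wiener process; the Wiener property is recorded
only through its action on cosines. -/
structure SkewData (P : Measure Ω) (q a : ℝ) (F : ℝ → MeasurableSpace Ω)
    (W x η : ℝ → Ω → ℝ) : Prop where
  F_le : ∀ t, F t ≤ ‹MeasurableSpace Ω›
  F_mono : ∀ s t, s ≤ t → F s ≤ F t
  measW : ∀ t, 0 ≤ t → Measurable[F t] (W t)
  measX : ∀ t, 0 ≤ t → Measurable[F t] (x t)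
  measη : ∀ t, 0 ≤ t → Measurable[F t] (η t)
  step : ∀ s t, 0 ≤ s → s ≤ t → ∀ B, MeasurableSet[F s] B → ∀ Y : Ω → ℝ, Measurable[F s] Y →
    ∀ l : ℝ, ∫ ω in B, Real.cos (l * (Y ω + (W t ω - W s ω))) ∂P =
      Real.exp (-(l ^ 2 * (t - s) / 2)) * ∫ ω in B, Real.cos (l * Y ω) ∂P
  hq : |q| ≤ 1
  contW : ∀ᵐ ω ∂P, Continuous fun t => W t ω
  contX : ∀ᵐ ω ∂P, ContinuousOn (fun t => x t ω) (Set.Ici 0)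
  contη : ∀ᵐ ω ∂P, Continuous fun t => η t ω
  monoη : ∀ᵐ ω ∂P, Monotone fun t => η t ω
  zeroη : ∀ᵐ ω ∂P, η 0 ω = 0
  eqn : ∀ t : ℝ, 0 ≤ t → ∀ᵐ ω ∂P, x t ω = a + q * η t ω + W t ω
  init : ∀ᵐ ω ∂P, x 0 ω = a
  localTime : ∀ t : ℝ, 0 ≤ t → ∀ᵐ ω ∂P,
    Tendsto (fun ε : ℝ =>
        (1 / (2 * ε)) * ∫ τ in (0:ℝ)..t, (if |x τ ω| ≤ ε then (1:ℝ) else 0))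
      (nhdsWithin 0 (Set.Ioi 0)) (nhds (η t ω))

/-- The local time at `0` is constant on an interval on which the path does not vanish. -/
lemma localTime_const {x : ℝ → ℝ} {s t y y' : ℝ} (hs : 0 ≤ s) (hst : s ≤ t)
    (hx : ContinuousOn x (Set.Ici 0)) (hne : ∀ u ∈ Set.Icc s t, x u ≠ 0)
    (h1 : Tendsto (fun ε : ℝ =>
        (1 / (2 * ε)) * ∫ τ in (0:ℝ)..s, (if |x τ| ≤ ε then (1:ℝ) else 0))
      (nhdsWithin 0 (Set.Ioi 0)) (nhds y))
    (h2 : Tendsto (fun ε : ℝ =>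
        (1 / (2 * ε)) * ∫ τ in (0:ℝ)..t, (if |x τ| ≤ ε then (1:ℝ) else 0))
      (nhdsWithin 0 (Set.Ioi 0)) (nhds y')) : y = y' := by
  obtain ⟨c, hc, hmin⟩ := isCompact_Icc.exists_isMinOn (Set.nonempty_Icc.2 hst)
    ((hx.mono fun u (hu : u ∈ Set.Icc s t) => hs.trans hu.1).abs)
  have hpos : 0 < |x c| := abs_pos.2 (hne c hc)
  refine tendsto_nhds_unique h1 (h2.congr' ?_)
  have : Set.Ioo (0:ℝ) |x c| ∈ nhdsWithin (0:ℝ) (Set.Ioi 0) := Ioo_mem_nhdsGT hpos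
  filter_upwards [this] with ε hε
  congr 1
  have hint : ∀ p r : ℝ, 0 ≤ p → 0 ≤ r → IntervalIntegrable
      (fun τ => if |x τ| ≤ ε then (1:ℝ) else 0) volume p r := by
    intro p r hp hr
    rw [intervalIntegrable_iff]
    have hsub : Set.uIoc p r ⊆ Set.Ici 0 := fun u hu => by
      rw [Set.uIoc, Set.mem_Ioc] at hu
      exact (le_min hp hr).trans hu.1.le
    have hxm : AEMeasurable x (volume.restrict (Set.uIoc p r)) :=
      (hx.mono hsub).aemeasurable measurableSet_uIoc
    have hg : Measurable fun r : ℝ => if |r| ≤ ε then (1:ℝ) else 0 :=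
      Measurable.ite (measurableSet_le measurable_norm measurable_const)
        measurable_const measurable_const
    have : IsFiniteMeasure (volume.restrict (Set.uIoc p r)) :=
      ⟨by rw [Measure.restrict_apply_univ, Set.uIoc, Real.volume_Ioc]; exact ENNReal.ofReal_lt_top⟩
    exact Integrable.of_bound (C := 1) (hg.comp_aemeasurable hxm).aestronglyMeasurable
      (Eventually.of_forall fun τ => by split_ifs <;> simp)
  rw [← intervalIntegral.integral_add_adjacent_intervals (hint 0 s le_rfl hs)
    (hint s t hs (hs.trans hst))]
  rw [intervalIntegral.integral_zero_ae (a := s) (b := t), add_zero]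
  refine Eventually.of_forall fun τ hτ => ?_
  rw [Set.uIoc_of_le hst] at hτ
  have : |x c| ≤ |x τ| := hmin ⟨hτ.1.le, hτ.2⟩
  rw [if_neg (by linarith [hε.2])]

lemma abs_cos_sub_cos_le (p r : ℝ) : |Real.cos p - Real.cos r| ≤ |p - r| * (|p| + |r|) / 2 := by
  rw [Real.cos_sub_cos, abs_mul, abs_mul, abs_neg]
  have h1 : |Real.sin ((p + r) / 2)| ≤ |(p + r)/2| := Real.abs_sin_le_abs
  have h2 : |Real.sin ((p - r) / 2)| ≤ |(p - r)/2| := Real.abs_sin_le_abs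
  have h3 : |(p+r)/2| ≤ (|p| + |r|)/2 := by
    rw [abs_div, abs_two]; linarith [abs_add_le p r]
  have h4 : |(p-r)/2| = |p-r|/2 := by rw [abs_div, abs_two]
  rw [h4] at h2
  rw [abs_two]
  have := mul_le_mul (h1.trans h3) h2 (abs_nonneg _) (by positivity)
  nlinarith

lemma abs_cos_sub_cos_le' (p r : ℝ) : |Real.cos p - Real.cos r| ≤ |p - r| := by
  rw [Real.cos_sub_cos, abs_mul, abs_mul, abs_neg, abs_two]
  have h1 : |Real.sin ((p + r) / 2)| ≤ 1 := Real.abs_sin_le_one _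
  have h2 : |Real.sin ((p - r) / 2)| ≤ |(p - r)/2| := Real.abs_sin_le_abs
  have h4 : |(p-r)/2| = |p-r|/2 := by rw [abs_div, abs_two]
  rw [h4] at h2
  have := mul_le_mul h1 h2 (abs_nonneg _) (by positivity)
  nlinarith

/-- The `k`-th point of the uniform partition of `[s, t]` into `n` cells. -/
def pt (s t : ℝ) (n k : ℕ) : ℝ := s + (k:ℝ) * (t - s) / n

lemma pt_zero (s t : ℝ) (n : ℕ) : pt s t n 0 = s := by simp [pt]

lemma pt_self (s t : ℝ) {n : ℕ} (hn : n ≠ 0) : pt s t n n = t := by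
  have : (n:ℝ) ≠ 0 := by exact_mod_cast hn
  rw [pt]; field_simp; ring

lemma pt_succ (s t : ℝ) (n k : ℕ) : pt s t n (k+1) = s + ((k:ℝ)+1) * (t - s) / n := by
  simp [pt]

lemma pt_mono {s t : ℝ} (hst : s ≤ t) (n : ℕ) {j k : ℕ} (h : j ≤ k) : pt s t n j ≤ pt s t n k := by
  have := partition_mono hst (n := n) h
  simpa [pt] using this

lemma pt_mem {s t : ℝ} (hst : s ≤ t) {n k : ℕ} (hk : k ≤ n) : pt s t n k ∈ Set.Icc s t :=
  partition_mem hst hk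

/-- Pathwise, the Euler errors of `cos (l * x)` caused by the (truncated) local-time drift add up
to something negligible: the local time grows only on cells where the path is close to `0`, and
there the derivative of `cos` is small. -/
lemma path_cos_error {x η W : ℝ → ℝ} {q a s t N : ℝ} (l : ℝ) (hs : 0 ≤ s) (hst : s ≤ t) (hq : |q| ≤ 1)
    (hη0 : 0 ≤ η s) (hN : 0 ≤ N)
    (cW : Continuous W) (cη : Continuous η) (mη : Monotone η) (cX : ContinuousOn x (Set.Ici 0))
    (heq : ∀ n k, k ≤ n → x (pt s t n k) = a + q * η (pt s t n k) + W (pt s t n k))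
    (hLT : ∀ n k, k ≤ n → Tendsto (fun ε : ℝ =>
        (1 / (2 * ε)) * ∫ τ in (0:ℝ)..(pt s t n k), (if |x τ| ≤ ε then (1:ℝ) else 0))
      (nhdsWithin 0 (Set.Ioi 0)) (nhds (η (pt s t n k)))) :
    (∀ n, ∑ k ∈ Finset.range n, |Real.cos (l * (a + q * min (η (pt s t n (k+1))) N + W (pt s t n (k+1))))
      - Real.cos (l * (a + q * min (η (pt s t n k)) N + W (pt s t n k)
          + (W (pt s t n (k+1)) - W (pt s t n k))))| ≤ |l| * N) ∧
    Tendsto (fun n : ℕ => ∑ k ∈ Finset.range n,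
      |Real.cos (l * (a + q * min (η (pt s t n (k+1))) N + W (pt s t n (k+1))))
      - Real.cos (l * (a + q * min (η (pt s t n k)) N + W (pt s t n k)
          + (W (pt s t n (k+1)) - W (pt s t n k))))|) atTop (nhds 0) := by
  set e : ℕ → ℕ → ℝ := fun n k => min (η (pt s t n k)) N with he
  have hemono : ∀ n j k, j ≤ k → e n j ≤ e n k := fun n j k h =>
    min_le_min_right _ (mη (pt_mono hst n h))
  have hesum : ∀ n, ∑ k ∈ Finset.range n, (e n (k+1) - e n k) ≤ N := by
    intro n
    rw [Finset.sum_range_sub]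
    have h1 : e n n ≤ N := min_le_right _ _
    have h2 : 0 ≤ e n 0 := by simp only [he, pt_zero]; exact le_min hη0 hN
    linarith
  have hR1 : ∀ n k, |Real.cos (l * (a + q * e n (k+1) + W (pt s t n (k+1))))
      - Real.cos (l * (a + q * e n k + W (pt s t n k) + (W (pt s t n (k+1)) - W (pt s t n k))))|
      ≤ |l| * (e n (k+1) - e n k) := by
    intro n k
    refine (abs_cos_sub_cos_le' _ _).trans ?_
    have : l * (a + q * e n (k+1) + W (pt s t n (k+1))) -
        l * (a + q * e n k + W (pt s t n k) + (W (pt s t n (k+1)) - W (pt s t n k)))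
        = l * (q * (e n (k+1) - e n k)) := by ring
    rw [this, abs_mul, abs_mul, abs_of_nonneg (sub_nonneg.2 (hemono n k (k+1) k.le_succ))]
    refine mul_le_mul_of_nonneg_left ?_ (abs_nonneg _)
    exact mul_le_of_le_one_left (sub_nonneg.2 (hemono n k (k+1) k.le_succ)) hq
  refine ⟨fun n => ?_, ?_⟩
  · refine (Finset.sum_le_sum fun k _ => hR1 n k).trans ?_
    rw [← Finset.mul_sum]
    exact mul_le_mul_of_nonneg_left (hesum n) (abs_nonneg _)
  rw [Metric.tendsto_atTop]
  intro δ hδ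
  obtain ⟨ε, hε, hεδ⟩ : ∃ ε > 0, 5/2 * l^2 * ε * N < δ := by
    refine ⟨δ / (5/2 * l^2 * N + 1), by positivity, ?_⟩
    have h5 : 0 ≤ 5/2 * l^2 * N := by positivity
    rw [show 5/2 * l^2 * (δ / (5/2 * l^2 * N + 1)) * N = δ * ((5/2 * l^2 * N) / (5/2 * l^2 * N + 1)) by ring]
    have : (5/2 * l^2 * N) / (5/2 * l^2 * N + 1) < 1 := by rw [div_lt_one (by linarith)]; linarith
    nlinarith
  have o1 := partition_osc hst (cX.mono fun u (hu : u ∈ Set.Icc s t) => hs.trans hu.1) hε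
  have o2 := partition_osc hst cη.continuousOn hε
  have o3 := partition_osc hst cW.continuousOn hε
  obtain ⟨n0, hn0⟩ := eventually_atTop.1 (o1.and (o2.and o3))
  refine ⟨n0, fun n hn => ?_⟩
  obtain ⟨p1, p2, p3⟩ := hn0 n hn
  rw [Real.dist_eq, sub_zero, abs_of_nonneg (Finset.sum_nonneg fun k _ => abs_nonneg _)]
  refine lt_of_le_of_lt ?_ hεδ
  have hR2 : ∀ k ∈ Finset.range n, |Real.cos (l * (a + q * e n (k+1) + W (pt s t n (k+1))))
      - Real.cos (l * (a + q * e n k + W (pt s t n k) + (W (pt s t n (k+1)) - W (pt s t n k))))|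
      ≤ 5/2 * l^2 * ε * (e n (k+1) - e n k) := by
    intro k hk
    have hkn := Finset.mem_range.1 hk
    have hle : pt s t n k ≤ pt s t n (k+1) := pt_mono hst n k.le_succ
    have mL : pt s t n k ∈ Set.Icc (s+(k:ℝ)*(t-s)/n) (s+((k:ℝ)+1)*(t-s)/n) := by
      rw [← pt_succ]; exact ⟨le_rfl, hle⟩
    have mR : pt s t n (k+1) ∈ Set.Icc (s+(k:ℝ)*(t-s)/n) (s+((k:ℝ)+1)*(t-s)/n) := by
      rw [← pt_succ]; exact ⟨hle, le_rfl⟩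
    rcases eq_or_ne (e n (k+1)) (e n k) with h | h
    · have := hR1 n k
      rw [h, sub_self, mul_zero] at this ⊢; exact this
    have hηne : η (pt s t n k) ≠ η (pt s t n (k+1)) := fun h' => h (by simp only [he, h'])
    have hηN : η (pt s t n k) < N := by
      by_contra hcon
      push Not at hcon
      exact h (by simp only [he]; rw [min_eq_right hcon, min_eq_right (hcon.trans (mη hle))])
    obtain ⟨u, hu, hxu⟩ : ∃ u ∈ Set.Icc (pt s t n k) (pt s t n (k+1)), x u = 0 := by
      by_contra hcon
      push Not at hcon
      exact hηne (localTime_const (hs.trans (pt_mem hst hkn.le).1) hle cX hcon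
        (hLT n k hkn.le) (hLT n (k+1) hkn))
    have mu : u ∈ Set.Icc (s+(k:ℝ)*(t-s)/n) (s+((k:ℝ)+1)*(t-s)/n) := by rw [← pt_succ]; exact hu
    have b1 : |x (pt s t n k)| ≤ ε := by
      have := p1 k hkn _ mL _ mu
      rwa [hxu, sub_zero] at this
    have b2 : |η (pt s t n (k+1)) - η (pt s t n k)| ≤ ε := p2 k hkn _ mR _ mL
    have b3 : |W (pt s t n (k+1)) - W (pt s t n k)| ≤ ε := p3 k hkn _ mR _ mL
    have hxk : a + q * e n k + W (pt s t n k) = x (pt s t n k) := by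
      rw [heq n k hkn.le]; simp only [he, min_eq_left hηN.le]
    have hΔ0 : 0 ≤ e n (k+1) - e n k := sub_nonneg.2 (hemono n k (k+1) k.le_succ)
    have hΔ : e n (k+1) - e n k ≤ ε := by
      have h1 : e n (k+1) ≤ η (pt s t n (k+1)) := min_le_left _ _
      have h2 : e n k = η (pt s t n k) := min_eq_left hηN.le
      have := (abs_le.1 b2).2
      linarith
    have hqΔ : |q * (e n (k+1) - e n k)| ≤ e n (k+1) - e n k := by
      rw [abs_mul, abs_of_nonneg hΔ0]; exact mul_le_of_le_one_left hΔ0 hq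
    refine (abs_cos_sub_cos_le _ _).trans ?_
    set r := x (pt s t n k) + (W (pt s t n (k+1)) - W (pt s t n k)) with hr
    have hr' : |r| ≤ 2 * ε := (abs_add_le _ _).trans (by linarith)
    have e1 : a + q * e n (k+1) + W (pt s t n (k+1)) = r + q * (e n (k+1) - e n k) := by
      rw [hr, ← hxk]; ring
    rw [hxk, e1]
    have e2 : |r + q * (e n (k+1) - e n k)| ≤ 3 * ε := (abs_add_le _ _).trans (by linarith)
    rw [← mul_sub, abs_mul, abs_mul, abs_mul]
    have e3 : |r + q * (e n (k+1) - e n k) - r| ≤ e n (k+1) - e n k := by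
      rw [add_sub_cancel_left]; exact hqΔ
    calc |l| * |r + q * (e n (k+1) - e n k) - r| * (|l| * |r + q * (e n (k+1) - e n k)| + |l| * |r|) / 2
        ≤ |l| * (e n (k+1) - e n k) * (|l| * (3*ε) + |l| * (2*ε)) / 2 := by gcongr
      _ = 5/2 * |l|^2 * ε * (e n (k+1) - e n k) := by ring
      _ = _ := by rw [sq_abs]
  refine (Finset.sum_le_sum hR2).trans ?_
  rw [← Finset.mul_sum]
  exact mul_le_mul_of_nonneg_left (hesum n) (by positivity)

section
variable {P : Measure Ω} [IsProbabilityMeasure P] {q a : ℝ} {F : ℝ → MeasurableSpace Ω}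
  {W x η : ℝ → Ω → ℝ}

lemma SkewData.mX (S : SkewData P q a F W x η) {t : ℝ} (ht : 0 ≤ t) : Measurable (x t) :=
  (S.measX t ht).mono (S.F_le t) le_rfl

lemma SkewData.mη (S : SkewData P q a F W x η) {t : ℝ} (ht : 0 ≤ t) : Measurable (η t) :=
  (S.measη t ht).mono (S.F_le t) le_rfl

lemma SkewData.mW (S : SkewData P q a F W x η) {t : ℝ} (ht : 0 ≤ t) : Measurable (W t) :=
  (S.measW t ht).mono (S.F_le t) le_rfl

lemma SkewData.η_nonneg (S : SkewData P q a F W x η) : ∀ᵐ ω ∂P, ∀ t, 0 ≤ t → 0 ≤ η t ω := by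
  filter_upwards [S.monoη, S.zeroη] with ω h1 h2 t ht
  rw [← h2]; exact h1 ht

/-- The cosine identity for the path whose local time is stopped at level `N`; the truncation makes
the Euler errors bounded. -/
lemma SkewData.cos_mart_trunc (S : SkewData P q a F W x η) {s t : ℝ} (hs : 0 ≤ s) (hst : s ≤ t)
    {B : Set Ω} (hB : MeasurableSet[F s] B) (l : ℝ) {N : ℝ} (hN : 0 ≤ N) :
    ∫ ω in B, Real.cos (l * (a + q * min (η t ω) N + W t ω)) ∂P =
      Real.exp (-(l ^ 2 * (t - s) / 2)) *
        ∫ ω in B, Real.cos (l * (a + q * min (η s ω) N + W s ω)) ∂P := by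
  set xN : ℝ → Ω → ℝ := fun u ω => a + q * min (η u ω) N + W u ω with hxN
  have hxNm : ∀ u, 0 ≤ u → Measurable[F u] (xN u) := by
    intro u hu
    have h1 := S.measη u hu
    have h2 := S.measW u hu
    exact (by fun_prop : Measurable fun p : ℝ × ℝ => a + q * min p.1 N + p.2).comp (h1.prodMk h2)
  have hp0 : ∀ n k, k ≤ n → 0 ≤ pt s t n k := fun n k h => hs.trans (pt_mem hst h).1
  set R : ℕ → ℕ → Ω → ℝ := fun n k ω => |Real.cos (l * xN (pt s t n (k+1)) ω)
      - Real.cos (l * (xN (pt s t n k) ω + (W (pt s t n (k+1)) ω - W (pt s t n k) ω)))| with hR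
  have hRm : ∀ n k, k < n → Measurable (R n k) := by
    intro n k hk
    have h1 := (hxNm _ (hp0 n k hk.le)).mono (S.F_le _) le_rfl
    have h2 := (hxNm _ (hp0 n (k+1) hk)).mono (S.F_le _) le_rfl
    have h3 := S.mW (hp0 n k hk.le)
    have h4 := S.mW (hp0 n (k+1) hk)
    simp only [hR]
    fun_prop
  have cosint : ∀ (μ : Measure Ω) [IsFiniteMeasure μ] (f : Ω → ℝ), Measurable f →
      Integrable (fun ω => Real.cos (f ω)) μ := by
    intro μ _ f hf
    refine Integrable.of_bound (C := 1) (by fun_prop) (Eventually.of_forall fun ω => ?_)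
    exact Real.abs_cos_le_one _
  have hkey : ∀ n : ℕ, n ≠ 0 → |(∫ ω in B, Real.cos (l * xN t ω) ∂P)
      - Real.exp (-(l ^ 2 * (t - s) / 2)) * ∫ ω in B, Real.cos (l * xN s ω) ∂P|
      ≤ ∫ ω in B, ∑ k ∈ Finset.range n, R n k ω ∂P := by
    intro n hn
    set A : ℕ → ℝ := fun k => Real.exp (-(l ^ 2 * (t - pt s t n k) / 2)) *
      ∫ ω in B, Real.cos (l * xN (pt s t n k) ω) ∂P with hA
    have hAn : A n = ∫ ω in B, Real.cos (l * xN t ω) ∂P := by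
      simp [hA, pt_self s t hn]
    have hA0 : A 0 = Real.exp (-(l ^ 2 * (t - s) / 2)) * ∫ ω in B, Real.cos (l * xN s ω) ∂P := by
      simp [hA, pt_zero]
    rw [← hAn, ← hA0, ← Finset.sum_range_sub, integral_finsetSum]
    · refine (Finset.abs_sum_le_sum_abs _ _).trans (Finset.sum_le_sum fun k hk => ?_)
      have hk' := Finset.mem_range.1 hk
      have hle : pt s t n k ≤ pt s t n (k+1) := pt_mono hst n k.le_succ
      have hst' := S.step (pt s t n k) (pt s t n (k+1)) (hp0 n k hk'.le) hle B
        (S.F_mono _ _ (pt_mem hst hk'.le).1 B hB) (xN (pt s t n k)) (hxNm _ (hp0 n k hk'.le)) l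
      have hsplit : A k = Real.exp (-(l ^ 2 * (t - pt s t n (k+1)) / 2)) *
          ∫ ω in B, Real.cos (l * (xN (pt s t n k) ω +
            (W (pt s t n (k+1)) ω - W (pt s t n k) ω))) ∂P := by
        rw [hst', ← mul_assoc, ← Real.exp_add]
        simp only [hA]; congr 2; ring
      have h1 := (hxNm _ (hp0 n k hk'.le)).mono (S.F_le _) le_rfl
      have h2 := (hxNm _ (hp0 n (k+1) hk')).mono (S.F_le _) le_rfl
      have h3 := S.mW (hp0 n k hk'.le)
      have h4 := S.mW (hp0 n (k+1) hk')
      rw [hsplit, hA, ← mul_sub, ← integral_sub (cosint _ _ (by fun_prop)) (cosint _ _ (by fun_prop)),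
        abs_mul, abs_of_pos (Real.exp_pos _)]
      refine (mul_le_of_le_one_left (abs_nonneg _) ?_).trans (abs_integral_le_integral_abs)
      rw [Real.exp_le_one_iff]
      have : 0 ≤ t - pt s t n (k+1) := sub_nonneg.2 (pt_mem hst hk').2
      have := mul_nonneg (sq_nonneg l) this
      linarith
    · intro k hk
      refine Integrable.of_bound (C := 2) (hRm n k (Finset.mem_range.1 hk)).aestronglyMeasurable
        (Eventually.of_forall fun ω => ?_)
      simp only [hR, Real.norm_eq_abs, abs_abs]
      refine (abs_sub _ _).trans ?_
      linarith [Real.abs_cos_le_one (l * xN (pt s t n (k+1)) ω), Real.abs_cos_le_one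
        (l * (xN (pt s t n k) ω + (W (pt s t n (k+1)) ω - W (pt s t n k) ω)))]
  have hpath : ∀ᵐ ω ∂P, (∀ n, ∑ k ∈ Finset.range n, R n k ω ≤ |l| * N) ∧
      Tendsto (fun n => ∑ k ∈ Finset.range n, R n k ω) atTop (nhds 0) := by
    have e1 : ∀ᵐ ω ∂P, ∀ n k, k ≤ n → x (pt s t n k) ω = a + q * η (pt s t n k) ω + W (pt s t n k) ω := by
      rw [ae_all_iff]; intro n; rw [ae_all_iff]; intro k
      by_cases h : k ≤ n
      · filter_upwards [S.eqn _ (hp0 n k h)] with ω hω _ using hω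
      · exact Eventually.of_forall fun ω h' => absurd h' h
    have e2 : ∀ᵐ ω ∂P, ∀ n k, k ≤ n → Tendsto (fun ε : ℝ =>
        (1 / (2 * ε)) * ∫ τ in (0:ℝ)..(pt s t n k), (if |x τ ω| ≤ ε then (1:ℝ) else 0))
      (nhdsWithin 0 (Set.Ioi 0)) (nhds (η (pt s t n k) ω)) := by
      rw [ae_all_iff]; intro n; rw [ae_all_iff]; intro k
      by_cases h : k ≤ n
      · filter_upwards [S.localTime _ (hp0 n k h)] with ω hω _ using hω
      · exact Eventually.of_forall fun ω h' => absurd h' h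
    filter_upwards [e1, e2, S.contW, S.contX, S.contη, S.monoη, S.η_nonneg] with ω h1 h2 h3 h4 h5 h6 h7
    exact path_cos_error (x := fun u => x u ω) (η := fun u => η u ω) (W := fun u => W u ω)
      l hs hst S.hq (h7 s hs) hN h3 h5 h6 h4 h1 h2
  have hlim : Tendsto (fun n => ∫ ω in B, ∑ k ∈ Finset.range n, R n k ω ∂P) atTop (nhds 0) := by
    have := tendsto_integral_of_dominated_convergence (μ := P.restrict B)
      (F := fun n ω => ∑ k ∈ Finset.range n, R n k ω) (f := fun _ => 0) (fun _ => |l| * N)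
      (fun n => (Finset.measurable_fun_sum _ fun k hk =>
        hRm n k (Finset.mem_range.1 hk)).aestronglyMeasurable) (integrable_const _)
      (fun n => by
        filter_upwards [ae_restrict_of_ae hpath] with ω hω
        rw [Real.norm_of_nonneg (Finset.sum_nonneg fun k _ => abs_nonneg _)]
        exact hω.1 n)
      (by filter_upwards [ae_restrict_of_ae hpath] with ω hω using hω.2)
    simpa using this
  have : |(∫ ω in B, Real.cos (l * xN t ω) ∂P)
      - Real.exp (-(l ^ 2 * (t - s) / 2)) * ∫ ω in B, Real.cos (l * xN s ω) ∂P| ≤ 0 :=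
    ge_of_tendsto hlim (eventually_atTop.2 ⟨1, fun n hn => hkey n (by omega)⟩)
  exact sub_eq_zero.1 (abs_nonpos_iff.1 this)

/-- `exp (l² t / 2) cos (l x_t)` is a martingale: the local time charges only the zeros of `x`,
where `sin (l x)` vanishes. -/
lemma SkewData.cos_mart (S : SkewData P q a F W x η) {s t : ℝ} (hs : 0 ≤ s) (hst : s ≤ t)
    {B : Set Ω} (hB : MeasurableSet[F s] B) (l : ℝ) :
    ∫ ω in B, Real.cos (l * x t ω) ∂P =
      Real.exp (-(l ^ 2 * (t - s) / 2)) * ∫ ω in B, Real.cos (l * x s ω) ∂P := by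
  have key : ∀ u, 0 ≤ u → Tendsto (fun N : ℕ =>
      ∫ ω in B, Real.cos (l * (a + q * min (η u ω) (N:ℝ) + W u ω)) ∂P) atTop
      (nhds (∫ ω in B, Real.cos (l * x u ω) ∂P)) := by
    intro u hu
    have h1 := S.mη hu
    have h2 := S.mW hu
    refine tendsto_integral_of_dominated_convergence (fun _ => 1)
      (fun n => by fun_prop) (integrable_const _)
      (fun n => Eventually.of_forall fun ω => Real.abs_cos_le_one _) ?_
    filter_upwards [ae_restrict_of_ae (S.eqn u hu)] with ω hω
    refine tendsto_const_nhds.congr' ?_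
    filter_upwards [eventually_ge_atTop ⌈η u ω⌉₊] with N hN
    rw [hω, min_eq_left ((Nat.le_ceil _).trans (by exact_mod_cast hN))]
  refine tendsto_nhds_unique (key t (hs.trans hst)) ?_
  refine ((key s hs).const_mul _).congr fun N => ?_
  exact (S.cos_mart_trunc hs hst hB l N.cast_nonneg).symm

end

lemma gauss_Icc_le (m : ℝ) {v : NNReal} (hv : v ≠ 0) {ε : ℝ} :
    gaussianReal m v (Set.Icc (-ε) ε) ≤ ENNReal.ofReal (2 * ε / √(2 * Real.pi * v)) := by
  rw [gaussianReal_apply m hv]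
  calc ∫⁻ y in Set.Icc (-ε) ε, gaussianPDF m v y
      ≤ ∫⁻ y in Set.Icc (-ε) ε, ENNReal.ofReal (√(2 * Real.pi * v))⁻¹ := by
        refine lintegral_mono fun y => ENNReal.ofReal_le_ofReal ?_
        rw [gaussianPDFReal_def]
        refine mul_le_of_le_one_right (by positivity) (Real.exp_le_one_iff.2 ?_)
        rw [neg_div]; exact neg_nonpos.2 (by positivity)
    _ = _ := by
        rw [setLIntegral_const, Real.volume_Icc, ← ENNReal.ofReal_mul (by positivity)]
        congr 1; ring

lemma gauss_Icc_tendsto (m : ℝ) {v : NNReal} (hv : v ≠ 0) :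
    Tendsto (fun ε : ℝ => (1 / (2 * ε)) * (gaussianReal m v).real (Set.Icc (-ε) ε))
      (nhdsWithin 0 (Set.Ioi 0)) (nhds (gaussianPDFReal m v 0)) := by
  have hc : Continuous (gaussianPDFReal m v) := by
    rw [gaussianPDFReal_def]; fun_prop
  rw [Metric.tendsto_nhdsWithin_nhds]
  intro δ hδ
  obtain ⟨r, hr, hr'⟩ := Metric.continuous_iff.1 hc 0 (δ/2) (by positivity)
  refine ⟨r, hr, fun ε hε hεr => ?_⟩
  have hε0 : 0 < ε := hε
  rw [Real.dist_eq, sub_zero, abs_of_pos hε0] at hεr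
  have hint : (gaussianReal m v).real (Set.Icc (-ε) ε) = ∫ y in Set.Icc (-ε) ε, gaussianPDFReal m v y := by
    rw [Measure.real, gaussianReal_apply_eq_integral m hv, ENNReal.toReal_ofReal]
    exact integral_nonneg fun y => gaussianPDFReal_nonneg _ _ _
  have hdiff : |(∫ y in Set.Icc (-ε) ε, gaussianPDFReal m v y) - 2 * ε * gaussianPDFReal m v 0| ≤ δ/2 * (2*ε) := by
    have h2 : 2 * ε * gaussianPDFReal m v 0 = ∫ y in Set.Icc (-ε) ε, gaussianPDFReal m v 0 := by
      rw [setIntegral_const, Measure.real, Real.volume_Icc, ENNReal.toReal_ofReal (by linarith), smul_eq_mul]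
      ring
    rw [h2, ← integral_sub hc.integrableOn_Icc continuous_const.integrableOn_Icc, ← Real.norm_eq_abs]
    have := norm_setIntegral_le_of_norm_le_const (μ := volume) (s := Set.Icc (-ε) ε) (C := δ/2)
      (f := fun y => gaussianPDFReal m v y - gaussianPDFReal m v 0) (by simp) (fun y hy => by
        refine (hr' y ?_).le
        rw [Real.dist_eq, sub_zero]
        exact lt_of_le_of_lt (abs_le.2 hy) hεr)
    refine this.trans (le_of_eq ?_)
    rw [Measure.real, Real.volume_Icc, ENNReal.toReal_ofReal (by linarith)]; ring
  rw [hint, Real.dist_eq]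
  have : 1 / (2 * ε) * (∫ y in Set.Icc (-ε) ε, gaussianPDFReal m v y) - gaussianPDFReal m v 0
      = 1 / (2 * ε) * ((∫ y in Set.Icc (-ε) ε, gaussianPDFReal m v y) - 2 * ε * gaussianPDFReal m v 0) := by
    field_simp
  rw [this, abs_mul, abs_of_pos (by positivity)]
  calc _ ≤ 1 / (2*ε) * (δ/2 * (2*ε)) := by gcongr
    _ = δ/2 := by field_simp
    _ < δ := by linarith

section
variable {P : Measure Ω} [IsProbabilityMeasure P] {q a : ℝ} {F : ℝ → MeasurableSpace Ω}
  {W x η : ℝ → Ω → ℝ}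

/-- The law of `y` under `P` restricted to `B`, symmetrized; its mass is `2 P(B)`. -/
def symLaw (P : Measure Ω) (B : Set Ω) (y : Ω → ℝ) : Measure ℝ :=
  (P.restrict B).map y + (P.restrict B).map (fun ω => -y ω)

lemma symLaw_charFun (B : Set Ω) {y : Ω → ℝ} (hy : Measurable y) (l : ℝ) :
    charFun (symLaw P B y) l = ((2 * ∫ ω in B, Real.cos (l * y ω) ∂P : ℝ) : ℂ) := by
  have h1 : Integrable (fun r : ℝ => Complex.exp (l * r * Complex.I)) ((P.restrict B).map y) := by
    refine Integrable.of_bound (C := 1) (by fun_prop) (Eventually.of_forall fun r => ?_)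
    rw [← Complex.ofReal_mul, Complex.norm_exp_ofReal_mul_I]
  have h2 : Integrable (fun r : ℝ => Complex.exp (l * r * Complex.I))
      ((P.restrict B).map (fun ω => -y ω)) := by
    refine Integrable.of_bound (C := 1) (by fun_prop) (Eventually.of_forall fun r => ?_)
    rw [← Complex.ofReal_mul, Complex.norm_exp_ofReal_mul_I]
  have h3 : ∀ (g : Ω → ℝ), Measurable g →
      Integrable (fun ω => Complex.exp (l * g ω * Complex.I)) (P.restrict B) := by
    intro g hg
    refine Integrable.of_bound (C := 1) (by fun_prop) (Eventually.of_forall fun r => ?_)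
    rw [← Complex.ofReal_mul, Complex.norm_exp_ofReal_mul_I]
  rw [charFun_apply_real, symLaw, integral_add_measure h1 h2, integral_map (by fun_prop) (by fun_prop),
    integral_map (by fun_prop) (by fun_prop), ← integral_add (h3 y hy) (h3 (fun ω => -y ω) hy.fun_neg)]
  rw [← integral_const_mul, ← integral_complex_ofReal]
  refine integral_congr_ae (Eventually.of_forall fun ω => ?_)
  simp only
  push_cast
  rw [Complex.cos]
  ring_nf

lemma symLaw_Icc (B : Set Ω) {y : Ω → ℝ} (hy : Measurable y) (ε : ℝ) :
    symLaw P B y (Set.Icc (-ε) ε) = 2 * P ({ω | |y ω| ≤ ε} ∩ B) := by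
  have hm : MeasurableSet {ω | |y ω| ≤ ε} := measurableSet_le hy.abs measurable_const
  rw [symLaw, Measure.add_apply, Measure.map_apply hy measurableSet_Icc,
    Measure.map_apply hy.fun_neg measurableSet_Icc]
  have e1 : y ⁻¹' Set.Icc (-ε) ε = {ω | |y ω| ≤ ε} := by ext ω; simp [abs_le]
  have e2 : (fun ω => -y ω) ⁻¹' Set.Icc (-ε) ε = {ω | |y ω| ≤ ε} := by
    ext ω; simp only [Set.mem_preimage, Set.mem_Icc, Set.mem_ofPred_eq, abs_le]
    constructor <;> rintro ⟨h1, h2⟩ <;> constructor <;> linarith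
  rw [e1, e2, Measure.restrict_apply hm, two_mul]

instance (B : Set Ω) (y : Ω → ℝ) : IsFiniteMeasure (symLaw P B y) := by
  unfold symLaw; infer_instance

lemma symLaw_univ (B : Set Ω) {y : Ω → ℝ} (hy : Measurable y) :
    symLaw P B y Set.univ = 2 * P B := by
  rw [symLaw, Measure.add_apply, Measure.map_apply hy .univ, Measure.map_apply hy.fun_neg .univ]
  simp [two_mul]

/-- Conditionally on the past, `|x|` is distributed as a reflected Wiener process, so that its law
has a density bounded by that of a centred Gaussian. -/
lemma SkewData.small_ball (S : SkewData P q a F W x η) {s t : ℝ} (hs : 0 ≤ s) (hst : s < t)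
    {B : Set Ω} (hB : MeasurableSet[F s] B) {ε : ℝ} :
    P ({ω | |x t ω| ≤ ε} ∩ B) ≤ ENNReal.ofReal (2 * ε / √(2 * Real.pi * (t - s))) * P B := by
  have hv : (t - s).toNNReal ≠ 0 := by simpa using hst
  have hvc : (((t - s).toNNReal : NNReal) : ℝ) = t - s := Real.coe_toNNReal _ (by linarith)
  have hconv : symLaw P B (x t) = (symLaw P B (x s)).conv (gaussianReal 0 (t - s).toNNReal) := by
    refine Measure.ext_of_charFun (funext fun l => ?_)
    rw [charFun_conv, symLaw_charFun B (S.mX (hs.trans hst.le)), symLaw_charFun B (S.mX hs),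
      S.cos_mart hs hst.le hB l, charFun_gaussianReal, hvc]
    push_cast
    rw [show ((l:ℂ) * 0 * Complex.I - ((t:ℂ) - s) * (l:ℂ)^2 / 2) = -((l:ℂ)^2 * (t - s)/2) by ring]
    ring
  have h1 : symLaw P B (x t) (Set.Icc (-ε) ε) ≤
      ENNReal.ofReal (2 * ε / √(2 * Real.pi * (t - s))) * (2 * P B) := by
    rw [hconv, ← lintegral_indicator_one measurableSet_Icc,
      Measure.lintegral_conv (measurable_one.indicator measurableSet_Icc)]
    rw [← symLaw_univ B (S.mX hs), ← lintegral_const]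
    refine lintegral_mono fun y => ?_
    have : ∀ z, (Set.Icc (-ε) ε).indicator (1 : ℝ → ENNReal) (y + z) =
        ((fun z => y + z) ⁻¹' (Set.Icc (-ε) ε)).indicator 1 z := fun z => rfl
    simp_rw [this]
    rw [lintegral_indicator_one (measurableSet_Icc.preimage (by fun_prop)),
      ← Measure.map_apply (by fun_prop) measurableSet_Icc, gaussianReal_map_const_add]
    nth_rw 2 [← hvc]
    simpa only [zero_add] using gauss_Icc_le (0 + y) hv (ε := ε)
  rw [symLaw_Icc B (S.mX (hs.trans hst.le)), mul_left_comm] at h1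
  exact (ENNReal.mul_le_mul_iff_right (by simp) (by simp)).1 h1

/-- Since `cos (l x_t)` has the same mean as for a Wiener process started at `a`, so has any even
function of `x_t`. -/
lemma SkewData.small_ball_exact (S : SkewData P q a F W x η) {t : ℝ} (ht : 0 < t) {ε : ℝ} :
    P {ω | |x t ω| ≤ ε} = gaussianReal a t.toNNReal (Set.Icc (-ε) ε) := by
  have hvc : ((t.toNNReal : NNReal) : ℝ) = t := Real.coe_toNNReal _ ht.le
  have hlaw : symLaw P Set.univ (x t) = gaussianReal a t.toNNReal + gaussianReal (-a) t.toNNReal := by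
    refine Measure.ext_of_charFun (funext fun l => ?_)
    have h1 := S.cos_mart (B := Set.univ) le_rfl ht.le MeasurableSet.univ l
    have h2 : ∫ ω in Set.univ, Real.cos (l * x 0 ω) ∂P = Real.cos (l * a) := by
      rw [Measure.restrict_univ, integral_congr_ae (g := fun _ => Real.cos (l * a))]
      · simp
      · filter_upwards [S.init] with ω hω
        rw [hω]
    have hadd : charFun (gaussianReal a t.toNNReal + gaussianReal (-a) t.toNNReal) l =
        charFun (gaussianReal a t.toNNReal) l + charFun (gaussianReal (-a) t.toNNReal) l := by
      simp only [charFun_apply_real]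
      have hI : ∀ m : ℝ, Integrable (fun r : ℝ => Complex.exp (l * r * Complex.I))
          (gaussianReal m t.toNNReal) := by
        intro m
        refine Integrable.of_bound (C := 1) (by fun_prop) (Eventually.of_forall fun r => ?_)
        rw [← Complex.ofReal_mul, Complex.norm_exp_ofReal_mul_I]
      rw [integral_add_measure (hI _) (hI _)]
    rw [symLaw_charFun _ (S.mX ht.le), h1, h2, hadd, charFun_gaussianReal, charFun_gaussianReal, hvc]
    push_cast
    rw [Complex.cos, show ((l:ℂ) * a * Complex.I - t * (l:ℂ)^2/2) = l * a * Complex.I + -((l:ℂ)^2 * (t-0)/2) by ring,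
      show ((l:ℂ) * -a * Complex.I - t * (l:ℂ)^2/2) = -(l * a) * Complex.I + -((l:ℂ)^2 * (t-0)/2) by ring,
      Complex.exp_add, Complex.exp_add]
    ring
  have h1 := symLaw_Icc (P := P) Set.univ (S.mX ht.le) ε
  have hneg : gaussianReal (-a) t.toNNReal (Set.Icc (-ε) ε) = gaussianReal a t.toNNReal (Set.Icc (-ε) ε) := by
    rw [← gaussianReal_map_neg, Measure.map_apply (by fun_prop) measurableSet_Icc]
    congr 1
    ext y; simp only [Set.mem_preimage, Set.mem_Icc]
    constructor <;> rintro ⟨h1, h2⟩ <;> constructor <;> linarith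
  rw [hlaw, Measure.add_apply, hneg, ← two_mul, Set.inter_univ] at h1
  exact ((ENNReal.mul_right_inj (by simp) (by simp)).1 h1).symm

end

lemma lintegral_rsqrt_le {s t : ℝ} (hst : s ≤ t) :
    ∫⁻ τ in Set.Ioc s t, ENNReal.ofReal (1 / √(2 * Real.pi * (τ - s))) ≤ ENNReal.ofReal √(t - s) := by
  have hint : IntervalIntegrable (fun τ : ℝ => (τ - s) ^ (-(1/2) : ℝ)) volume s t := by
    have := (intervalIntegral.intervalIntegrable_rpow' (a := 0) (b := t - s) (r := -(1/2))
      (by norm_num)).comp_sub_right s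
    simpa using this
  have hval : ∫ τ in s..t, (τ - s) ^ (-(1/2) : ℝ) = 2 * √(t - s) := by
    rw [intervalIntegral.integral_comp_sub_right (fun u : ℝ => u ^ (-(1/2) : ℝ)) s, sub_self,
      integral_rpow (Or.inl (by norm_num)), Real.sqrt_eq_rpow]
    norm_num
    ring
  calc ∫⁻ τ in Set.Ioc s t, ENNReal.ofReal (1 / √(2 * Real.pi * (τ - s)))
      ≤ ∫⁻ τ in Set.Ioc s t, ENNReal.ofReal (1 / 2 * (τ - s) ^ (-(1/2) : ℝ)) := by
        refine setLIntegral_mono' measurableSet_Ioc fun τ hτ => ENNReal.ofReal_le_ofReal ?_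
        have hp : 0 < τ - s := sub_pos.2 hτ.1
        rw [Real.rpow_neg hp.le, ← Real.sqrt_eq_rpow, Real.sqrt_mul (by positivity), one_div, mul_inv]
        have h2 : 2 ≤ √(2 * Real.pi) := by
          rw [Real.le_sqrt (by norm_num) (by positivity)]; nlinarith [Real.pi_gt_three]
        have : (√(2 * Real.pi))⁻¹ ≤ 1/2 := by
          rw [one_div]; exact inv_anti₀ (by norm_num) h2
        gcongr
    _ = ENNReal.ofReal (∫ τ in Set.Ioc s t, 1 / 2 * (τ - s) ^ (-(1/2) : ℝ)) := by
        rw [ofReal_integral_eq_lintegral_ofReal]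
        · exact (intervalIntegrable_iff_integrableOn_Ioc_of_le hst).1 (hint.const_mul _)
        · filter_upwards [ae_restrict_mem measurableSet_Ioc] with τ hτ
          have hp : 0 < τ - s := sub_pos.2 hτ.1
          simp only [Pi.zero_apply]; positivity
    _ = _ := by
        rw [← intervalIntegral.integral_of_le hst, intervalIntegral.integral_const_mul, hval]
        congr 1; ring

section
variable {P : Measure Ω} [IsProbabilityMeasure P] {q a : ℝ} {F : ℝ → MeasurableSpace Ω}
  {W x η : ℝ → Ω → ℝ}

lemma SkewData.exists_version (S : SkewData P q a F W x η) :
    ∃ x' : ℝ → Ω → ℝ, Measurable (Function.uncurry x') ∧ ∀ᵐ ω ∂P, ∀ τ, 0 ≤ τ → x' τ ω = x τ ω := by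
  set G : Set Ω := {ω | ContinuousOn (fun t => x t ω) (Set.Ici 0)} with hGdef
  have hGsub : ∀ ω ∈ G, ContinuousOn (fun t => x t ω) (Set.Ici 0) := fun ω h => h
  have hGm : P Gᶜ = 0 := S.contX
  set G' := (toMeasurable P Gᶜ)ᶜ with hG'
  have hG'm : MeasurableSet G' := (measurableSet_toMeasurable _ _).compl
  have hG'sub : G' ⊆ G := by
    rw [hG', Set.compl_subset_comm]; exact subset_toMeasurable _ _
  have hG'ae : ∀ᵐ ω ∂P, ω ∈ G' := by
    rw [ae_iff]
    have : {ω | ω ∉ G'} = toMeasurable P Gᶜ := by ext; simp [hG']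
    rw [this, measure_toMeasurable]
    exact hGm
  refine ⟨fun τ ω => G'.indicator (x (max τ 0)) ω, ?_, ?_⟩
  · refine measurable_uncurry_of_continuous_of_measurable (u := fun τ ω => G'.indicator (x (max τ 0)) ω)
      (fun ω => ?_) (fun τ => ?_)
    · by_cases h : ω ∈ G'
      · simp only [Set.indicator_of_mem h]
        exact (hGsub ω (hG'sub h)).comp_continuous (by fun_prop) (fun τ => Set.mem_Ici.2 (le_max_right _ _))
      · simp only [Set.indicator_of_notMem h]; exact continuous_const
    · exact (S.mX (le_max_right _ _)).indicator hG'm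
  · filter_upwards [hG'ae] with ω hω τ hτ
    simp only [Set.indicator_of_mem hω, max_eq_left hτ]

/-- The occupation-time approximation of the local time on `(s, t]`, for a path `y`. -/
def occ (y : ℝ → ℝ) (ε s t : ℝ) : ENNReal :=
  ENNReal.ofReal (1 / (2 * ε)) * ∫⁻ τ in Set.Ioc s t, {r : ℝ | |r| ≤ ε}.indicator 1 (y τ)

lemma measurableSet_absle (ε : ℝ) : MeasurableSet {r : ℝ | |r| ≤ ε} :=
  measurableSet_le measurable_norm measurable_const

lemma occ_add (y : ℝ → ℝ) (ε : ℝ) {s t : ℝ} (hs : 0 ≤ s) (hst : s ≤ t) :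
    occ y ε 0 s + occ y ε s t = occ y ε 0 t := by
  rw [occ, occ, occ, ← mul_add, ← lintegral_union measurableSet_Ioc (Set.Ioc_disjoint_Ioc_of_le le_rfl),
    Set.Ioc_union_Ioc_eq_Ioc hs hst]

lemma occ_ne_top (y : ℝ → ℝ) (ε s t : ℝ) : occ y ε s t ≠ ⊤ := by
  refine ENNReal.mul_ne_top ENNReal.ofReal_ne_top (ne_of_lt ?_)
  refine lt_of_le_of_lt (lintegral_mono (g := fun _ => 1) fun τ => Set.indicator_le_self' (by simp) _) ?_
  simp

lemma ofReal_occ {y : ℝ → ℝ} (hy : Measurable y) {ε t : ℝ} (hε : 0 < ε) (ht : 0 ≤ t) :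
    ENNReal.ofReal ((1 / (2 * ε)) * ∫ τ in (0:ℝ)..t, (if |y τ| ≤ ε then (1:ℝ) else 0)) = occ y ε 0 t := by
  rw [occ, ENNReal.ofReal_mul (by positivity), intervalIntegral.integral_of_le ht]
  congr 1
  have hm : Measurable fun τ => if |y τ| ≤ ε then (1:ℝ) else 0 :=
    Measurable.ite (hy (measurableSet_absle ε)) measurable_const measurable_const
  rw [ofReal_integral_eq_lintegral_ofReal]
  · refine lintegral_congr fun τ => ?_
    by_cases h : |y τ| ≤ ε <;> simp [h]
  · exact Integrable.of_bound (C := 1) hm.aestronglyMeasurable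
      (Eventually.of_forall fun τ => by split_ifs <;> simp)
  · exact Eventually.of_forall fun τ => by simp only [Pi.zero_apply]; split_ifs <;> simp

lemma SkewData.occ_tendsto (S : SkewData P q a F W x η) {x' : ℝ → Ω → ℝ}
    (hx' : Measurable (Function.uncurry x')) (hxx : ∀ᵐ ω ∂P, ∀ τ, 0 ≤ τ → x' τ ω = x τ ω)
    {s t : ℝ} (hs : 0 ≤ s) (hst : s ≤ t) :
    ∀ᵐ ω ∂P, Tendsto (fun ε => occ (fun τ => x' τ ω) ε s t) (nhdsWithin 0 (Set.Ioi 0))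
      (nhds (ENNReal.ofReal (η t ω - η s ω))) := by
  have h0 : ∀ u, 0 ≤ u → ∀ᵐ ω ∂P, Tendsto (fun ε => occ (fun τ => x' τ ω) ε 0 u)
      (nhdsWithin 0 (Set.Ioi 0)) (nhds (ENNReal.ofReal (η u ω))) := by
    intro u hu
    filter_upwards [S.localTime u hu, hxx] with ω h1 h2
    refine (ENNReal.tendsto_ofReal h1).congr' ?_
    filter_upwards [self_mem_nhdsWithin] with ε hε
    rw [← ofReal_occ (y := fun τ => x' τ ω) (hx'.comp (measurable_id.prodMk measurable_const)) hε hu]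
    congr 2
    rw [intervalIntegral.integral_of_le hu, intervalIntegral.integral_of_le hu]
    refine setIntegral_congr_fun measurableSet_Ioc fun τ hτ => ?_
    rw [h2 τ hτ.1.le]
  filter_upwards [h0 s hs, h0 t (hs.trans hst), S.η_nonneg] with ω h1 h2 h3
  rw [ENNReal.ofReal_sub _ (h3 s hs)]
  refine (ENNReal.Tendsto.sub h2 h1 (Or.inl ENNReal.ofReal_ne_top)).congr fun ε => ?_
  rw [← occ_add _ ε hs hst, ENNReal.add_sub_cancel_left (occ_ne_top _ _ _ _)]

lemma lintegral_occ {x' : ℝ → Ω → ℝ} (hx' : Measurable (Function.uncurry x')) (B : Set Ω) (ε s t : ℝ) :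
    ∫⁻ ω in B, occ (fun τ => x' τ ω) ε s t ∂P =
      ENNReal.ofReal (1 / (2 * ε)) * ∫⁻ τ in Set.Ioc s t, P ({ω | |x' τ ω| ≤ ε} ∩ B) := by
  unfold occ
  have hm : Measurable (fun p : Ω × ℝ => {r : ℝ | |r| ≤ ε}.indicator (1 : ℝ → ENNReal) (x' p.2 p.1)) :=
    (measurable_one.indicator (measurableSet_absle ε)).comp (hx'.comp measurable_swap)
  rw [lintegral_const_mul _ hm.lintegral_prod_right', lintegral_lintegral_swap hm.aemeasurable]
  congr 1
  refine lintegral_congr fun τ => ?_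
  have h1 : MeasurableSet {ω | |x' τ ω| ≤ ε} :=
    (hx'.comp (measurable_const.prodMk measurable_id) : Measurable fun ω => x' τ ω) (measurableSet_absle ε)
  rw [← Measure.restrict_apply h1, ← lintegral_indicator_one h1]
  rfl

/-- Conditionally on the past, the local time gained on `[s, t]` has mean at most `√(t - s)`. -/
lemma SkewData.incr_bound (S : SkewData P q a F W x η) {s t : ℝ} (hs : 0 ≤ s) (hst : s ≤ t)
    {B : Set Ω} (hB : MeasurableSet[F s] B) :
    ∫⁻ ω in B, ENNReal.ofReal (η t ω - η s ω) ∂P ≤ ENNReal.ofReal √(t - s) * P B := by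
  obtain ⟨x', hx', hxx⟩ := S.exists_version
  have hlim := S.occ_tendsto hx' hxx hs hst
  have hε : Tendsto (fun n : ℕ => 1 / ((n:ℝ) + 1)) atTop (nhdsWithin 0 (Set.Ioi 0)) :=
    tendsto_nhdsWithin_iff.2 ⟨tendsto_one_div_add_atTop_nhds_zero_nat,
      Eventually.of_forall fun n => by simp only [Set.mem_Ioi]; positivity⟩
  have hmocc : ∀ ε, Measurable fun ω => occ (fun τ => x' τ ω) ε s t := by
    intro ε
    have hm : Measurable (fun p : Ω × ℝ => {r : ℝ | |r| ≤ ε}.indicator (1 : ℝ → ENNReal) (x' p.2 p.1)) :=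
      (measurable_one.indicator (measurableSet_absle ε)).comp (hx'.comp measurable_swap)
    exact hm.lintegral_prod_right'.const_mul _
  calc ∫⁻ ω in B, ENNReal.ofReal (η t ω - η s ω) ∂P
      = ∫⁻ ω in B, liminf (fun n : ℕ => occ (fun τ => x' τ ω) (1 / ((n:ℝ) + 1)) s t) atTop ∂P := by
        refine lintegral_congr_ae ?_
        filter_upwards [ae_restrict_of_ae hlim] with ω hω
        exact ((hω.comp hε).liminf_eq).symm
    _ ≤ liminf (fun n : ℕ => ∫⁻ ω in B, occ (fun τ => x' τ ω) (1 / ((n:ℝ) + 1)) s t ∂P) atTop :=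
        lintegral_liminf_le fun n => hmocc _
    _ ≤ ENNReal.ofReal √(t - s) * P B := by
        refine liminf_le_of_le (by isBoundedDefault) fun b hb => ?_
        obtain ⟨n, hn⟩ := hb.exists
        refine hn.trans ?_
        rw [lintegral_occ hx']
        set ε : ℝ := 1 / ((n:ℝ) + 1) with hεdef
        have hε0 : 0 < ε := by positivity
        calc ENNReal.ofReal (1 / (2 * ε)) * ∫⁻ τ in Set.Ioc s t, P ({ω | |x' τ ω| ≤ ε} ∩ B)
            ≤ ENNReal.ofReal (1 / (2 * ε)) * ∫⁻ τ in Set.Ioc s t,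
                ENNReal.ofReal (2 * ε) * (ENNReal.ofReal (1 / √(2 * Real.pi * (τ - s))) * P B) := by
              refine mul_le_mul_right (setLIntegral_mono' measurableSet_Ioc fun τ hτ => ?_) _
              have e : P ({ω | |x' τ ω| ≤ ε} ∩ B) = P ({ω | |x τ ω| ≤ ε} ∩ B) := by
                refine measure_congr ?_
                filter_upwards [hxx] with ω hω
                have := hω τ (hs.trans hτ.1.le)
                refine propext (and_congr ?_ Iff.rfl)
                change |x' τ ω| ≤ ε ↔ |x τ ω| ≤ ε
                rw [this]
              rw [e, ← mul_assoc, ← ENNReal.ofReal_mul (by positivity), mul_one_div]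
              exact S.small_ball hs hτ.1 hB
          _ = ENNReal.ofReal (1 / (2 * ε)) * ENNReal.ofReal (2 * ε) *
                ((∫⁻ τ in Set.Ioc s t, ENNReal.ofReal (1 / √(2 * Real.pi * (τ - s)))) * P B) := by
              rw [lintegral_const_mul' _ _ ENNReal.ofReal_ne_top,
                lintegral_mul_const' _ _ (measure_ne_top _ _), mul_assoc]
          _ ≤ 1 * (ENNReal.ofReal √(t - s) * P B) := by
              refine mul_le_mul' (le_of_eq ?_) (mul_le_mul_left (lintegral_rsqrt_le hst) _)
              rw [← ENNReal.ofReal_mul (by positivity), one_div_mul_cancel (by positivity), ENNReal.ofReal_one]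
          _ = _ := one_mul _

end

lemma abel_sum (g e : ℕ → ℝ) (m : ℕ) :
    ∑ j ∈ Finset.range m, g j * (e (j+1) - e j) =
      ∑ j ∈ Finset.range m, (g j - if j = 0 then 0 else g (j-1)) * (e m - e j) := by
  have htel : ∀ m, ∑ j ∈ Finset.range (m+1), (g j - if j = 0 then 0 else g (j-1)) = g m := by
    intro m
    induction m with
    | zero => simp
    | succ m ih => rw [Finset.sum_range_succ, ih]; simp
  induction m with
  | zero => simp
  | succ m ih =>
    have h2 : ∑ j ∈ Finset.range (m+1), (g j - if j = 0 then 0 else g (j-1)) * (e (m+1) - e j)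
        = ∑ j ∈ Finset.range (m+1), (g j - if j = 0 then 0 else g (j-1)) * (e m - e j)
          + ∑ j ∈ Finset.range (m+1), (g j - if j = 0 then 0 else g (j-1)) * (e (m+1) - e m) := by
      rw [← Finset.sum_add_distrib]
      refine Finset.sum_congr rfl fun j _ => by ring
    rw [Finset.sum_range_succ, ih, h2, ← Finset.sum_mul, htel]
    congr 1
    rw [Finset.sum_range_succ, sub_self (e m), mul_zero, add_zero]

/-- The square of an integral as twice the integral over ordered pairs. -/
lemma lintegral_sq_le (μ : Measure ℝ) [SFinite μ] {f : ℝ → ENNReal} (hf : Measurable f) :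
    (∫⁻ τ, f τ ∂μ) ^ 2 ≤
      2 * ∫⁻ p, {p : ℝ × ℝ | p.1 ≤ p.2}.indicator (fun p => f p.1 * f p.2) p ∂(μ.prod μ) := by
  have hm : Measurable fun p : ℝ × ℝ => f p.1 * f p.2 := by fun_prop
  have hA : MeasurableSet {p : ℝ × ℝ | p.1 ≤ p.2} := measurableSet_le measurable_fst measurable_snd
  have hsw : ∫⁻ p, {p : ℝ × ℝ | p.2 ≤ p.1}.indicator (fun p => f p.1 * f p.2) p ∂(μ.prod μ)
      = ∫⁻ p, {p : ℝ × ℝ | p.1 ≤ p.2}.indicator (fun p => f p.1 * f p.2) p ∂(μ.prod μ) := by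
    rw [← lintegral_prod_swap]
    refine lintegral_congr fun p => ?_
    simp only [Set.indicator, Set.mem_ofPred_eq, Prod.fst_swap, Prod.snd_swap, mul_comm]
  rw [sq, ← lintegral_prod_mul hf.aemeasurable hf.aemeasurable, two_mul]
  nth_rw 1 [← hsw]
  rw [← lintegral_add_right _ (hm.indicator hA)]
  refine lintegral_mono fun p => ?_
  rcases le_total p.1 p.2 with h | h
  · simp [Set.indicator, h]
  · simp [Set.indicator, h]

section
variable {P : Measure Ω} [IsProbabilityMeasure P] {q a : ℝ} {F : ℝ → MeasurableSpace Ω}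
  {W x η : ℝ → Ω → ℝ}

/-- Each moment of the local time is controlled by the preceding one: `η_t ^ (k+1)` equals `k + 1`
times the integral of `η ^ k` against `η`; after a summation by parts the increments of `η ^ k` are
weighted with the local time still to come, whose conditional mean is at most `√t`. -/
lemma SkewData.moment (S : SkewData P q a F W x η) {t : ℝ} (ht : 0 ≤ t) (k : ℕ) :
    ∫⁻ ω, ENNReal.ofReal (η t ω ^ (k+1)) ∂P ≤
      ENNReal.ofReal (((k:ℝ)+1) * √t) * ∫⁻ ω, ENNReal.ofReal (η t ω ^ k) ∂P := by
  set g : ℕ → ℕ → Ω → ℝ := fun n j ω => η (pt 0 t n j) ω ^ k with hg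
  set f : ℕ → Ω → ℝ := fun n ω => ∑ j ∈ Finset.range n,
    ((k:ℝ)+1) * η (pt 0 t n j) ω ^ k * (η (pt 0 t n (j+1)) ω - η (pt 0 t n j) ω) with hf
  set D : ℕ → ℕ → Ω → ℝ := fun n j ω => g n j ω - if j = 0 then 0 else g n (j-1) ω with hD
  have hp : ∀ n j, j ≤ n → 0 ≤ pt 0 t n j := fun n j h => (pt_mem ht h).1
  have hgm : ∀ n j, j ≤ n → Measurable[F (pt 0 t n j)] (g n j) := fun n j h =>
    (by fun_prop : Measurable fun r : ℝ => r ^ k).comp (S.measη _ (hp n j h))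
  have hDm : ∀ n j, j ≤ n → Measurable[F (pt 0 t n j)] (D n j) := by
    intro n j h
    simp only [hD]
    split_ifs with hj
    · simpa using hgm n j h
    · have h1 := (hgm n (j-1) (by omega)).mono (S.F_mono _ _ (pt_mono ht n (by omega : j - 1 ≤ j))) le_rfl
      exact (by fun_prop : Measurable fun p : ℝ × ℝ => p.1 - p.2).comp ((hgm n j h).prodMk h1)
  have hgood : ∀ᵐ ω ∂P, (Monotone fun u => η u ω) ∧ ∀ u, 0 ≤ u → 0 ≤ η u ω := by
    filter_upwards [S.monoη, S.η_nonneg] with ω h1 h2 using ⟨h1, h2⟩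
  have hD0 : ∀ᵐ ω ∂P, ∀ n j, j ≤ n → 0 ≤ D n j ω := by
    filter_upwards [hgood] with ω ⟨h1, h2⟩ n j hj
    simp only [hD]
    split_ifs with h
    · simp only [hg, sub_zero]; exact pow_nonneg (h2 _ (hp n j hj)) k
    · simp only [hg, sub_nonneg]
      exact pow_le_pow_left₀ (h2 _ (hp n (j-1) (by omega))) (h1 (pt_mono ht n (by omega))) k
  have hfm : ∀ n, AEMeasurable (fun ω => ENNReal.ofReal (f n ω)) P := by
    intro n
    refine (Measurable.ennreal_ofReal (Finset.measurable_fun_sum _ fun j hj => ?_)).aemeasurable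
    have h1 := S.mη (hp n j (Finset.mem_range.1 hj).le)
    have h2 := S.mη (hp n (j+1) (Finset.mem_range.1 hj))
    fun_prop
  have hbound : ∀ n, ∫⁻ ω, ENNReal.ofReal (f n ω) ∂P ≤
      ENNReal.ofReal (((k:ℝ)+1) * √t) * ∫⁻ ω, ENNReal.ofReal (η t ω ^ k) ∂P := by
    intro n
    rcases Nat.eq_zero_or_pos n with rfl | hn
    · simp [hf]
    have e1 : ∀ᵐ ω ∂P, ENNReal.ofReal (f n ω) = ENNReal.ofReal ((k:ℝ)+1) *
        ∑ j ∈ Finset.range n, ENNReal.ofReal (D n j ω) * ENNReal.ofReal (η t ω - η (pt 0 t n j) ω) := by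
      filter_upwards [hD0, hgood] with ω h1 ⟨h2, h3⟩
      have hfa : f n ω = ((k:ℝ)+1) * ∑ j ∈ Finset.range n, D n j ω * (η t ω - η (pt 0 t n j) ω) := by
        have := abel_sum (fun j => g n j ω) (fun j => η (pt 0 t n j) ω) n
        rw [pt_self 0 t (by omega)] at this
        simp only [hf, hD, ← this, Finset.mul_sum]
        exact Finset.sum_congr rfl fun j _ => by simp only [hg]; ring
      have hnn : ∀ j ∈ Finset.range n, 0 ≤ η t ω - η (pt 0 t n j) ω := fun j hj =>
        sub_nonneg.2 (h2 (pt_mem ht (Finset.mem_range.1 hj).le).2)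
      rw [hfa, ENNReal.ofReal_mul (by positivity), ENNReal.ofReal_sum_of_nonneg fun j hj =>
        mul_nonneg (h1 n j (Finset.mem_range.1 hj).le) (hnn j hj)]
      congr 1
      exact Finset.sum_congr rfl fun j hj => ENNReal.ofReal_mul (h1 n j (Finset.mem_range.1 hj).le)
    have hDm' : ∀ j ∈ Finset.range n, Measurable (D n j) := fun j hj =>
      (hDm n j (Finset.mem_range.1 hj).le).mono (S.F_le _) le_rfl
    rw [lintegral_congr_ae e1, lintegral_const_mul' _ _ ENNReal.ofReal_ne_top,
      lintegral_finsetSum' _ (fun j hj => by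
        have h1 := S.mη (hp n j (Finset.mem_range.1 hj).le)
        have h2 := S.mη ht
        have h3 := hDm' j hj
        fun_prop), ENNReal.ofReal_mul (by positivity), mul_assoc]
    refine mul_le_mul_right ?_ _
    calc ∑ j ∈ Finset.range n, ∫⁻ ω, ENNReal.ofReal (D n j ω) * ENNReal.ofReal (η t ω - η (pt 0 t n j) ω) ∂P
        ≤ ∑ j ∈ Finset.range n, ∫⁻ ω, ENNReal.ofReal (D n j ω) * ENNReal.ofReal √t ∂P := by
          refine Finset.sum_le_sum fun j hj => ?_
          have hj' := (Finset.mem_range.1 hj).le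
          have h1 := S.mη (hp n j hj')
          have h2 := S.mη ht
          refine lintegral_mul_le_of_forall_set (S.F_le (pt 0 t n j)) (by fun_prop) (by fun_prop)
            (fun B hB => ?_) (hDm n j hj').ennreal_ofReal
          refine (S.incr_bound (hp n j hj') (pt_mem ht hj').2 hB).trans ?_
          rw [setLIntegral_const]
          refine mul_le_mul_left (ENNReal.ofReal_le_ofReal (Real.sqrt_le_sqrt ?_)) _
          linarith [hp n j hj']
      _ = ENNReal.ofReal √t * ∫⁻ ω, ENNReal.ofReal (∑ j ∈ Finset.range n, D n j ω) ∂P := by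
          simp_rw [lintegral_mul_const' _ _ ENNReal.ofReal_ne_top]
          rw [← Finset.sum_mul, mul_comm, ← lintegral_finsetSum _ (fun j hj => (hDm' j hj).ennreal_ofReal)]
          congr 1
          refine lintegral_congr_ae ?_
          filter_upwards [hD0] with ω h1
          rw [ENNReal.ofReal_sum_of_nonneg fun j hj => h1 n j (Finset.mem_range.1 hj).le]
      _ ≤ _ := by
          refine mul_le_mul_right (lintegral_mono_ae ?_) _
          filter_upwards [hgood] with ω ⟨h2, h3⟩
          refine ENNReal.ofReal_le_ofReal ?_
          obtain ⟨m, rfl⟩ : ∃ m, n = m + 1 := ⟨n - 1, by omega⟩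
          have htel : ∀ m', ∑ j ∈ Finset.range (m'+1), D (m+1) j ω = g (m+1) m' ω := by
            intro m'
            induction m' with
            | zero => simp [hD]
            | succ i ih => rw [Finset.sum_range_succ, ih]; simp [hD]
          rw [htel]
          exact pow_le_pow_left₀ (h3 _ (hp _ m (by omega))) (h2 (pt_mem ht (by omega)).2) k
  calc ∫⁻ ω, ENNReal.ofReal (η t ω ^ (k+1)) ∂P
      = ∫⁻ ω, liminf (fun n => ENNReal.ofReal (f n ω)) atTop ∂P := by
        refine lintegral_congr_ae ?_
        filter_upwards [S.contη, S.monoη, S.zeroη] with ω h1 h2 h3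
        have := riemann_pow ht h1 h2 h3 k
        exact ((ENNReal.tendsto_ofReal this).liminf_eq).symm
    _ ≤ liminf (fun n => ∫⁻ ω, ENNReal.ofReal (f n ω) ∂P) atTop := lintegral_liminf_le' hfm
    _ ≤ _ := by
        refine liminf_le_of_le (by isBoundedDefault) fun b hb => ?_
        obtain ⟨n, hn⟩ := hb.exists
        exact hn.trans (hbound n)

end

/-- The mean local time at `0`, up to time `t`, of a Wiener process started at `a`. -/
def meanLT (t a : ℝ) : ℝ := ∫ τ in (0:ℝ)..t, (√(2 * Real.pi * τ))⁻¹ * Real.exp (-(a ^ 2 / (2 * τ)))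

lemma integrableOn_meanLT {t : ℝ} (a : ℝ) :
    IntegrableOn (fun τ : ℝ => (√(2 * Real.pi * τ))⁻¹ * Real.exp (-(a ^ 2 / (2 * τ)))) (Set.Ioc 0 t) := by
  rcases lt_or_ge t 0 with ht | ht
  · simp [Set.Ioc_eq_empty (not_lt.2 ht.le)]
  have h1 : IntegrableOn (fun τ : ℝ => 1 / √(2 * Real.pi * (τ - 0))) (Set.Ioc 0 t) := by
    refine ⟨(by fun_prop : Measurable fun τ : ℝ => 1 / √(2 * Real.pi * (τ - 0))).aestronglyMeasurable, ?_⟩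
    refine lt_of_le_of_lt (le_of_eq ?_) ((lintegral_rsqrt_le ht).trans_lt ENNReal.ofReal_lt_top)
    refine lintegral_congr fun τ => ?_
    rw [Real.enorm_of_nonneg (by positivity)]
  refine Integrable.mono' h1 (by fun_prop) (Eventually.of_forall fun τ => ?_)
  by_cases hτ : 0 ≤ τ
  · rw [Real.norm_of_nonneg (by positivity), sub_zero, one_div]
    refine mul_le_of_le_one_right (by positivity) (Real.exp_le_one_iff.2 ?_)
    exact neg_nonpos.2 (by positivity)
  · rw [Real.sqrt_eq_zero_of_nonpos (by nlinarith [Real.pi_pos])]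
    simp

section
variable {P : Measure Ω} [IsProbabilityMeasure P] {q a : ℝ} {F : ℝ → MeasurableSpace Ω}
  {W x η : ℝ → Ω → ℝ}

lemma measurable_occ {x' : ℝ → Ω → ℝ} (hx' : Measurable (Function.uncurry x')) (ε s t : ℝ) :
    Measurable fun ω => occ (fun τ => x' τ ω) ε s t := by
  have hm : Measurable (fun p : Ω × ℝ => {r : ℝ | |r| ≤ ε}.indicator (1 : ℝ → ENNReal) (x' p.2 p.1)) :=
    (measurable_one.indicator (measurableSet_absle ε)).comp (hx'.comp measurable_swap)
  exact hm.lintegral_prod_right'.const_mul _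

/-- The occupation times are bounded in `L²` uniformly in `ε`. -/
lemma SkewData.occ_sq_le (S : SkewData P q a F W x η) {x' : ℝ → Ω → ℝ}
    (hx' : Measurable (Function.uncurry x')) (hxx : ∀ᵐ ω ∂P, ∀ τ, 0 ≤ τ → x' τ ω = x τ ω)
    {t : ℝ} (ht : 0 ≤ t) {ε : ℝ} (hε : 0 < ε) :
    ∫⁻ ω, occ (fun τ => x' τ ω) ε 0 t ^ 2 ∂P ≤ 2 * (ENNReal.ofReal √t * ENNReal.ofReal √t) := by
  set I : ℝ → Ω → ENNReal := fun τ ω => {r : ℝ | |r| ≤ ε}.indicator 1 (x' τ ω) with hI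
  set μ : Measure ℝ := volume.restrict (Set.Ioc 0 t) with hμ
  set c : ENNReal := ENNReal.ofReal (1 / (2 * ε)) with hc
  have hIm : Measurable (fun p : Ω × ℝ => I p.2 p.1) :=
    (measurable_one.indicator (measurableSet_absle ε)).comp (hx'.comp measurable_swap)
  have hIτ : ∀ ω, Measurable fun τ => I τ ω := fun ω => hIm.comp (measurable_const.prodMk measurable_id)
  have hIω : ∀ τ, Measurable fun ω => I τ ω := fun τ => hIm.comp (measurable_id.prodMk measurable_const)
  have hA : MeasurableSet {p : ℝ × ℝ | p.1 ≤ p.2} := measurableSet_le measurable_fst measurable_snd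
  have hJm : Measurable (fun z : Ω × (ℝ × ℝ) =>
      {p : ℝ × ℝ | p.1 ≤ p.2}.indicator (fun p => I p.1 z.1 * I p.2 z.1) z.2) := by
    have h1 : Measurable fun z : Ω × (ℝ × ℝ) => I z.2.1 z.1 * I z.2.2 z.1 :=
      (hIm.comp (measurable_fst.prodMk (measurable_fst.comp measurable_snd))).mul
        (hIm.comp (measurable_fst.prodMk (measurable_snd.comp measurable_snd)))
    exact h1.indicator (measurable_snd hA)
  have hpair : ∀ σ τ, 0 < σ → σ < τ → ∫⁻ ω, I σ ω * I τ ω ∂P ≤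
      ENNReal.ofReal (2 * ε) * ENNReal.ofReal (1 / √(2 * Real.pi * (τ - σ))) *
        (ENNReal.ofReal (2 * ε) * ENNReal.ofReal (1 / √(2 * Real.pi * (σ - 0)))) := by
    intro σ τ hσ hστ
    have hB : MeasurableSet[F σ] {ω | |x σ ω| ≤ ε} := S.measX σ hσ.le (measurableSet_absle ε)
    have hm1 : MeasurableSet {ω | |x σ ω| ≤ ε} := S.F_le _ _ hB
    have hm2 : MeasurableSet {ω | |x τ ω| ≤ ε} := S.mX (hσ.le.trans hστ.le) (measurableSet_absle ε)
    calc ∫⁻ ω, I σ ω * I τ ω ∂P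
        = ∫⁻ ω, ({ω | |x τ ω| ≤ ε} ∩ {ω | |x σ ω| ≤ ε}).indicator 1 ω ∂P := by
          refine lintegral_congr_ae ?_
          filter_upwards [hxx] with ω hω
          simp only [hI, hω σ hσ.le, hω τ (hσ.le.trans hστ.le)]
          by_cases h1 : |x σ ω| ≤ ε <;> by_cases h2 : |x τ ω| ≤ ε <;> simp [h1, h2]
      _ = P ({ω | |x τ ω| ≤ ε} ∩ {ω | |x σ ω| ≤ ε}) := lintegral_indicator_one (hm2.inter hm1)
      _ ≤ ENNReal.ofReal (2 * ε / √(2 * Real.pi * (τ - σ))) * P {ω | |x σ ω| ≤ ε} :=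
          S.small_ball hσ.le hστ hB
      _ ≤ ENNReal.ofReal (2 * ε / √(2 * Real.pi * (τ - σ))) *
            (ENNReal.ofReal (2 * ε / √(2 * Real.pi * (σ - 0))) * 1) := by
          refine mul_le_mul_right ?_ _
          have := S.small_ball (s := 0) (t := σ) le_rfl hσ (B := Set.univ) .univ (ε := ε)
          simpa using this
      _ = _ := by
          have e : ∀ u : ℝ, ENNReal.ofReal (2 * ε / u) = ENNReal.ofReal (2 * ε) * ENNReal.ofReal (1 / u) :=
            fun u => by rw [← ENNReal.ofReal_mul (by positivity), mul_one_div]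
          rw [mul_one, e, e]
  have hsq : ∀ ω, occ (fun τ => x' τ ω) ε 0 t ^ 2 ≤ 2 * c ^ 2 *
      ∫⁻ p, {p : ℝ × ℝ | p.1 ≤ p.2}.indicator (fun p => I p.1 ω * I p.2 ω) p ∂(μ.prod μ) := by
    intro ω
    have := lintegral_sq_le μ (hIτ ω)
    rw [occ, mul_pow, mul_comm (2 : ENNReal), mul_assoc]
    exact mul_le_mul_right this _
  have hc2 : c ^ 2 * (ENNReal.ofReal (2 * ε) * ENNReal.ofReal (2 * ε)) = 1 := by
    rw [sq, mul_mul_mul_comm, hc, ← ENNReal.ofReal_mul (by positivity),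
      one_div_mul_cancel (by positivity)]; simp
  calc ∫⁻ ω, occ (fun τ => x' τ ω) ε 0 t ^ 2 ∂P
      ≤ ∫⁻ ω, 2 * c ^ 2 *
          ∫⁻ p, {p : ℝ × ℝ | p.1 ≤ p.2}.indicator (fun p => I p.1 ω * I p.2 ω) p ∂(μ.prod μ) ∂P :=
        lintegral_mono hsq
    _ = 2 * c ^ 2 * ∫⁻ σ, ∫⁻ τ, {p : ℝ × ℝ | p.1 ≤ p.2}.indicator
          (fun p => ∫⁻ ω, I p.1 ω * I p.2 ω ∂P) (σ, τ) ∂μ ∂μ := by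
        rw [lintegral_const_mul _ hJm.lintegral_prod_right', lintegral_lintegral_swap hJm.aemeasurable]
        congr 1
        rw [← lintegral_prod (f := {p : ℝ × ℝ | p.1 ≤ p.2}.indicator
          (fun p => ∫⁻ ω, I p.1 ω * I p.2 ω ∂P))]
        · refine lintegral_congr fun p => ?_
          by_cases h : p.1 ≤ p.2 <;> simp [Set.indicator, h]
        · have h1 : Measurable fun z : (ℝ × ℝ) × Ω => I z.1.1 z.2 * I z.1.2 z.2 :=
            (hIm.comp (measurable_snd.prodMk (measurable_fst.comp measurable_fst))).mul
              (hIm.comp (measurable_snd.prodMk (measurable_snd.comp measurable_fst)))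
          exact (h1.lintegral_prod_right'.indicator hA).aemeasurable
    _ ≤ 2 * c ^ 2 * ∫⁻ σ, (ENNReal.ofReal (2 * ε) * ENNReal.ofReal (2 * ε) * ENNReal.ofReal √t) *
          ENNReal.ofReal (1 / √(2 * Real.pi * (σ - 0))) ∂μ := by
        refine mul_le_mul_right (setLIntegral_mono' measurableSet_Ioc fun σ hσ => ?_) _
        calc ∫⁻ τ, {p : ℝ × ℝ | p.1 ≤ p.2}.indicator (fun p => ∫⁻ ω, I p.1 ω * I p.2 ω ∂P) (σ, τ) ∂μ
            ≤ ∫⁻ τ in Set.Ioc 0 t, (Set.Ioc σ t).indicator (fun τ =>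
                ENNReal.ofReal (2 * ε) * ENNReal.ofReal (1 / √(2 * Real.pi * (τ - σ))) *
                (ENNReal.ofReal (2 * ε) * ENNReal.ofReal (1 / √(2 * Real.pi * (σ - 0))))) τ := by
              refine lintegral_mono_ae ?_
              have hne : ∀ᵐ τ ∂(volume.restrict (Set.Ioc 0 t)), τ ≠ σ :=
                ae_restrict_of_ae (Measure.ae_ne volume σ)
              filter_upwards [hne, ae_restrict_mem measurableSet_Ioc] with τ h1 h2
              by_cases h : σ ≤ τ
              · have hlt : σ < τ := lt_of_le_of_ne h (Ne.symm h1)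
                rw [Set.indicator_of_mem (show (σ, τ) ∈ {p : ℝ × ℝ | p.1 ≤ p.2} from h),
                  Set.indicator_of_mem (show τ ∈ Set.Ioc σ t from ⟨hlt, h2.2⟩)]
                exact hpair σ τ hσ.1 hlt
              · rw [Set.indicator_of_notMem (show (σ, τ) ∉ {p : ℝ × ℝ | p.1 ≤ p.2} from h)]
                exact zero_le
          _ ≤ ∫⁻ τ in Set.Ioc σ t,
                ENNReal.ofReal (2 * ε) * ENNReal.ofReal (1 / √(2 * Real.pi * (τ - σ))) *
                (ENNReal.ofReal (2 * ε) * ENNReal.ofReal (1 / √(2 * Real.pi * (σ - 0)))) := by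
              rw [← lintegral_indicator measurableSet_Ioc (fun τ => ENNReal.ofReal (2 * ε) * ENNReal.ofReal (1 / √(2 * Real.pi * (τ - σ))) *
                (ENNReal.ofReal (2 * ε) * ENNReal.ofReal (1 / √(2 * Real.pi * (σ - 0)))))]
              exact lintegral_mono' Measure.restrict_le_self le_rfl
          _ = ENNReal.ofReal (2 * ε) * (∫⁻ τ in Set.Ioc σ t, ENNReal.ofReal (1 / √(2 * Real.pi * (τ - σ)))) *
                (ENNReal.ofReal (2 * ε) * ENNReal.ofReal (1 / √(2 * Real.pi * (σ - 0)))) := by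
              rw [lintegral_mul_const' _ _ (ENNReal.mul_ne_top ENNReal.ofReal_ne_top ENNReal.ofReal_ne_top),
                lintegral_const_mul' _ _ ENNReal.ofReal_ne_top]
          _ ≤ ENNReal.ofReal (2 * ε) * ENNReal.ofReal √t *
                (ENNReal.ofReal (2 * ε) * ENNReal.ofReal (1 / √(2 * Real.pi * (σ - 0)))) := by
              refine mul_le_mul_left (mul_le_mul_right ((lintegral_rsqrt_le hσ.2).trans
                (ENNReal.ofReal_le_ofReal (Real.sqrt_le_sqrt ?_))) _) _
              linarith [hσ.1]
          _ = _ := by ring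
    _ = 2 * (c ^ 2 * (ENNReal.ofReal (2 * ε) * ENNReal.ofReal (2 * ε))) * (ENNReal.ofReal √t *
          ∫⁻ σ, ENNReal.ofReal (1 / √(2 * Real.pi * (σ - 0))) ∂μ) := by
        rw [lintegral_const_mul' _ _ (ENNReal.mul_ne_top (ENNReal.mul_ne_top ENNReal.ofReal_ne_top
          ENNReal.ofReal_ne_top) ENNReal.ofReal_ne_top)]
        ring
    _ ≤ _ := by
        rw [hc2, mul_one]
        refine mul_le_mul_right (mul_le_mul_right ((lintegral_rsqrt_le ht).trans ?_) _) _
        rw [sub_zero]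

lemma SkewData.occ_mean (S : SkewData P q a F W x η) {x' : ℝ → Ω → ℝ}
    (hx' : Measurable (Function.uncurry x')) (hxx : ∀ᵐ ω ∂P, ∀ τ, 0 ≤ τ → x' τ ω = x τ ω)
    {t : ℝ} (ht : 0 ≤ t) :
    Tendsto (fun n : ℕ => ∫⁻ ω, occ (fun τ => x' τ ω) (1 / ((n:ℝ) + 1)) 0 t ∂P) atTop
      (nhds (ENNReal.ofReal (meanLT t a))) := by
  have hε : Tendsto (fun n : ℕ => 1 / ((n:ℝ) + 1)) atTop (nhdsWithin 0 (Set.Ioi 0)) :=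
    tendsto_nhdsWithin_iff.2 ⟨tendsto_one_div_add_atTop_nhds_zero_nat,
      Eventually.of_forall fun n => by simp only [Set.mem_Ioi]; positivity⟩
  have e1 : ∀ n : ℕ, ∫⁻ ω, occ (fun τ => x' τ ω) (1 / ((n:ℝ) + 1)) 0 t ∂P =
      ∫⁻ τ in Set.Ioc 0 t, ENNReal.ofReal (1 / (2 * (1 / ((n:ℝ) + 1)))) *
        P {ω | |x' τ ω| ≤ 1 / ((n:ℝ) + 1)} := by
    intro n
    have := lintegral_occ (P := P) hx' Set.univ (1 / ((n:ℝ) + 1)) 0 t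
    rw [Measure.restrict_univ] at this
    rw [this, lintegral_const_mul' _ _ ENNReal.ofReal_ne_top]
    simp
  have e2 : ∀ τ, 0 < τ → ∀ ε, P {ω | |x' τ ω| ≤ ε} = gaussianReal a τ.toNNReal (Set.Icc (-ε) ε) := by
    intro τ hτ ε
    rw [← S.small_ball_exact hτ]
    refine measure_congr ?_
    filter_upwards [hxx] with ω hω
    refine propext ?_
    change |x' τ ω| ≤ ε ↔ |x τ ω| ≤ ε
    rw [hω τ hτ.le]
  have e3 : ENNReal.ofReal (meanLT t a) =
      ∫⁻ τ in Set.Ioc 0 t, ENNReal.ofReal (gaussianPDFReal a τ.toNNReal 0) := by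
    rw [meanLT, intervalIntegral.integral_of_le ht,
      ofReal_integral_eq_lintegral_ofReal (integrableOn_meanLT a)]
    · refine setLIntegral_congr_fun measurableSet_Ioc fun τ hτ => ?_
      simp only [gaussianPDFReal_def, Real.coe_toNNReal τ hτ.1.le]
      congr 3
      ring
    · filter_upwards [ae_restrict_mem measurableSet_Ioc] with τ hτ
      have := hτ.1
      simp only [Pi.zero_apply]; positivity
  simp_rw [e1]
  rw [e3]
  refine tendsto_lintegral_of_dominated_convergence'
    (fun τ => ENNReal.ofReal (1 / √(2 * Real.pi * (τ - 0)))) (fun n => ?_) (fun n => ?_) ?_ ?_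
  · have hm : Measurable (fun p : ℝ × Ω =>
        {r : ℝ | |r| ≤ 1 / ((n:ℝ) + 1)}.indicator (1 : ℝ → ENNReal) (x' p.1 p.2)) :=
      (measurable_one.indicator (measurableSet_absle _)).comp hx'
    have hP : (fun τ => P {ω | |x' τ ω| ≤ 1 / ((n:ℝ) + 1)}) =
        fun τ => ∫⁻ ω, {r : ℝ | |r| ≤ 1 / ((n:ℝ) + 1)}.indicator (1 : ℝ → ENNReal) (x' τ ω) ∂P := by
      funext τ
      have h1 : MeasurableSet {ω | |x' τ ω| ≤ 1 / ((n:ℝ) + 1)} :=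
        (hx'.comp (measurable_const.prodMk measurable_id) : Measurable fun ω => x' τ ω)
          (measurableSet_absle _)
      rw [← lintegral_indicator_one h1]
      rfl
    have hPm : Measurable fun τ => P {ω | |x' τ ω| ≤ 1 / ((n:ℝ) + 1)} := by
      rw [hP]; exact hm.lintegral_prod_right'
    exact (hPm.const_mul _).aemeasurable
  · filter_upwards [ae_restrict_mem measurableSet_Ioc] with τ hτ
    have hv : τ.toNNReal ≠ 0 := by simpa using hτ.1
    rw [e2 τ hτ.1]
    refine (mul_le_mul_right (gauss_Icc_le a hv) _).trans ?_
    rw [← ENNReal.ofReal_mul (by positivity), Real.coe_toNNReal τ hτ.1.le, sub_zero]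
    refine ENNReal.ofReal_le_ofReal (le_of_eq ?_)
    field_simp
  · exact ((lintegral_rsqrt_le ht).trans_lt ENNReal.ofReal_lt_top).ne
  · filter_upwards [ae_restrict_mem measurableSet_Ioc] with τ hτ
    have hv : τ.toNNReal ≠ 0 := by simpa using hτ.1
    refine ((ENNReal.tendsto_ofReal (gauss_Icc_tendsto a hv)).comp hε).congr fun n => ?_
    rw [Function.comp, ENNReal.ofReal_mul (by positivity), e2 τ hτ.1, ofReal_measureReal]

/-- The mean of the local time, computed by uniform integrability of the occupation times. -/
lemma SkewData.mean_eta (S : SkewData P q a F W x η) {t : ℝ} (ht : 0 ≤ t) :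
    Integrable (η t) P ∧ ∫ ω, η t ω ∂P = meanLT t a := by
  obtain ⟨x', hx', hxx⟩ := S.exists_version
  have hε : Tendsto (fun n : ℕ => 1 / ((n:ℝ) + 1)) atTop (nhdsWithin 0 (Set.Ioi 0)) :=
    tendsto_nhdsWithin_iff.2 ⟨tendsto_one_div_add_atTop_nhds_zero_nat,
      Eventually.of_forall fun n => by simp only [Set.mem_Ioi]; positivity⟩
  set f : ℕ → Ω → ℝ := fun n ω => (occ (fun τ => x' τ ω) (1 / ((n:ℝ) + 1)) 0 t).toReal with hf
  have hfm : ∀ n, Measurable (f n) := fun n => (measurable_occ hx' _ _ _).ennreal_toReal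
  have hlim : ∀ᵐ ω ∂P, Tendsto (fun n => f n ω) atTop (nhds (η t ω)) := by
    filter_upwards [S.occ_tendsto hx' hxx le_rfl ht, S.zeroη, S.η_nonneg] with ω h1 h2 h3
    have := (ENNReal.tendsto_toReal ENNReal.ofReal_ne_top).comp (h1.comp hε)
    rw [h2, sub_zero, ENNReal.toReal_ofReal (h3 t ht)] at this
    exact this
  obtain ⟨hi, hT⟩ := tendsto_integral_of_sq_bdd (P := P) (f := f) (g := η t)
    (fun n => (hfm n).aestronglyMeasurable)
    (tendstoInMeasure_of_tendsto_ae (fun n => (hfm n).aestronglyMeasurable) hlim)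
    (C := 2 * (ENNReal.ofReal √t * ENNReal.ofReal √t))
    (ENNReal.mul_ne_top (by simp) (ENNReal.mul_ne_top ENNReal.ofReal_ne_top ENNReal.ofReal_ne_top))
    (fun n => by
      refine le_trans (le_of_eq (lintegral_congr fun ω => ?_))
        (S.occ_sq_le hx' hxx ht (ε := 1 / ((n:ℝ) + 1)) (by positivity))
      rw [Real.enorm_of_nonneg ENNReal.toReal_nonneg, ENNReal.ofReal_toReal (occ_ne_top _ _ _ _)])
  refine ⟨hi, tendsto_nhds_unique hT ?_⟩
  have hmean := (ENNReal.tendsto_toReal ENNReal.ofReal_ne_top).comp (S.occ_mean hx' hxx ht)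
  have h0 : 0 ≤ meanLT t a := intervalIntegral.integral_nonneg ht fun τ hτ => by
    have := hτ.1
    positivity
  rw [ENNReal.toReal_ofReal h0] at hmean
  refine hmean.congr fun n => ?_
  rw [Function.comp, integral_toReal (measurable_occ hx' _ _ _).aemeasurable
    (Eventually.of_forall fun ω => (occ_ne_top _ _ _ _).lt_top)]

end

lemma meanLT_nonneg {t : ℝ} (ht : 0 ≤ t) (a : ℝ) : 0 ≤ meanLT t a :=
  intervalIntegral.integral_nonneg ht fun τ hτ => by
    have := hτ.1
    positivity

lemma meanLT_le {t : ℝ} (ht : 0 ≤ t) (a : ℝ) : meanLT t a ≤ √t * Real.exp (-(a ^ 2 / (2 * t))) := by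
  have h1 : ∫⁻ τ in Set.Ioc 0 t, ENNReal.ofReal ((√(2 * Real.pi * τ))⁻¹ * Real.exp (-(a ^ 2 / (2 * τ)))) ≤
      ENNReal.ofReal √t * ENNReal.ofReal (Real.exp (-(a ^ 2 / (2 * t)))) := by
    calc _ ≤ ∫⁻ τ in Set.Ioc 0 t, ENNReal.ofReal (1 / √(2 * Real.pi * (τ - 0))) *
          ENNReal.ofReal (Real.exp (-(a ^ 2 / (2 * t)))) := by
          refine setLIntegral_mono' measurableSet_Ioc fun τ hτ => ?_
          rw [← ENNReal.ofReal_mul (by positivity), sub_zero, one_div]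
          refine ENNReal.ofReal_le_ofReal (mul_le_mul_of_nonneg_left ?_ (by positivity))
          rw [Real.exp_le_exp, neg_le_neg_iff]
          have h0 : 0 < τ := hτ.1
          have := hτ.2
          gcongr
      _ ≤ _ := by
          rw [lintegral_mul_const _ (by fun_prop)]
          gcongr
          simpa using lintegral_rsqrt_le ht
  rw [meanLT, intervalIntegral.integral_of_le ht, integral_eq_lintegral_of_nonneg_ae
    (ae_restrict_of_forall_mem measurableSet_Ioc fun τ hτ => by
      have := hτ.1
      simp only [Pi.zero_apply]
      positivity) (integrableOn_meanLT a).aestronglyMeasurable]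
  rw [← ENNReal.ofReal_mul (by positivity)] at h1
  exact ENNReal.toReal_le_of_le_ofReal (by positivity) h1

section
variable {P : Measure Ω} [IsProbabilityMeasure P] {q a : ℝ} {F : ℝ → MeasurableSpace Ω}
  {W x η : ℝ → Ω → ℝ}

lemma SkewData.moment_le (S : SkewData P q a F W x η) {t : ℝ} (ht : 0 ≤ t) (k : ℕ) :
    ∫⁻ ω, ENNReal.ofReal (η t ω ^ (k+1)) ∂P ≤
      ENNReal.ofReal ((k+1).factorial * √t ^ (k+1) * Real.exp (-(a ^ 2 / (2 * t)))) := by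
  induction k with
  | zero =>
    obtain ⟨hi, he⟩ := S.mean_eta ht
    simp only [zero_add, pow_one]
    rw [← ofReal_integral_eq_lintegral_ofReal hi
      (by filter_upwards [S.η_nonneg] with ω h using h t ht), he]
    refine ENNReal.ofReal_le_ofReal ?_
    simpa using meanLT_le ht a
  | succ k ih =>
    refine (S.moment ht (k+1)).trans ?_
    refine (mul_le_mul_right ih _).trans ?_
    rw [← ENNReal.ofReal_mul (by positivity)]
    refine ENNReal.ofReal_le_ofReal (le_of_eq ?_)
    rw [Nat.factorial_succ (k+1)]
    push_cast
    ring

lemma SkewData.moment_int (S : SkewData P q a F W x η) {t : ℝ} (ht : 0 ≤ t) (k : ℕ) :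
    Integrable (fun ω => η t ω ^ (k+1)) P ∧
    ∫ ω, η t ω ^ (k+1) ∂P ≤ (k+1).factorial * √t ^ (k+1) * Real.exp (-(a ^ 2 / (2 * t))) := by
  have h0 : 0 ≤ᵐ[P] fun ω => η t ω ^ (k+1) := by
    filter_upwards [S.η_nonneg] with ω h using pow_nonneg (h t ht) _
  have hm : AEStronglyMeasurable (fun ω => η t ω ^ (k+1)) P :=
    ((S.mη ht).pow_const _).aestronglyMeasurable
  refine ⟨(lintegral_ofReal_ne_top_iff_integrable hm h0).1
    ((S.moment_le ht k).trans_lt ENNReal.ofReal_lt_top).ne, ?_⟩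
  rw [integral_eq_lintegral_of_nonneg_ae h0 hm]
  exact ENNReal.toReal_le_of_le_ofReal (by positivity) (S.moment_le ht k)

end

/-- The normal component of the solution, the local time and the normal component of the driving
process form a skew Brownian motion with respect to the natural filtration of `w`. -/
lemma skewData_of {E : Type} [NormedAddCommGroup E] [InnerProductSpace ℝ E]
    [MeasurableSpace E] [BorelSpace E] [SecondCountableTopology E]
    {P : Measure Ω} [IsProbabilityMeasure P] {ν : E} (hν : ‖ν‖ = 1) {q : ℝ}
    (hq : q ∈ Set.Icc (-1 : ℝ) 1) {w : ℝ → Ω → E} (hw : IsWiener P w) {z : E}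
    {x : ℝ → Ω → E} {η : ℝ → Ω → ℝ}
    (hs : IsSkewLT P q (fun t ω => ⟪w t ω, ν⟫) ⟪z, ν⟫ (fun t ω => ⟪x t ω, ν⟫) η)
    (hinit : ∀ᵐ ω ∂P, x 0 ω = z)
    (hcont : ∀ᵐ ω ∂P, ContinuousOn (fun t => x t ω) (Set.Ici 0)) :
    SkewData P q ⟪z, ν⟫ (natFilt w) (fun t ω => ⟪w t ω, ν⟫) (fun t ω => ⟪x t ω, ν⟫) η := by
  have hle : ∀ t, natFilt (fun t ω => ⟪w t ω, ν⟫) t ≤ natFilt w t := fun t =>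
    iSup₂_le fun u hu => by
      have h1 : Measurable[natFilt w t] (w u) := measurable_natFilt w hu.1 hu.2
      exact ((by fun_prop : Measurable fun y : E => ⟪y, ν⟫).comp h1).comap_le
  refine ⟨natFilt_le hw.meas, fun s t h => natFilt_mono w h, fun t ht => ?_,
    fun t ht => (hs.adapted_x t ht).mono (hle t) le_rfl,
    fun t ht => (hs.adapted_eta t ht).mono (hle t) le_rfl, ?_, abs_le.2 hq, ?_, ?_,
    hs.cont, hs.mono, hs.zero, hs.eqn, ?_, hs.localTime⟩
  · exact (by fun_prop : Measurable fun y : E => ⟪y, ν⟫).comp (measurable_natFilt w ht le_rfl)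
  · intro s t h0 hst B hB Y hY l
    have hD : Measurable fun ω => ⟪w t ω, ν⟫ - ⟪w s ω, ν⟫ :=
      (by fun_prop : Measurable fun p : E × E => ⟪p.1, ν⟫ - ⟪p.2, ν⟫).comp
        ((hw.meas t).prodMk (hw.meas s))
    have hlaw := hw.incr_law ν hν s t h0 hst
    simp only [inner_sub_left] at hlaw
    have hI := (IndepFun_iff_Indep _ _ _).1 (hw.incr_indep s t h0 hst)
    have := cos_step (natFilt_le hw.meas s) hD hlaw
      (indep_of_indep_of_le_left (indep_of_indep_of_le_right hI.symm (by
        have h1 := (by fun_prop : Measurable fun y : E => ⟪y, ν⟫).comp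
          (comap_measurable (fun ω => w t ω - w s ω))
        simp only [Function.comp_def, inner_sub_left] at h1
        exact h1.comap_le)) (natFilt_le_comap_past w s)) hB hY l
    rw [Real.coe_toNNReal _ (sub_nonneg.2 hst)] at this
    exact this
  · filter_upwards [hw.cont] with ω h using h.inner continuous_const
  · filter_upwards [hcont] with ω h using h.inner continuousOn_const
  · filter_upwards [hinit] with ω h
    rw [h]

/-! ### Martingale transforms of a Wiener process at deterministic times -/

/-- The fourth moment of the standard Gaussian law. -/
def gaussM4 : ℝ := ∫ x, x ^ 4 ∂(gaussianReal 0 1)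

lemma gaussM4_nonneg : 0 ≤ gaussM4 := integral_nonneg fun x => by positivity

section
variable {E : Type} [NormedAddCommGroup E] [InnerProductSpace ℝ E]
    [MeasurableSpace E] [BorelSpace E] [SecondCountableTopology E]

lemma inc_law {P : Measure Ω} [IsProbabilityMeasure P] {D : Ω → E} {ν : E} {r : ℝ} (hr : 0 ≤ r)
    (h : ∀ θ : E, ‖θ‖ = 1 → ⟪θ, ν⟫ = 0 →
      Measure.map (fun ω => ⟪D ω, θ⟫) P = gaussianReal 0 r.toNNReal) (hD : Measurable D)
    {u : E} (hu : ⟪u, ν⟫ = 0) :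
    Measure.map (fun ω => ⟪D ω, u⟫) P = Measure.map (fun x => ‖u‖ * √r * x) (gaussianReal 0 1) := by
  have hr' : gaussianReal 0 r.toNNReal = Measure.map (fun x => √r * x) (gaussianReal 0 1) := by
    rw [gaussianReal_map_const_mul]
    congr 1
    · simp
    · ext
      simp [Real.sq_sqrt hr, hr]
  rcases eq_or_ne u 0 with rfl | h0
  · simp [Measure.map_const]
  have hn : ‖u‖ ≠ 0 := norm_ne_zero_iff.2 h0
  have h1 := h (‖u‖⁻¹ • u) (by rw [norm_smul, norm_inv, norm_norm, inv_mul_cancel₀ hn])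
    (by rw [inner_smul_left, hu, mul_zero])
  have h2 : (fun ω => ⟪D ω, u⟫) = (fun x => ‖u‖ * x) ∘ fun ω => ⟪D ω, ‖u‖⁻¹ • u⟫ := by
    ext ω
    simp only [Function.comp, inner_smul_right]
    rw [mul_inv_cancel_left₀ hn]
  rw [h2, ← Measure.map_map (by fun_prop) (by fun_prop), h1, hr', Measure.map_map (by fun_prop) (by fun_prop)]
  congr 1
  ext x
  simp [mul_assoc]

lemma inc_moments {P : Measure Ω} [IsProbabilityMeasure P] {D : Ω → E} {ν : E} {r : ℝ} (hr : 0 ≤ r)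
    (h : ∀ θ : E, ‖θ‖ = 1 → ⟪θ, ν⟫ = 0 →
      Measure.map (fun ω => ⟪D ω, θ⟫) P = gaussianReal 0 r.toNNReal) (hD : Measurable D)
    {u : E} (hu : ⟪u, ν⟫ = 0) :
    MemLp (fun ω => ⟪D ω, u⟫) 4 P ∧ ∫ ω, ⟪D ω, u⟫ ∂P = 0 ∧ ∫ ω, ⟪D ω, u⟫ ^ 2 ∂P = ‖u‖ ^ 2 * r ∧
      ∫ ω, ⟪D ω, u⟫ ^ 4 ∂P = gaussM4 * (‖u‖ ^ 4 * r ^ 2) := by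
  have hl := inc_law hr h hD hu
  have hm : AEMeasurable (fun ω => ⟪D ω, u⟫) P := by fun_prop
  have hp : ∀ p : ℕ, ∫ ω, ⟪D ω, u⟫ ^ p ∂P = (‖u‖ * √r) ^ p * ∫ x, x ^ p ∂(gaussianReal 0 1) := by
    intro p
    rw [← integral_map (f := fun x : ℝ => x ^ p) hm (by fun_prop), hl,
      integral_map (by fun_prop) (by fun_prop), ← integral_const_mul]
    simp [mul_pow]
  refine ⟨?_, ?_, ?_, ?_⟩
  · have h1 : MemLp (fun x : ℝ => x) 4 (Measure.map (fun ω => ⟪D ω, u⟫) P) := by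
      rw [hl, memLp_map_measure_iff (by fun_prop) (by fun_prop)]
      exact (memLp_id_gaussianReal' 4 (by simp)).const_mul _
    exact (memLp_map_measure_iff (by fun_prop) hm).1 h1
  · have := hp 1
    simp only [pow_one, integral_id_gaussianReal, mul_zero] at this
    exact this
  · rw [hp 2]
    have h2 : ∫ x, x ^ 2 ∂(gaussianReal 0 1) = 1 := by
      have := variance_fun_id_gaussianReal (μ := 0) (v := 1)
      rw [variance_eq_integral (by fun_prop)] at this
      simpa using this
    rw [h2, mul_one, mul_pow, Real.sq_sqrt hr]
  · rw [hp 4, ← gaussM4, mul_pow, show √r ^ 4 = (√r ^ 2) ^ 2 by ring, Real.sq_sqrt hr]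
    ring

end

lemma memLp_four_iff {P : Measure Ω} {f : Ω → ℝ} (hf : AEStronglyMeasurable f P) :
    MemLp f 4 P ↔ Integrable (fun ω => f ω ^ 4) P := by
  rw [← integrable_norm_rpow_iff hf (by norm_num) (by norm_num)]
  refine integrable_congr (Eventually.of_forall fun ω => ?_)
  simp only
  rw [show ((4 : ENNReal).toReal) = ((4:ℕ):ℝ) by norm_num, Real.rpow_natCast, Real.norm_eq_abs,
    Even.pow_abs (by decide)]

/-- Averaging first over an increment `D` that is independent of the σ-algebra `m`. -/
lemma integral_indep {E : Type} [NormedAddCommGroup E] [InnerProductSpace ℝ E]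
    [MeasurableSpace E] [BorelSpace E] [SecondCountableTopology E]
    {Ω' : Type} {m m0 : MeasurableSpace Ω'} {P : Measure Ω'} [IsProbabilityMeasure P]
    (hm : m ≤ m0) {D : Ω' → E} (hD : Measurable D)
    (hind : Indep m (MeasurableSpace.comap D inferInstance) P)
    {v : Ω' → E} (hv : Measurable[m] v) {H : Ω' → ℝ} (hH : Measurable[m] H) (p : ℕ)
    (hint : Integrable (fun ω => H ω * ⟪D ω, v ω⟫ ^ p) P) :
    ∫ ω, H ω * ⟪D ω, v ω⟫ ^ p ∂P = ∫ ω, H ω * ∫ ω', ⟪D ω', v ω⟫ ^ p ∂P ∂P := by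
  have hv' : Measurable v := hv.mono hm le_rfl
  have hH' : Measurable H := hH.mono hm le_rfl
  set f : (E × ℝ) × E → ℝ := fun z => z.1.2 * ⟪z.2, z.1.1⟫ ^ p with hf
  have hfm : Measurable f := by fun_prop
  have hI : IndepFun (fun ω => (v ω, H ω)) D P := by
    rw [IndepFun_iff_Indep]
    exact indep_of_indep_of_le_left hind (hv.prodMk hH).comap_le
  have hl := (indepFun_iff_map_prod_eq_prod_map_map (hv'.prodMk hH').aemeasurable hD.aemeasurable).1 hI
  have hmm : Measurable fun ω => ((v ω, H ω), D ω) := (hv'.prodMk hH').prodMk hD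
  have h1 : ∫ ω, H ω * ⟪D ω, v ω⟫ ^ p ∂P = ∫ z, f z ∂(Measure.map (fun ω => ((v ω, H ω), D ω)) P) := by
    rw [integral_map hmm.aemeasurable hfm.aestronglyMeasurable]
  have := Measure.isProbabilityMeasure_map (μ := P) hD.aemeasurable
  have := Measure.isProbabilityMeasure_map (μ := P) (hv'.prodMk hH').aemeasurable
  have hi : Integrable f (Measure.map (fun ω => ((v ω, H ω), D ω)) P) := by
    rw [integrable_map_measure hfm.aestronglyMeasurable hmm.aemeasurable]
    exact hint
  rw [h1, hl, integral_prod _ (by rw [← hl]; exact hi), integral_map (hv'.prodMk hH').aemeasurable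
    hfm.stronglyMeasurable.integral_prod_right'.aestronglyMeasurable]
  refine integral_congr_ae (Eventually.of_forall fun ω => ?_)
  simp only [hf]
  rw [integral_const_mul, integral_map hD.aemeasurable (by fun_prop)]

lemma lintegral_indep {E : Type} [NormedAddCommGroup E] [InnerProductSpace ℝ E]
    [MeasurableSpace E] [BorelSpace E] [SecondCountableTopology E]
    {Ω' : Type} {m m0 : MeasurableSpace Ω'} {P : Measure Ω'} [IsProbabilityMeasure P]
    (hm : m ≤ m0) {D : Ω' → E} (hD : Measurable D)
    (hind : Indep m (MeasurableSpace.comap D inferInstance) P)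
    {v : Ω' → E} (hv : Measurable[m] v) :
    ∫⁻ ω, ENNReal.ofReal (⟪D ω, v ω⟫ ^ 4) ∂P = ∫⁻ ω, ∫⁻ ω', ENNReal.ofReal (⟪D ω', v ω⟫ ^ 4) ∂P ∂P := by
  have hv' : Measurable v := hv.mono hm le_rfl
  set f : E × E → ENNReal := fun z => ENNReal.ofReal (⟪z.2, z.1⟫ ^ 4) with hf
  have hfm : Measurable f := by fun_prop
  have hI : IndepFun v D P := by
    rw [IndepFun_iff_Indep]
    exact indep_of_indep_of_le_left hind hv.comap_le
  have hl := (indepFun_iff_map_prod_eq_prod_map_map hv'.aemeasurable hD.aemeasurable).1 hI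
  have hmm : Measurable fun ω => (v ω, D ω) := hv'.prodMk hD
  have := Measure.isProbabilityMeasure_map (μ := P) hD.aemeasurable
  calc ∫⁻ ω, ENNReal.ofReal (⟪D ω, v ω⟫ ^ 4) ∂P
      = ∫⁻ z, f z ∂(Measure.map (fun ω => (v ω, D ω)) P) := by rw [lintegral_map hfm hmm]
    _ = _ := by
      rw [hl, lintegral_prod _ hfm.aemeasurable, lintegral_map hfm.lintegral_prod_right' hv']
      refine lintegral_congr fun ω => ?_
      rw [lintegral_map (by fun_prop) hD]

section
variable {E : Type} [NormedAddCommGroup E] [InnerProductSpace ℝ E]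
    [MeasurableSpace E] [BorelSpace E] [SecondCountableTopology E]

/-- Moments of the discrete stochastic integral of a bounded adapted integrand against a Wiener
process sampled at deterministic times. -/
lemma mart_moments {P : Measure Ω} [IsProbabilityMeasure P] {ν : E} {y : ℝ → Ω → E}
    (hy : IsWienerIn P ν y) {b : ℕ → ℝ} (hb0 : 0 ≤ b 0) (hb : Monotone b) {v : ℕ → Ω → E}
    (hv : ∀ k, Measurable[natFilt y (b k)] (v k)) (hvν : ∀ k ω, ⟪v k ω, ν⟫ = 0) {C : ℝ}
    (hvC : ∀ k ω, ‖v k ω‖ ≤ C) (n : ℕ) :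
    MemLp (fun ω => ∑ k ∈ Finset.range n, ⟪y (b (k+1)) ω - y (b k) ω, v k ω⟫) 4 P ∧
    ∫ ω, ∑ k ∈ Finset.range n, ⟪y (b (k+1)) ω - y (b k) ω, v k ω⟫ ∂P = 0 ∧
    ∫ ω, (∑ k ∈ Finset.range n, ⟪y (b (k+1)) ω - y (b k) ω, v k ω⟫) ^ 2 ∂P =
      ∫ ω, ∑ k ∈ Finset.range n, ‖v k ω‖ ^ 2 * (b (k+1) - b k) ∂P ∧
    ∫ ω, (∑ k ∈ Finset.range n, ⟪y (b (k+1)) ω - y (b k) ω, v k ω⟫) ^ 4 ∂P ≤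
      (4 + 3 * gaussM4) * C ^ 4 * (b n - b 0) ^ 2 := by
  have hbn : ∀ k, 0 ≤ b k := fun k => hb0.trans (hb (Nat.zero_le k))
  have hvm : ∀ k, Measurable (v k) := fun k => (hv k).mono (natFilt_le hy.meas _) le_rfl
  have hg0 := gaussM4_nonneg
  have hvi : ∀ k, Integrable (fun ω => ‖v k ω‖ ^ 2 * (b (k+1) - b k)) P := fun k => by
    have : Integrable (fun ω => ‖v k ω‖ ^ 2) P := by
      refine Integrable.of_bound (C := C ^ 2) ((hvm k).norm.pow_const 2).aestronglyMeasurable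
        (Eventually.of_forall fun ω => ?_)
      rw [Real.norm_of_nonneg (by positivity)]
      exact pow_le_pow_left₀ (norm_nonneg _) (hvC k ω) 2
    exact this.mul_const _
  induction n with
  | zero => simp [integral_zero]
  | succ n ih =>
    obtain ⟨hL, h1, h2, h4⟩ := ih
    set m : Ω → ℝ := fun ω => ∑ k ∈ Finset.range n, ⟪y (b (k+1)) ω - y (b k) ω, v k ω⟫ with hmdef
    set D : Ω → E := fun ω => y (b (n+1)) ω - y (b n) ω with hDdef
    set δ : Ω → ℝ := fun ω => ⟪D ω, v n ω⟫ with hδ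
    have hC0 : ∀ ω : Ω, 0 ≤ C := fun ω => (norm_nonneg _).trans (hvC n ω)
    set r := b (n+1) - b n with hr
    have hr0 : 0 ≤ r := sub_nonneg.2 (hb (Nat.le_succ n))
    have hD : Measurable D := (hy.meas _).sub (hy.meas _)
    have hind : Indep (natFilt y (b n)) (MeasurableSpace.comap D inferInstance) P := by
      have hI := (IndepFun_iff_Indep _ _ _).1 (hy.incr_indep (b n) (b (n+1)) (hbn n) (hb (Nat.le_succ n)))
      exact indep_of_indep_of_le_left hI.symm (natFilt_le_comap_past y _)
    have hlaw : ∀ θ : E, ‖θ‖ = 1 → ⟪θ, ν⟫ = 0 →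
      Measure.map (fun ω => ⟪D ω, θ⟫) P = gaussianReal 0 r.toNNReal := fun θ h h' =>
        hy.incr_law θ h h' (b n) (b (n+1)) (hbn n) (hb (Nat.le_succ n))
    have hM := fun ω => inc_moments hr0 hlaw hD (hvν n ω)
    have hmm : Measurable[natFilt y (b n)] m := by
      refine Finset.measurable_fun_sum _ fun k hk => ?_
      have hk' := Finset.mem_range.1 hk
      exact (by fun_prop : Measurable fun p : (E × E) × E => ⟪p.1.1 - p.1.2, p.2⟫).comp
        (((measurable_natFilt y (hbn _) (hb hk')).prodMk
          (measurable_natFilt y (hbn _) (hb hk'.le))).prodMk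
          ((hv k).mono (natFilt_mono y (hb hk'.le)) le_rfl))
    have hmm' : Measurable m := hmm.mono (natFilt_le hy.meas _) le_rfl
    have hδm : Measurable δ := by
      exact (by fun_prop : Measurable fun p : E × E => ⟪p.1, p.2⟫).comp (hD.prodMk (hvm n))
    have hC4 : ∀ ω : Ω, ‖v n ω‖ ^ 4 ≤ C ^ 4 := fun ω => pow_le_pow_left₀ (norm_nonneg _) (hvC n ω) 4
    have hδ4 : ∫⁻ ω, ENNReal.ofReal (δ ω ^ 4) ∂P ≤ ENNReal.ofReal (gaussM4 * (C ^ 4 * r ^ 2)) := by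
      rw [lintegral_indep (natFilt_le hy.meas _) hD hind (hv n)]
      refine (lintegral_mono (g := fun _ => ENNReal.ofReal (gaussM4 * (C ^ 4 * r ^ 2))) fun ω => ?_).trans
        (by simp)
      obtain ⟨k1, -, -, k4⟩ := hM ω
      rw [← ofReal_integral_eq_lintegral_ofReal ((memLp_four_iff k1.1).1 k1)
        (Eventually.of_forall fun _ => by positivity), k4]
      refine ENNReal.ofReal_le_ofReal (mul_le_mul_of_nonneg_left ?_ hg0)
      exact mul_le_mul_of_nonneg_right (hC4 ω) (by positivity)
    have hδi : Integrable (fun ω => δ ω ^ 4) P :=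
      (lintegral_ofReal_ne_top_iff_integrable (hδm.pow_const 4).aestronglyMeasurable
        (Eventually.of_forall fun _ => by simp only [Pi.zero_apply]; positivity)).1
        (hδ4.trans_lt ENNReal.ofReal_lt_top).ne
    have hδ4' : ∫ ω, δ ω ^ 4 ∂P ≤ gaussM4 * (C ^ 4 * r ^ 2) := by
      rw [integral_eq_lintegral_of_nonneg_ae (Eventually.of_forall fun _ => by simp only [Pi.zero_apply]; positivity)
        (hδm.pow_const 4).aestronglyMeasurable]
      exact ENNReal.toReal_le_of_le_ofReal (by positivity) hδ4
    have hmi : Integrable (fun ω => m ω ^ 4) P := (memLp_four_iff hL.1).1 hL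
    have hδL : MemLp δ 4 P := (memLp_four_iff hδm.aestronglyMeasurable).2 hδi
    -- every mixed monomial of degree at most four is dominated by `1 + m ^ 4 + δ ^ 4`
    have hdom : Integrable (fun ω => 1 + m ω ^ 4 + δ ω ^ 4) P := ((integrable_const 1).add hmi).add hδi
    have hmix : ∀ i j : ℕ, (∀ p d : ℝ, |p ^ i * d ^ j| ≤ 1 + p ^ 4 + d ^ 4) →
        Integrable (fun ω => m ω ^ i * δ ω ^ j) P := fun i j h =>
      hdom.mono' ((hmm'.pow_const i).mul (hδm.pow_const j)).aestronglyMeasurable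
        (Eventually.of_forall fun ω => h _ _)
    have i11 : Integrable (fun ω => m ω ^ 1 * δ ω ^ 1) P := hmix 1 1 fun p d => by
      rw [abs_le]; constructor <;> nlinarith [sq_nonneg (p ^ 2 - 1), sq_nonneg (d ^ 2 - 1), sq_nonneg (p - d), sq_nonneg (p + d), sq_nonneg p, sq_nonneg d]
    have i31 : Integrable (fun ω => m ω ^ 3 * δ ω ^ 1) P := hmix 3 1 fun p d => by
      rw [abs_le]; constructor <;> nlinarith [sq_nonneg (p ^ 2 - d ^ 2), sq_nonneg (p ^ 2 - p * d), sq_nonneg (p ^ 2 + p * d), sq_nonneg (d ^ 2)]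
    have i22 : Integrable (fun ω => m ω ^ 2 * δ ω ^ 2) P := hmix 2 2 fun p d => by
      rw [abs_le]; constructor <;> nlinarith [sq_nonneg (p ^ 2 - d ^ 2), sq_nonneg (p * d), sq_nonneg (p ^ 2), sq_nonneg (d ^ 2)]
    have i20 : Integrable (fun ω => m ω ^ 2) P := by
      simpa using hmix 2 0 fun p d => by
        rw [abs_le]; constructor <;> nlinarith [sq_nonneg (p ^ 2 - 1), sq_nonneg (d ^ 2), sq_nonneg p]
    have i02 : Integrable (fun ω => 1 * δ ω ^ 2) P := by
      simpa using hmix 0 2 fun p d => by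
        rw [abs_le]; constructor <;> nlinarith [sq_nonneg (d ^ 2 - 1), sq_nonneg (p ^ 2), sq_nonneg d]
    have hle := natFilt_le hy.meas (b n)
    have e11 : ∫ ω, m ω ^ 1 * δ ω ^ 1 ∂P = 0 := by
      rw [integral_indep hle hD hind (hv n) (hmm.pow_const 1) 1 i11]
      simp [(hM _).2.1]
    have e31 : ∫ ω, m ω ^ 3 * δ ω ^ 1 ∂P = 0 := by
      rw [integral_indep hle hD hind (hv n) (hmm.pow_const 3) 1 i31]
      simp [(hM _).2.1]
    have e02 : ∫ ω, 1 * δ ω ^ 2 ∂P = ∫ ω, ‖v n ω‖ ^ 2 * r ∂P := by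
      rw [integral_indep hle hD hind (hv n) measurable_const 2 i02]
      simp [(hM _).2.2.1]
    have hm2 : ∫ ω, m ω ^ 2 ∂P ≤ C ^ 2 * (b n - b 0) := by
      rw [h2]
      refine (integral_mono (g := fun _ => C ^ 2 * (b n - b 0)) (integrable_finsetSum _ fun k _ => hvi k)
        (integrable_const _) fun ω => ?_).trans (by simp)
      calc _ ≤ ∑ k ∈ Finset.range n, C ^ 2 * (b (k+1) - b k) := Finset.sum_le_sum fun k _ =>
            mul_le_mul_of_nonneg_right (pow_le_pow_left₀ (norm_nonneg _) (hvC k ω) 2)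
              (sub_nonneg.2 (hb (Nat.le_succ k)))
        _ = _ := by rw [← Finset.mul_sum, Finset.sum_range_sub]
    have e22 : ∫ ω, m ω ^ 2 * δ ω ^ 2 ∂P ≤ C ^ 4 * (r * (b n - b 0)) := by
      have hi := i22
      rw [integral_indep hle hD hind (hv n) (hmm.pow_const 2) 2 i22]
      simp only [(hM _).2.2.1]
      have : ∫ ω, m ω ^ 2 * (‖v n ω‖ ^ 2 * r) ∂P ≤ ∫ ω, (C ^ 2 * r) * m ω ^ 2 ∂P := by
        refine integral_mono_of_nonneg (Eventually.of_forall fun ω => by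
          simp only [Pi.zero_apply]; positivity) (i20.const_mul _) (Eventually.of_forall fun ω => ?_)
        simp only
        have h3 : ‖v n ω‖ ^ 2 ≤ C ^ 2 := pow_le_pow_left₀ (norm_nonneg _) (hvC n ω) 2
        have := mul_le_mul_of_nonneg_right h3 (mul_nonneg hr0 (sq_nonneg (m ω)))
        nlinarith
      refine this.trans ?_
      rw [integral_const_mul]
      have := mul_le_mul_of_nonneg_left hm2 (mul_nonneg (sq_nonneg C) hr0)
      nlinarith
    have hsum : ∀ ω, ∑ k ∈ Finset.range (n+1), ⟪y (b (k+1)) ω - y (b k) ω, v k ω⟫ = m ω + δ ω :=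
      fun ω => Finset.sum_range_succ _ _
    simp only [hsum]
    refine ⟨hL.add hδL, ?_, ?_, ?_⟩
    · have iδ : Integrable (fun ω => 1 * δ ω ^ 1) P := by
        simpa using hδL.integrable (by norm_num)
      rw [integral_add (hL.integrable (by norm_num)) (hδL.integrable (by norm_num)), h1, zero_add]
      have := integral_indep hle hD hind (hv n) (H := fun _ => 1) measurable_const 1 iδ
      simp only [one_mul, pow_one, (hM _).2.1, integral_zero] at this
      exact this
    · have : ∀ ω, (m ω + δ ω) ^ 2 = m ω ^ 2 + 2 * (m ω ^ 1 * δ ω ^ 1) + 1 * δ ω ^ 2 := fun ω => by ring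
      simp only [this]
      rw [integral_add (i20.fun_add (i11.const_mul 2)) i02, integral_add i20 (i11.const_mul 2),
        integral_const_mul, e11, e02, h2, mul_zero, add_zero,
        ← integral_add (integrable_finsetSum _ fun k _ => hvi k) (hvi n)]
      simp only [Finset.sum_range_succ]
    · have hpt : ∀ ω, (m ω + δ ω) ^ 4 ≤ m ω ^ 4 + 4 * (m ω ^ 3 * δ ω ^ 1) + 8 * (m ω ^ 2 * δ ω ^ 2) +
          3 * δ ω ^ 4 := fun ω => by
        nlinarith [sq_nonneg (m ω * δ ω - δ ω ^ 2)]
      have hI4 : Integrable (fun ω => m ω ^ 4 + 4 * (m ω ^ 3 * δ ω ^ 1) + 8 * (m ω ^ 2 * δ ω ^ 2) +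
          3 * δ ω ^ 4) P :=
        ((hmi.fun_add (i31.const_mul 4)).fun_add (i22.const_mul 8)).fun_add (hδi.const_mul 3)
      refine (integral_mono_of_nonneg (Eventually.of_forall fun ω => by
        simp only [Pi.zero_apply]; positivity) hI4 (Eventually.of_forall hpt)).trans ?_
      rw [integral_add ((hmi.fun_add (i31.const_mul 4)).fun_add (i22.const_mul 8)) (hδi.const_mul 3),
        integral_add (hmi.fun_add (i31.const_mul 4)) (i22.const_mul 8),
        integral_add hmi (i31.const_mul 4), integral_const_mul, integral_const_mul, integral_const_mul, e31]
      have hC40 : 0 ≤ C ^ 4 := by positivity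
      have hA : 0 ≤ b n - b 0 := sub_nonneg.2 (hb (Nat.zero_le n))
      have hrr : b (n+1) - b 0 = (b n - b 0) + r := by rw [hr]; ring
      rw [hrr]
      have k1 : 0 ≤ C ^ 4 * r ^ 2 := by positivity
      have k2 : 0 ≤ gaussM4 * (C ^ 4 * ((b n - b 0) * r)) := by positivity
      nlinarith
end

/-! ### Conditioning on the driving process -/

/-- The value at time `a` of the path `y`, as a limit along a countable set of times. Unlike plain
evaluation, it depends measurably on the pair `(a, y)`. -/
def ev {E : Type} [TopologicalSpace E] [Nonempty E] (p : ℝ × (ℝ → E)) : E :=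
  limUnder atTop fun m : ℕ => p.2 ((⌊p.1 * (m:ℝ)⌋₊ : ℝ) / m)

/-- The path of a process. -/
def path {E : Type} (w : ℝ → Ω → E) (ω : Ω) : ℝ → E := fun t => w t ω

lemma measurable_path {E : Type} [MeasurableSpace E] {w : ℝ → Ω → E} (hw : ∀ t, Measurable (w t)) :
    Measurable (path w) := measurable_pi_lambda _ hw

section
variable {E : Type} [NormedAddCommGroup E] [InnerProductSpace ℝ E]
    [MeasurableSpace E] [BorelSpace E] [SecondCountableTopology E] [CompleteSpace E]

lemma measurable_ev : Measurable (ev : ℝ × (ℝ → E) → E) := by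
  have h : ∀ m : ℕ, StronglyMeasurable fun p : ℝ × (ℝ → E) => p.2 ((⌊p.1 * (m:ℝ)⌋₊ : ℝ) / m) := by
    intro m
    have h1 : Measurable fun r : ℕ × (ℝ → E) => r.2 ((r.1 : ℝ) / m) :=
      measurable_from_prod_countable_right fun k =>
        (measurable_pi_apply (X := fun _ : ℝ => E) ((k:ℝ)/m) : Measurable fun y : ℝ → E => y ((k:ℝ)/m))
    have h2 : Measurable fun p : ℝ × (ℝ → E) => (⌊p.1 * (m:ℝ)⌋₊, p.2) :=
      (Nat.measurable_floor.comp (measurable_fst.mul_const _)).prodMk measurable_snd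
    exact (h1.comp h2).stronglyMeasurable
  exact (StronglyMeasurable.limUnder h).measurable

lemma ev_eq {y : ℝ → E} (hy : Continuous y) {a : ℝ} (ha : 0 ≤ a) : ev (a, y) = y a := by
  have h1 : Tendsto (fun m : ℕ => (⌊a * (m:ℝ)⌋₊ : ℝ) / m) atTop (nhds a) :=
    (tendsto_nat_floor_mul_div_atTop ha).comp tendsto_natCast_atTop_atTop
  exact ((hy.tendsto a).comp h1).limUnder_eq

/-- A random variable that is measurable for `M_t` is a function of the two paths whose section,
for a given path of `w`, only depends on the path of `w̃` up to the (now deterministic)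
time `η_t`. -/
lemma exists_section {w wt : ℝ → Ω → E} {η : ℝ → Ω → ℝ} {t : ℝ} (hη : Measurable[natFilt w t] (η t))
    {x : Ω → E} (hx : Measurable[MFilt w wt η t] x) :
    ∃ xh : (ℝ → E) × (ℝ → E) → E, Measurable xh ∧ (∀ ω, xh (path w ω, path wt ω) = x ω) ∧
      ∀ ω₁, Measurable[natFilt wt (η t ω₁)] fun ω₂ => xh (path w ω₁, path wt ω₂) := by
  obtain ⟨ηh, hηh, hηe⟩ := Measurable.exists_eq_measurable_comp (f := path w) (g := η t)
    (hη.mono (natFilt_le_path w t) le_rfl)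
  set w1 : ℝ → (ℝ → E) × (ℝ → E) → E := fun s p => p.1 s
  set w2 : ℝ → (ℝ → E) × (ℝ → E) → E := fun s p => p.2 s
  set η' : ℝ → (ℝ → E) × (ℝ → E) → ℝ := fun _ p => ηh p.1
  have hw1 : ∀ s, Measurable (w1 s) := fun s => (measurable_pi_apply s).comp measurable_fst
  have hw2 : ∀ s, Measurable (w2 s) := fun s => (measurable_pi_apply s).comp measurable_snd
  have hle : MFilt w1 w2 η' t ≤ (inferInstance : MeasurableSpace ((ℝ → E) × (ℝ → E))) := by
    refine sup_le (natFilt_le hw1 t) (MeasurableSpace.generateFrom_le ?_)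
    rintro A ⟨s, -, Γ, hΓ, rfl⟩
    exact (hw2 s hΓ).inter (measurableSet_le measurable_const (hηh.comp measurable_fst))
  have hcomap : MFilt w wt η t ≤
      (MFilt w1 w2 η' t).comap fun ω => (path w ω, path wt ω) := by
    refine sup_le (iSup₂_le fun u hu => ?_) (MeasurableSpace.generateFrom_le ?_)
    · have h1 : w u = w1 u ∘ fun ω => (path w ω, path wt ω) := rfl
      rw [h1, ← MeasurableSpace.comap_comp]
      exact MeasurableSpace.comap_mono
        (le_sup_of_le_left ((measurable_natFilt w1 hu.1 hu.2).comap_le))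
    · rintro A ⟨s, hs, Γ, hΓ, rfl⟩
      refine ⟨{p | w2 s p ∈ Γ ∧ s ≤ η' t p}, ?_, ?_⟩
      · exact (le_sup_right : tildeFilt w2 η' t ≤ _) _
          (MeasurableSpace.measurableSet_generateFrom ⟨s, hs, Γ, hΓ, rfl⟩)
      · ext ω
        simp only [w2, η', Set.mem_preimage, Set.mem_ofPred_eq, path, hηe, Function.comp]
  obtain ⟨xh, hxh, hxe⟩ := Measurable.exists_eq_measurable_comp
    (mY := MFilt w1 w2 η' t) (f := fun ω => (path w ω, path wt ω)) (hx.mono hcomap le_rfl)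
  refine ⟨xh, hxh.mono hle le_rfl, fun ω => (congrFun hxe ω).symm, fun ω₁ => ?_⟩
  have hsec : (MFilt w1 w2 η' t).comap (fun ω₂ => (path w ω₁, path wt ω₂)) ≤ natFilt wt (η t ω₁) := by
    rw [MeasurableSpace.comap_le_iff_le_map]
    refine sup_le (iSup₂_le fun u hu => ?_) (MeasurableSpace.generateFrom_le ?_)
    · rintro _ ⟨Γ, hΓ, rfl⟩
      exact (measurable_const : Measurable[natFilt wt (η t ω₁)] fun _ : Ω => w u ω₁) hΓ
    · rintro A ⟨s, hs, Γ, hΓ, rfl⟩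
      have he : (fun ω₂ => (path w ω₁, path wt ω₂)) ⁻¹' {p | w2 s p ∈ Γ ∧ s ≤ η' t p} =
          {ω₂ | wt s ω₂ ∈ Γ ∧ s ≤ η t ω₁} := by
        rw [hηe]
        rfl
      change MeasurableSet[natFilt wt (η t ω₁)] (_ ⁻¹' _)
      rw [he]
      by_cases h : s ≤ η t ω₁
      · have he' : {ω₂ | wt s ω₂ ∈ Γ ∧ s ≤ η t ω₁} = wt s ⁻¹' Γ := by
          ext ω₂
          simp [h]
        rw [he']
        exact measurable_natFilt wt hs h hΓ
      · simp [h]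
  exact hxh.comp (comap_measurable _ |>.mono hsec le_rfl)

lemma lintegral_paths {P : Measure Ω} [IsProbabilityMeasure P] {w wt : ℝ → Ω → E}
    (hwm : ∀ t, Measurable (w t)) (hwtm : ∀ t, Measurable (wt t)) (hind : IndepProc P w wt)
    {G : (ℝ → E) × (ℝ → E) → ENNReal} (hG : Measurable G) :
    ∫⁻ ω, G (path w ω, path wt ω) ∂P = ∫⁻ ω₁, ∫⁻ ω₂, G (path w ω₁, path wt ω₂) ∂P ∂P := by
  have h1 := measurable_path hwm
  have h2 := measurable_path hwtm
  have hl := (indepFun_iff_map_prod_eq_prod_map_map h1.aemeasurable h2.aemeasurable).1 hind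
  have := Measure.isProbabilityMeasure_map (μ := P) h2.aemeasurable
  rw [← lintegral_map (f := G) hG (h1.prodMk h2)]
  refine (congrArg (fun μ => ∫⁻ p, G p ∂μ) hl).trans ?_
  rw [lintegral_prod _ hG.aemeasurable, lintegral_map hG.lintegral_prod_right' h1]
  refine lintegral_congr fun ω => ?_
  exact lintegral_map (f := fun y => G (path w ω, y))
    (hG.comp (measurable_const.prodMk measurable_id)) h2

lemma integral_paths {P : Measure Ω} [IsProbabilityMeasure P] {w wt : ℝ → Ω → E}
    (hwm : ∀ t, Measurable (w t)) (hwtm : ∀ t, Measurable (wt t)) (hind : IndepProc P w wt)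
    {G : (ℝ → E) × (ℝ → E) → ℝ} (hG : Measurable G)
    (hi : Integrable (fun ω => G (path w ω, path wt ω)) P) :
    ∫ ω, G (path w ω, path wt ω) ∂P = ∫ ω₁, ∫ ω₂, G (path w ω₁, path wt ω₂) ∂P ∂P := by
  have h1 := measurable_path hwm
  have h2 := measurable_path hwtm
  have hl := (indepFun_iff_map_prod_eq_prod_map_map h1.aemeasurable h2.aemeasurable).1 hind
  have := Measure.isProbabilityMeasure_map (μ := P) h2.aemeasurable
  have := Measure.isProbabilityMeasure_map (μ := P) h1.aemeasurable
  have hi' := (integrable_map_measure hG.aestronglyMeasurable (h1.prodMk h2).aemeasurable).2 hi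
  rw [← integral_map (f := G) (h1.prodMk h2).aemeasurable hG.aestronglyMeasurable]
  refine (congrArg (fun μ => ∫ p, G p ∂μ) hl).trans ?_
  have hi'' := hi'
  rw [show Measure.map (fun a => (path w a, path wt a)) P = _ from hl] at hi''
  rw [integral_prod _ hi'', integral_map h1.aemeasurable
    hG.stronglyMeasurable.integral_prod_right'.aestronglyMeasurable]
  refine integral_congr_ae (Eventually.of_forall fun ω => ?_)
  exact integral_map (f := fun y => G (path w ω, y)) h2.aemeasurable
    (hG.comp (measurable_const.prodMk measurable_id)).aestronglyMeasurable

/-- Riemann sums of the stochastic integral of `g (x)` against the time-changed process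
`w̃ (η)`. -/
def msum (wt : ℝ → Ω → E) (η : ℝ → Ω → ℝ) (T : ℕ → ℝ) (g : E → E) (x : ℝ → Ω → E) (n : ℕ) (ω : Ω) : ℝ :=
  ∑ k ∈ Finset.range n, ⟪wt (η (T (k+1)) ω) ω - wt (η (T k) ω) ω, g (x (T k) ω)⟫

/-- Riemann sums of the integral of `‖g (x)‖ ^ 2` against `η`. -/
def vsum (η : ℝ → Ω → ℝ) (T : ℕ → ℝ) (g : E → E) (x : ℝ → Ω → E) (n : ℕ) (ω : Ω) : ℝ :=
  ∑ k ∈ Finset.range n, ‖g (x (T k) ω)‖ ^ 2 * (η (T (k+1)) ω - η (T k) ω)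

/-- Moments of the Riemann sums `msum`, weighted by functions of the path of `w`. Given that path,
they are martingale transforms of a Wiener process at the deterministic times `η (T k)`. -/
lemma msum_moments {P : Measure Ω} [IsProbabilityMeasure P] {ν : E} {w wt : ℝ → Ω → E}
    (hwm : ∀ t, Measurable (w t)) (hwt : IsWienerIn P ν wt) (hind : IndepProc P w wt)
    {η : ℝ → Ω → ℝ} (hη : NiceEta P w η) {T : ℕ → ℝ} (hT0 : 0 ≤ T 0) (hT : Monotone T)
    {x : ℝ → Ω → E} (hx : ∀ t, 0 ≤ t → Measurable[MFilt w wt η t] (x t))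
    {g : E → E} (hg : Measurable g) (hgν : ∀ y, ⟪g y, ν⟫ = 0) {C : ℝ} (hgC : ∀ y, ‖g y‖ ≤ C) (n : ℕ) :
    AEMeasurable (msum wt η T g x n) P ∧
    (∀ H : Ω → ENNReal, Measurable[MeasurableSpace.comap (path w) inferInstance] H →
      ∫⁻ ω, H ω * ENNReal.ofReal (msum wt η T g x n ω ^ 2) ∂P =
        ∫⁻ ω, H ω * ENNReal.ofReal (vsum η T g x n ω) ∂P) ∧
    (∀ H : Ω → ENNReal, Measurable[MeasurableSpace.comap (path w) inferInstance] H →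
      ∫⁻ ω, H ω * ENNReal.ofReal (msum wt η T g x n ω ^ 4) ∂P ≤
        ∫⁻ ω, H ω * ENNReal.ofReal ((4 + 3 * gaussM4) * C ^ 4 * η (T n) ω ^ 2) ∂P) ∧
    (∀ Z : Ω → ℝ, Measurable[MeasurableSpace.comap (path w) inferInstance] Z →
      Integrable (fun ω => Z ω * msum wt η T g x n ω) P → ∫ ω, Z ω * msum wt η T g x n ω ∂P = 0) := by
  have hT' : ∀ k, 0 ≤ T k := fun k => hT0.trans (hT (Nat.zero_le k))
  have hηex : ∀ k, ∃ h : (ℝ → E) → ℝ, Measurable h ∧ η (T k) = h ∘ path w := fun k =>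
    Measurable.exists_eq_measurable_comp (f := path w)
      ((hη.adapted (T k) (hT' k)).mono (natFilt_le_path w (T k)) le_rfl)
  choose ηh hηhm hηe using hηex
  have hηe' : ∀ k ω, ηh k (path w ω) = η (T k) ω := fun k ω => (congrFun (hηe k) ω).symm
  choose xh hxhm hxe hxs using fun k =>
    exists_section (hη.adapted (T k) (hT' k)) (hx (T k) (hT' k))
  set mh : (ℝ → E) × (ℝ → E) → ℝ := fun p => ∑ k ∈ Finset.range n,
    ⟪ev (ηh (k+1) p.1, p.2) - ev (ηh k p.1, p.2), g (xh k p)⟫ with hmh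
  set vh : (ℝ → E) × (ℝ → E) → ℝ := fun p => ∑ k ∈ Finset.range n,
    ‖g (xh k p)‖ ^ 2 * (ηh (k+1) p.1 - ηh k p.1) with hvh
  have hevm : ∀ k, Measurable fun p : (ℝ → E) × (ℝ → E) => ev (ηh k p.1, p.2) := fun k =>
    measurable_ev.comp (((hηhm k).comp measurable_fst).prodMk measurable_snd)
  have hmhm : Measurable mh := Finset.measurable_fun_sum _ fun k _ =>
    ((hevm (k+1)).sub (hevm k)).inner (hg.comp (hxhm k))
  have hvhm : Measurable vh := Finset.measurable_fun_sum _ fun k _ =>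
    (((hg.comp (hxhm k)).norm).pow_const 2).mul
      (((hηhm (k+1)).comp measurable_fst).sub ((hηhm k).comp measurable_fst))
  have hη0 : ∀ᵐ ω ∂P, ∀ k, 0 ≤ η (T k) ω := by
    filter_upwards [hη.mono, hη.zero] with ω h1 h2 k
    rw [← h2]
    exact h1 (hT' k)
  have hmeq : ∀ᵐ ω ∂P, mh (path w ω, path wt ω) = msum wt η T g x n ω := by
    filter_upwards [hη0, hwt.cont] with ω h1 h2
    refine Finset.sum_congr rfl fun k _ => ?_
    have h2' : Continuous (path wt ω) := h2
    simp only
    rw [hxe, hηe', hηe', ev_eq h2' (h1 _), ev_eq h2' (h1 _)]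
    rfl
  have hveq : ∀ ω, vh (path w ω, path wt ω) = vsum η T g x n ω := fun ω => by
    refine Finset.sum_congr rfl fun k _ => ?_
    rw [hxe, hηe', hηe']
  set mo : Ω → Ω → ℝ := fun ω₁ ω₂ => ∑ k ∈ Finset.range n,
      ⟪wt (η (T (k+1)) ω₁) ω₂ - wt (η (T k) ω₁) ω₂, g (xh k (path w ω₁, path wt ω₂))⟫
  have hmeq' : ∀ᵐ ω₁ ∂P, ∀ᵐ ω₂ ∂P, mh (path w ω₁, path wt ω₂) = mo ω₁ ω₂ := by
    filter_upwards [hη0] with ω₁ h1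
    filter_upwards [hwt.cont] with ω₂ h2
    refine Finset.sum_congr rfl fun k _ => ?_
    have h2' : Continuous (path wt ω₂) := h2
    simp only
    rw [hηe', hηe', ev_eq h2' (h1 _), ev_eq h2' (h1 _)]
    rfl
  have hsec : ∀ᵐ ω₁ ∂P, MemLp (mo ω₁) 4 P ∧ ∫ ω₂, mo ω₁ ω₂ ∂P = 0 ∧
      ∫ ω₂, mo ω₁ ω₂ ^ 2 ∂P = ∫ ω₂, (∑ k ∈ Finset.range n,
        ‖g (xh k (path w ω₁, path wt ω₂))‖ ^ 2 * (η (T (k+1)) ω₁ - η (T k) ω₁)) ∂P ∧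
      ∫ ω₂, mo ω₁ ω₂ ^ 4 ∂P ≤ (4 + 3 * gaussM4) * C ^ 4 * (η (T n) ω₁ - η (T 0) ω₁) ^ 2 := by
    filter_upwards [hη0, hη.mono] with ω₁ h1 h2
    exact mart_moments hwt (b := fun k => η (T k) ω₁) (h1 0) (fun i j hij => h2 (hT hij))
      (v := fun k ω₂ => g (xh k (path w ω₁, path wt ω₂))) (fun k => hg.comp (hxs k ω₁))
      (fun k ω => hgν _) (fun k ω => hgC _) n
  have hHex : ∀ H : Ω → ENNReal, Measurable[MeasurableSpace.comap (path w) inferInstance] H →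
      ∃ Hh : (ℝ → E) → ENNReal, Measurable Hh ∧ ∀ ω, H ω = Hh (path w ω) := fun H hH => by
    obtain ⟨Hh, h1, h2⟩ := Measurable.exists_eq_measurable_comp (f := path w) hH
    exact ⟨Hh, h1, congrFun h2⟩
  have hpm := measurable_path hwm
  have hpt := measurable_path hwt.meas
  have hvsm : ∀ ω₁, Measurable fun ω₂ => vh (path w ω₁, path wt ω₂) := fun ω₁ =>
    hvhm.comp (measurable_const.prodMk hpt)
  have hsm : ∀ ω₁, Measurable fun ω₂ => mh (path w ω₁, path wt ω₂) := fun ω₁ =>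
    hmhm.comp (measurable_const.prodMk hpt)
  refine ⟨⟨fun ω => mh (path w ω, path wt ω), hmhm.comp (hpm.prodMk hpt), ?_⟩, ?_, ?_, ?_⟩
  · filter_upwards [hmeq] with ω h using h.symm
  · intro H hH
    obtain ⟨Hh, hHm, hHe⟩ := hHex H hH
    have e1 : ∫⁻ ω, H ω * ENNReal.ofReal (msum wt η T g x n ω ^ 2) ∂P =
        ∫⁻ ω, Hh (path w ω) * ENNReal.ofReal (mh (path w ω, path wt ω) ^ 2) ∂P :=
      lintegral_congr_ae (by filter_upwards [hmeq] with ω h; rw [h, hHe])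
    have e2 : ∫⁻ ω, H ω * ENNReal.ofReal (vsum η T g x n ω) ∂P =
        ∫⁻ ω, Hh (path w ω) * ENNReal.ofReal (vh (path w ω, path wt ω)) ∂P :=
      lintegral_congr fun ω => by rw [hveq, hHe]
    rw [e1, e2, lintegral_paths hwm hwt.meas hind
      (G := fun p => Hh p.1 * ENNReal.ofReal (mh p ^ 2))
      ((hHm.comp measurable_fst).mul (hmhm.pow_const 2).ennreal_ofReal),
      lintegral_paths hwm hwt.meas hind (G := fun p => Hh p.1 * ENNReal.ofReal (vh p))
      ((hHm.comp measurable_fst).mul hvhm.ennreal_ofReal)]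
    refine lintegral_congr_ae ?_
    filter_upwards [hsec, hmeq', hη.mono] with ω₁ h he hmono
    obtain ⟨hL, -, h2, -⟩ := h
    rw [lintegral_const_mul _ ((hsm ω₁).pow_const 2).ennreal_ofReal, lintegral_const_mul _
      (hvsm ω₁).ennreal_ofReal]
    congr 1
    have hL2 := (hL.mono_exponent (p := 2) (by norm_num)).integrable_sq
    calc ∫⁻ ω₂, ENNReal.ofReal (mh (path w ω₁, path wt ω₂) ^ 2) ∂P
        = ∫⁻ ω₂, ENNReal.ofReal (mo ω₁ ω₂ ^ 2) ∂P :=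
          lintegral_congr_ae (by filter_upwards [he] with ω h; rw [h])
      _ = ENNReal.ofReal (∫ ω₂, vh (path w ω₁, path wt ω₂) ∂P) := by
          rw [← ofReal_integral_eq_lintegral_ofReal hL2
            (Eventually.of_forall fun _ => by simp only [Pi.zero_apply]; positivity), h2]
          simp only [hvh, hηe']
      _ = _ := by
          have hinc : ∀ k, 0 ≤ η (T (k+1)) ω₁ - η (T k) ω₁ := fun k =>
            sub_nonneg.2 (hmono (hT (Nat.le_succ k)))
          have hv0 : ∀ ω₂, 0 ≤ vh (path w ω₁, path wt ω₂) := fun ω₂ => by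
            simp only [hvh, hηe']
            exact Finset.sum_nonneg fun k _ => mul_nonneg (by positivity) (hinc k)
          refine ofReal_integral_eq_lintegral_ofReal ?_ (Eventually.of_forall hv0)
          refine Integrable.of_bound (C := ∑ k ∈ Finset.range n, C ^ 2 * (η (T (k+1)) ω₁ - η (T k) ω₁))
            (hvsm ω₁).aestronglyMeasurable
            (Eventually.of_forall fun ω₂ => ?_)
          rw [Real.norm_of_nonneg (hv0 ω₂)]
          simp only [hvh, hηe']
          exact Finset.sum_le_sum fun k _ => mul_le_mul_of_nonneg_right
            (pow_le_pow_left₀ (norm_nonneg _) (hgC _) 2) (hinc k)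
  · intro H hH
    obtain ⟨Hh, hHm, hHe⟩ := hHex H hH
    have e1 : ∫⁻ ω, H ω * ENNReal.ofReal (msum wt η T g x n ω ^ 4) ∂P =
        ∫⁻ ω, Hh (path w ω) * ENNReal.ofReal (mh (path w ω, path wt ω) ^ 4) ∂P :=
      lintegral_congr_ae (by filter_upwards [hmeq] with ω h; rw [h, hHe])
    rw [e1, lintegral_paths hwm hwt.meas hind
      (G := fun p => Hh p.1 * ENNReal.ofReal (mh p ^ 4))
      ((hHm.comp measurable_fst).mul (hmhm.pow_const 4).ennreal_ofReal)]
    refine lintegral_mono_ae ?_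
    filter_upwards [hsec, hmeq', hη0, hη.mono] with ω₁ h he h0 hmono
    obtain ⟨hL, -, -, h4⟩ := h
    rw [lintegral_const_mul _ ((hsm ω₁).pow_const 4).ennreal_ofReal, hHe]
    refine mul_le_mul_right ?_ _
    calc ∫⁻ ω₂, ENNReal.ofReal (mh (path w ω₁, path wt ω₂) ^ 4) ∂P
        = ∫⁻ ω₂, ENNReal.ofReal (mo ω₁ ω₂ ^ 4) ∂P :=
          lintegral_congr_ae (by filter_upwards [he] with ω h; rw [h])
      _ ≤ _ := by
          rw [← ofReal_integral_eq_lintegral_ofReal ((memLp_four_iff hL.1).1 hL)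
            (Eventually.of_forall fun _ => by simp only [Pi.zero_apply]; positivity)]
          refine ENNReal.ofReal_le_ofReal (h4.trans ?_)
          have := gaussM4_nonneg
          have := hmono (hT (Nat.zero_le n))
          have := h0 0
          gcongr; simp_all
  · intro Z hZ hi
    obtain ⟨Zh, hZm, hZe⟩ := Measurable.exists_eq_measurable_comp (f := path w) hZ
    have e0 : (fun ω => Z ω * msum wt η T g x n ω) =ᵐ[P]
        fun ω => Zh (path w ω) * mh (path w ω, path wt ω) := by
      filter_upwards [hmeq] with ω h
      rw [h, hZe]
      rfl
    rw [integral_congr_ae e0, integral_paths hwm hwt.meas hind (G := fun p => Zh p.1 * mh p)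
      ((hZm.comp measurable_fst).mul hmhm) (hi.congr e0)]
    refine integral_eq_zero_of_ae ?_
    filter_upwards [hsec, hmeq'] with ω₁ h he
    obtain ⟨-, h1, -, -⟩ := h
    simp only [Pi.zero_apply]
    rw [integral_const_mul, integral_congr_ae he, h1, mul_zero]
end

/-! ### Moments of the solution started at a fixed point -/

/-- The standing assumptions on a solution started at a fixed point `z`. -/
structure SolData {E : Type} [NormedAddCommGroup E] [InnerProductSpace ℝ E] [MeasurableSpace E]
    [BorelSpace E] (P : Measure Ω) (ν : E) (q K : ℝ) (α : E → E) (βt : E → E →L[ℝ] E)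
    (w wt : ℝ → Ω → E) (z : E) (x : ℝ → Ω → E) (η : ℝ → Ω → ℝ) : Prop where
  hν : ‖ν‖ = 1
  hq : q ∈ Set.Icc (-1 : ℝ) 1
  hβS : ∀ v u, ⟪βt v u, ν⟫ = 0
  hK : 0 < K
  hbd : ∀ v, ⟪v, ν⟫ = 0 → ‖α v‖ + ‖βt v‖ ≤ K
  hlip : ∀ v v', ⟪v, ν⟫ = 0 → ⟪v', ν⟫ = 0 →
    ‖α v - α v'‖ ^ 2 + ‖βt v - βt v'‖ ^ 2 ≤ K * ‖v - v'‖ ^ 2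
  hw : IsWiener P w
  hwt : IsWienerIn P ν wt
  hind : IndepProc P w wt
  hskew : IsSkewLT P q (fun t ω => ⟪w t ω, ν⟫) ⟪z, ν⟫ (fun t ω => ⟪x t ω, ν⟫) η
  hsol : SolvesFrom P (MFilt w wt η) ν q α βt w η (fun u ω => wt (η u ω) ω) 0 (fun _ => z) x
  hsym : ∀ v a b, ⟪βt v a, b⟫ = ⟪a, βt v b⟫

section
variable {E : Type} [NormedAddCommGroup E] [InnerProductSpace ℝ E]

lemma inner_projS {ν : E} (hν : ‖ν‖ = 1) (y : E) : ⟪projS ν y, ν⟫ = 0 := by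
  simp [projS, inner_sub_left, inner_smul_left, hν]

lemma norm_projS_sub_le {ν : E} (hν : ‖ν‖ = 1) (y y' : E) : ‖projS ν y - projS ν y'‖ ≤ ‖y - y'‖ := by
  have h : projS ν y - projS ν y' = (y - y') - ⟪y - y', ν⟫ • ν := by
    simp only [projS, inner_sub_left]
    module
  rw [h]
  refine (sq_le_sq₀ (norm_nonneg _) (norm_nonneg _)).1 ?_
  rw [norm_sub_sq_real, norm_smul, hν, inner_smul_right, Real.norm_eq_abs, mul_one, sq_abs]
  nlinarith [sq_nonneg ⟪y - y', ν⟫]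

variable [MeasurableSpace E] [BorelSpace E] [SecondCountableTopology E] [CompleteSpace E]
variable {P : Measure Ω} [IsProbabilityMeasure P] {ν : E} {q K : ℝ} {α : E → E}
  {βt : E → E →L[ℝ] E} {w wt : ℝ → Ω → E} {z : E} {x : ℝ → Ω → E} {η : ℝ → Ω → ℝ}

/-- The coefficient which multiplies the increments of `w̃` in the component of the solution along
`θ`. -/
def gco (ν : E) (βt : E → E →L[ℝ] E) (θ y : E) : E := βt (projS ν y) θ

/-- Riemann sums of the component along `θ` of the local time drift. -/
def asum (ν : E) (q : ℝ) (α : E → E) (θ : E) (η : ℝ → Ω → ℝ) (T : ℕ → ℝ) (x : ℝ → Ω → E) (n : ℕ)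
    (ω : Ω) : ℝ :=
  ∑ k ∈ Finset.range n, (η (T (k+1)) ω - η (T k) ω) * ⟪q • ν + α (projS ν (x (T k) ω)), θ⟫

/-- The component along `θ` of the Wiener noise accumulated up to time `t`. -/
def wsum (w : ℝ → Ω → E) (θ : E) (t : ℝ) (ω : Ω) : ℝ := ⟪w t ω - w 0 ω, θ⟫

lemma SolData.skew (S : SolData P ν q K α βt w wt z x η) :
    SkewData P q ⟪z, ν⟫ (natFilt w) (fun t ω => ⟪w t ω, ν⟫) (fun t ω => ⟪x t ω, ν⟫) η :=
  skewData_of S.hν S.hq S.hw S.hskew S.hsol.init S.hsol.cont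

lemma SolData.nice (S : SolData P ν q K α βt w wt z x η) : NiceEta P w η :=
  ⟨S.skew.measη, S.hskew.cont, S.hskew.mono, S.hskew.zero⟩

lemma SolData.norm_gco (S : SolData P ν q K α βt w wt z x η) (θ y : E) :
    ‖gco ν βt θ y‖ ≤ K * ‖θ‖ := by
  have h := S.hbd _ (inner_projS S.hν y)
  exact (ContinuousLinearMap.le_opNorm _ _).trans (mul_le_mul_of_nonneg_right
    (by linarith [norm_nonneg (α (projS ν y))]) (norm_nonneg _))

lemma SolData.gco_perp (S : SolData P ν q K α βt w wt z x η) (θ y : E) :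
    ⟪gco ν βt θ y, ν⟫ = 0 := S.hβS _ _

lemma SolData.lip (S : SolData P ν q K α βt w wt z x η) (y y' : E) :
    ‖α (projS ν y) - α (projS ν y')‖ ≤ √K * ‖y - y'‖ ∧
    ‖βt (projS ν y) - βt (projS ν y')‖ ≤ √K * ‖y - y'‖ := by
  have h := S.hlip _ _ (inner_projS S.hν y) (inner_projS S.hν y')
  have h2 : K * ‖projS ν y - projS ν y'‖ ^ 2 ≤ (√K * ‖y - y'‖) ^ 2 := by
    rw [mul_pow, Real.sq_sqrt S.hK.le]
    have := norm_projS_sub_le S.hν y y'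
    have := S.hK.le
    gcongr
  constructor <;> refine (sq_le_sq₀ (norm_nonneg _) (by positivity)).1 ?_ <;>
    nlinarith [sq_nonneg ‖α (projS ν y) - α (projS ν y')‖,
      sq_nonneg ‖βt (projS ν y) - βt (projS ν y')‖]

lemma SolData.gco_lip (S : SolData P ν q K α βt w wt z x η) (θ y y' : E) :
    ‖gco ν βt θ y - gco ν βt θ y'‖ ≤ √K * ‖θ‖ * ‖y - y'‖ := by
  have h := (S.lip y y').2
  calc ‖gco ν βt θ y - gco ν βt θ y'‖ = ‖(βt (projS ν y) - βt (projS ν y')) θ‖ := rfl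
    _ ≤ ‖βt (projS ν y) - βt (projS ν y')‖ * ‖θ‖ := ContinuousLinearMap.le_opNorm _ _
    _ ≤ √K * ‖y - y'‖ * ‖θ‖ := by gcongr
    _ = _ := by ring

lemma continuous_of_norm_sub_le {f : E → E} {C : ℝ} (h : ∀ y y', ‖f y - f y'‖ ≤ C * ‖y - y'‖) :
    Continuous f := by
  refine (LipschitzWith.of_dist_le_mul (K := C.toNNReal) fun y y' => ?_).continuous
  rw [dist_eq_norm, dist_eq_norm]
  exact (h y y').trans (mul_le_mul_of_nonneg_right (Real.le_coe_toNNReal C) (norm_nonneg _))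

lemma SolData.continuous_gco (S : SolData P ν q K α βt w wt z x η) (θ : E) :
    Continuous (gco ν βt θ) := continuous_of_norm_sub_le (S.gco_lip θ)

lemma SolData.gco_sq_lip (S : SolData P ν q K α βt w wt z x η) (θ y y' : E) :
    |‖gco ν βt θ y‖ ^ 2 - ‖gco ν βt θ y'‖ ^ 2| ≤ 2 * K * √K * ‖θ‖ ^ 2 * ‖y - y'‖ := by
  have h := S.gco_lip θ y y'
  have h1 := S.norm_gco θ y
  have h2 := S.norm_gco θ y'
  have h3 := abs_norm_sub_norm_le (gco ν βt θ y) (gco ν βt θ y')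
  have hK := S.hK
  rw [sq_sub_sq, abs_mul, abs_of_nonneg (by positivity)]
  calc (‖gco ν βt θ y‖ + ‖gco ν βt θ y'‖) * |‖gco ν βt θ y‖ - ‖gco ν βt θ y'‖|
      ≤ (K * ‖θ‖ + K * ‖θ‖) * (√K * ‖θ‖ * ‖y - y'‖) := by gcongr; exact h3.trans h
    _ = _ := by ring

lemma SolData.gco_sq_bdd (S : SolData P ν q K α βt w wt z x η) (θ y y' : E) :
    |‖gco ν βt θ y‖ ^ 2 - ‖gco ν βt θ y'‖ ^ 2| ≤ K ^ 2 * ‖θ‖ ^ 2 := by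
  have h1 := pow_le_pow_left₀ (norm_nonneg _) (S.norm_gco θ y) 2
  have h2 := pow_le_pow_left₀ (norm_nonneg _) (S.norm_gco θ y') 2
  rw [mul_pow] at h1 h2
  rw [abs_le]
  constructor <;> nlinarith [sq_nonneg ‖gco ν βt θ y‖, sq_nonneg ‖gco ν βt θ y'‖]

lemma SolData.measurable_x (S : SolData P ν q K α βt w wt z x η) {t : ℝ} (ht : 0 ≤ t) :
    Measurable (x t) := by
  refine (S.hsol.adapted t ht).mono (sup_le (natFilt_le S.hw.meas t)
    (MeasurableSpace.generateFrom_le ?_)) le_rfl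
  rintro A ⟨s, -, Γ, hΓ, rfl⟩
  exact (S.hwt.meas s hΓ).inter (measurableSet_le measurable_const (S.skew.mη ht))

lemma SolData.measurable_asum (S : SolData P ν q K α βt w wt z x η) (θ : E) {T : ℕ → ℝ}
    (hT : ∀ k, 0 ≤ T k) (n : ℕ) : Measurable (asum ν q α θ η T x n) := by
  have hα : Measurable fun y => α (projS ν y) :=
    (continuous_of_norm_sub_le fun y y' => (S.lip y y').1).measurable
  exact Finset.measurable_fun_sum _ fun k _ => ((S.skew.mη (hT _)).sub (S.skew.mη (hT _))).mul
    (((hα.comp (S.measurable_x (hT k))).const_add _).inner measurable_const)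

lemma SolData.asum_le (S : SolData P ν q K α βt w wt z x η) (θ : E) :
    ∀ᵐ ω ∂P, ∀ t, 0 ≤ t → ∀ n, |asum ν q α θ η (pt 0 t n) x n ω| ≤ (1 + K) * ‖θ‖ * η t ω := by
  filter_upwards [S.hskew.mono, S.hskew.zero] with ω hm h0 t ht n
  have hb : ∀ y, |⟪q • ν + α (projS ν y), θ⟫| ≤ (1 + K) * ‖θ‖ := fun y => by
    refine (abs_real_inner_le_norm _ _).trans (mul_le_mul_of_nonneg_right ?_ (norm_nonneg _))
    refine (norm_add_le _ _).trans (add_le_add ?_ ?_)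
    · rw [norm_smul, S.hν, mul_one]
      exact abs_le.2 S.hq
    · linarith [S.hbd _ (inner_projS S.hν y), norm_nonneg (βt (projS ν y))]
  have hinc : ∀ k, 0 ≤ η (pt 0 t n (k+1)) ω - η (pt 0 t n k) ω := fun k =>
    sub_nonneg.2 (hm (pt_mono ht n (Nat.le_succ k)))
  have hK := S.hK
  calc |asum ν q α θ η (pt 0 t n) x n ω|
      ≤ ∑ k ∈ Finset.range n, (η (pt 0 t n (k+1)) ω - η (pt 0 t n k) ω) * ((1 + K) * ‖θ‖) := by
        refine (Finset.abs_sum_le_sum_abs _ _).trans (Finset.sum_le_sum fun k _ => ?_)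
        rw [abs_mul, abs_of_nonneg (hinc k)]
        exact mul_le_mul_of_nonneg_left (hb _) (hinc k)
    _ = (η (pt 0 t n n) ω - η (pt 0 t n 0) ω) * ((1 + K) * ‖θ‖) := by
        rw [← Finset.sum_mul, Finset.sum_range_sub (fun k => η (pt 0 t n k) ω)]
    _ ≤ (1 + K) * ‖θ‖ * η t ω := by
        rw [mul_comm, pt_zero, h0, sub_zero]
        exact mul_le_mul_of_nonneg_left (hm (pt_mem ht le_rfl).2) (by positivity)

lemma wsum_moments (hw : IsWiener P w) (θ : E) {t : ℝ} (ht : 0 ≤ t) :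
    MemLp (wsum w θ t) 4 P ∧ ∫ ω, wsum w θ t ω ∂P = 0 ∧ ∫ ω, wsum w θ t ω ^ 2 ∂P = ‖θ‖ ^ 2 * t ∧
      ∫ ω, wsum w θ t ω ^ 4 ∂P = gaussM4 * (‖θ‖ ^ 4 * t ^ 2) :=
  inc_moments (ν := 0) ht (fun θ hθ _ => by simpa using hw.incr_law θ hθ 0 t le_rfl ht)
    ((hw.meas t).sub (hw.meas 0)) (by simp)

/-- Along a subsequence of partitions, the Riemann sums converge to the solution almost surely. The
symmetry of the coefficients moves them from the noise to `θ`. -/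
lemma SolData.approx (S : SolData P ν q K α βt w wt z x η) {t : ℝ} (ht : 0 ≤ t) :
    ∃ ns : ℕ → ℕ, (∀ i, ns i ≠ 0) ∧ ∀ θ, ∀ᵐ ω ∂P, Tendsto (fun i =>
      asum ν q α θ η (pt 0 t (ns i)) x (ns i) ω + msum wt η (pt 0 t (ns i)) (gco ν βt θ) x (ns i) ω +
        wsum w θ t ω) atTop (nhds ⟪x t ω - z, θ⟫) := by
  obtain ⟨A, M, hA, hM, he⟩ := S.hsol.eqn t ht
  obtain ⟨n1, hn1, h1⟩ := hA.exists_seq_tendsto_ae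
  obtain ⟨n2, hn2, h2⟩ := (hM.comp hn1.tendsto_atTop).exists_seq_tendsto_ae
  refine ⟨fun i => n1 (n2 (i+1)), fun i => ?_, fun θ => ?_⟩
  · exact ((Nat.succ_pos i).trans_le ((hn1.comp hn2).id_le (i+1))).ne'
  filter_upwards [h1, h2, he] with ω h1 h2 he
  have h3 := ((h1.comp (hn2.tendsto_atTop.comp (tendsto_add_atTop_nat 1))).add
    (h2.comp (tendsto_add_atTop_nat 1))).add_const (w t ω - w 0 ω)
  have h4 := h3.inner (𝕜 := ℝ) (tendsto_const_nhds (x := θ))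
  rw [show A ω + M ω + (w t ω - w 0 ω) = x t ω - z by rw [he]; abel] at h4
  refine h4.congr fun i => ?_
  simp only [inner_add_left, Function.comp, sum_inner, inner_smul_left, asum, msum, wsum, gco,
    ← pt_succ, S.hsym]
  rfl
end

/-- A form of Fatou's lemma. -/
lemma lintegral_le_of_tendsto {P : Measure Ω} {f : Ω → ENNReal} {F : ℕ → Ω → ENNReal}
    (hF : ∀ i, AEMeasurable (F i) P) {C : ENNReal} (hC : ∀ i, ∫⁻ ω, F i ω ∂P ≤ C)
    (h : ∀ᵐ ω ∂P, ∃ G : ℕ → ENNReal, Tendsto G atTop (nhds (f ω)) ∧ ∀ i, G i ≤ F i ω) :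
    ∫⁻ ω, f ω ∂P ≤ C := by
  calc ∫⁻ ω, f ω ∂P ≤ ∫⁻ ω, liminf (fun i => F i ω) atTop ∂P := by
        refine lintegral_mono_ae ?_
        filter_upwards [h] with ω hω
        obtain ⟨G, hG, hle⟩ := hω
        rw [← hG.liminf_eq]
        exact liminf_le_liminf (Eventually.of_forall hle)
    _ ≤ liminf (fun i => ∫⁻ ω, F i ω ∂P) atTop := lintegral_liminf_le' hF
    _ ≤ C := by
        refine (liminf_le_liminf (Eventually.of_forall hC)).trans ?_
        simp

section
variable {E : Type} [NormedAddCommGroup E] [InnerProductSpace ℝ E]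
variable [MeasurableSpace E] [BorelSpace E] [SecondCountableTopology E] [CompleteSpace E]
variable {P : Measure Ω} [IsProbabilityMeasure P] {ν : E} {q K : ℝ} {α : E → E}
  {βt : E → E →L[ℝ] E} {w wt : ℝ → Ω → E} {z : E} {x : ℝ → Ω → E} {η : ℝ → Ω → ℝ}

/-- The constant in the fourth moment estimate. -/
def c4 (K r : ℝ) : ℝ := 27 * r ^ 4 * (24 * (1 + K) ^ 4 + 2 * (4 + 3 * gaussM4) * K ^ 4 + gaussM4)

lemma SolData.c4_nonneg (S : SolData P ν q K α βt w wt z x η) {r : ℝ} : 0 ≤ c4 K r := by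
  have := S.hK
  have := gaussM4_nonneg
  unfold c4
  positivity

lemma SolData.msum_moments (S : SolData P ν q K α βt w wt z x η) (θ : E) {t : ℝ} (ht : 0 ≤ t)
    (n : ℕ) : AEMeasurable (msum wt η (pt 0 t n) (gco ν βt θ) x n) P ∧
    (∀ H : Ω → ENNReal, Measurable[MeasurableSpace.comap (path w) inferInstance] H →
      ∫⁻ ω, H ω * ENNReal.ofReal (msum wt η (pt 0 t n) (gco ν βt θ) x n ω ^ 2) ∂P =
        ∫⁻ ω, H ω * ENNReal.ofReal (vsum η (pt 0 t n) (gco ν βt θ) x n ω) ∂P) ∧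
    (∀ H : Ω → ENNReal, Measurable[MeasurableSpace.comap (path w) inferInstance] H →
      ∫⁻ ω, H ω * ENNReal.ofReal (msum wt η (pt 0 t n) (gco ν βt θ) x n ω ^ 4) ∂P ≤
        ∫⁻ ω, H ω * ENNReal.ofReal ((4 + 3 * gaussM4) * (K * ‖θ‖) ^ 4 * η (pt 0 t n n) ω ^ 2) ∂P) ∧
    (∀ Z : Ω → ℝ, Measurable[MeasurableSpace.comap (path w) inferInstance] Z →
      Integrable (fun ω => Z ω * msum wt η (pt 0 t n) (gco ν βt θ) x n ω) P →
      ∫ ω, Z ω * msum wt η (pt 0 t n) (gco ν βt θ) x n ω ∂P = 0) :=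
  _root_.msum_moments S.hw.meas S.hwt S.hind S.nice (T := pt 0 t n) (pt_mem ht (Nat.zero_le n)).1
    (fun _ _ h => pt_mono ht n h) S.hsol.adapted (S.continuous_gco θ).measurable (S.gco_perp θ)
    (S.norm_gco θ) n

/-- The noise contributes `t ^ 2`; the two sums driven by the local time are bounded in terms of
moments of `η_t`, which carry the Gaussian factor because `η` vanishes until the path reaches the
hyperplane. -/
lemma SolData.fourth_approx (S : SolData P ν q K α βt w wt z x η) (θ : E) {t : ℝ} (ht : 0 ≤ t)
    {n : ℕ} (hn : n ≠ 0) : ∫⁻ ω, ENNReal.ofReal ((asum ν q α θ η (pt 0 t n) x n ω +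
      msum wt η (pt 0 t n) (gco ν βt θ) x n ω + wsum w θ t ω) ^ 4) ∂P ≤
      ENNReal.ofReal (c4 K ‖θ‖ * (t ^ 2 + t * Real.exp (-(⟪z, ν⟫ ^ 2 / (2 * t))))) := by
  set e := Real.exp (-(⟪z, ν⟫ ^ 2 / (2 * t))) with he
  have he1 : e ≤ 1 := Real.exp_le_one_iff.2 (neg_nonpos.2 (by positivity))
  have he0 : 0 < e := Real.exp_pos _
  have hK := S.hK
  have hM := gaussM4_nonneg
  have hηm := S.skew.mη ht
  obtain ⟨w1, -, -, w4⟩ := wsum_moments S.hw θ ht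
  have hwm : Measurable (wsum w θ t) := ((S.hw.meas t).sub (S.hw.meas 0)).inner measurable_const
  have hst : √t ^ 2 = t := Real.sq_sqrt ht
  have b1 : ∫⁻ ω, ENNReal.ofReal (η t ω ^ 4) ∂P ≤ ENNReal.ofReal (24 * t ^ 2 * e) := by
    refine (S.skew.moment_le ht 3).trans_eq ?_
    rw [show Nat.factorial (3+1) = 24 from rfl, show √t ^ (3+1) = (√t ^ 2) ^ 2 by ring, hst]
    norm_num [he]
  have b2 : ∫⁻ ω, ENNReal.ofReal (η t ω ^ 2) ∂P ≤ ENNReal.ofReal (2 * t * e) := by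
    refine (S.skew.moment_le ht 1).trans_eq ?_
    rw [show √t ^ (1+1) = √t ^ 2 by ring, hst]
    norm_num [he]
  have b3 : ∫⁻ ω, ENNReal.ofReal (wsum w θ t ω ^ 4) ∂P = ENNReal.ofReal (gaussM4 * (‖θ‖ ^ 4 * t ^ 2)) := by
    rw [← ofReal_integral_eq_lintegral_ofReal ((memLp_four_iff w1.1).1 w1)
      (Eventually.of_forall fun _ => by simp only [Pi.zero_apply]; positivity), w4]
  have b4 :
      ∫⁻ ω, ENNReal.ofReal (msum wt η (pt 0 t n) (gco ν βt θ) x n ω ^ 4) ∂P ≤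
        ENNReal.ofReal ((4 + 3 * gaussM4) * (K * ‖θ‖) ^ 4 * (2 * t * e)) := by
    have := (S.msum_moments θ ht n).2.2.1 (fun _ => 1) measurable_const
    simp only [one_mul, pt_self 0 t hn] at this
    refine this.trans ?_
    simp_rw [ENNReal.ofReal_mul (show 0 ≤ (4 + 3 * gaussM4) * (K * ‖θ‖) ^ 4 by positivity)]
    rw [lintegral_const_mul _ (hηm.pow_const 2).ennreal_ofReal]
    exact mul_le_mul_right b2 _
  calc _ ≤ ∫⁻ ω, (ENNReal.ofReal (27 * ((1 + K) * ‖θ‖) ^ 4) *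
    ENNReal.ofReal (η t ω ^ 4) + (ENNReal.ofReal 27 *
      ENNReal.ofReal (msum wt η (pt 0 t n) (gco ν βt θ) x n ω ^ 4) +
    ENNReal.ofReal 27 * ENNReal.ofReal (wsum w θ t ω ^ 4))) ∂P := lintegral_mono_ae ?_
    _ ≤ _ := ?_
  · filter_upwards [S.asum_le θ, S.skew.η_nonneg] with ω h2 h3
    have h3' := h3 t ht
    rw [← ENNReal.ofReal_mul (by positivity), ← ENNReal.ofReal_mul (by positivity),
      ← ENNReal.ofReal_mul (by positivity), ← ENNReal.ofReal_add (by positivity) (by positivity),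
      ← ENNReal.ofReal_add (by positivity) (by positivity)]
    refine ENNReal.ofReal_le_ofReal ?_
    have h4 := pow_le_pow_left₀ (abs_nonneg _) (h2 t ht n) 4
    rw [Even.pow_abs (by decide), mul_pow] at h4
    generalize asum ν q α θ η (pt 0 t n) x n ω = A at *
    generalize msum wt η (pt 0 t n) (gco ν βt θ) x n ω = B at *
    generalize wsum w θ t ω = D at *
    have h5 : (A + B + D) ^ 4 ≤ 27 * (A ^ 4 + B ^ 4 + D ^ 4) := by
      have e1 : (A + B + D) ^ 2 ≤ 3 * (A ^ 2 + B ^ 2 + D ^ 2) := by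
        nlinarith [sq_nonneg (A - B), sq_nonneg (A - D), sq_nonneg (B - D)]
      have e2 : (A ^ 2 + B ^ 2 + D ^ 2) ^ 2 ≤ 3 * (A ^ 4 + B ^ 4 + D ^ 4) := by
        nlinarith [sq_nonneg (A ^ 2 - B ^ 2), sq_nonneg (A ^ 2 - D ^ 2), sq_nonneg (B ^ 2 - D ^ 2)]
      calc (A + B + D) ^ 4 = ((A + B + D) ^ 2) ^ 2 := by ring
        _ ≤ (3 * (A ^ 2 + B ^ 2 + D ^ 2)) ^ 2 := pow_le_pow_left₀ (sq_nonneg _) e1 2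
        _ ≤ _ := by linarith
    linarith
  · have hm := (S.msum_moments θ ht n).1
    rw [lintegral_add_left (by fun_prop), lintegral_add_right _ (by fun_prop),
      lintegral_const_mul _ (by fun_prop), lintegral_const_mul'' _ (by fun_prop),
      lintegral_const_mul _ (by fun_prop), b3]
    calc _ ≤ ENNReal.ofReal (27 * ((1 + K) * ‖θ‖) ^ 4) * ENNReal.ofReal (24 * t ^ 2 * e) +
          (ENNReal.ofReal 27 * ENNReal.ofReal ((4 + 3 * gaussM4) * (K * ‖θ‖) ^ 4 * (2 * t * e)) +
            ENNReal.ofReal 27 * ENNReal.ofReal (gaussM4 * (‖θ‖ ^ 4 * t ^ 2))) := by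
          gcongr
      _ ≤ _ := by
          rw [← ENNReal.ofReal_mul (by positivity), ← ENNReal.ofReal_mul (by positivity),
            ← ENNReal.ofReal_mul (by positivity), ← ENNReal.ofReal_add (by positivity) (by positivity),
            ← ENNReal.ofReal_add (by positivity) (by positivity)]
          refine ENNReal.ofReal_le_ofReal ?_
          have h1 : t ^ 2 * e ≤ t ^ 2 + t * e := by nlinarith [mul_nonneg ht he0.le, sq_nonneg t]
          have h2 : t * e ≤ t ^ 2 + t * e := by nlinarith [sq_nonneg t]
          have h3 : t ^ 2 ≤ t ^ 2 + t * e := by nlinarith [mul_nonneg ht he0.le]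
          have k1 : 0 ≤ 27 * ‖θ‖ ^ 4 * (24 * (1 + K) ^ 4) := by positivity
          have k2 : 0 ≤ 27 * ‖θ‖ ^ 4 * (2 * (4 + 3 * gaussM4) * K ^ 4) := by positivity
          have k3 : 0 ≤ 27 * ‖θ‖ ^ 4 * gaussM4 := by positivity
          have := mul_le_mul_of_nonneg_left h1 k1
          have := mul_le_mul_of_nonneg_left h2 k2
          have := mul_le_mul_of_nonneg_left h3 k3
          unfold c4
          linarith

lemma SolData.measurable_approx (S : SolData P ν q K α βt w wt z x η) (θ : E) {t : ℝ} (ht : 0 ≤ t)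
    (n : ℕ) : AEMeasurable (fun ω => asum ν q α θ η (pt 0 t n) x n ω +
      msum wt η (pt 0 t n) (gco ν βt θ) x n ω + wsum w θ t ω) P :=
  ((S.measurable_asum θ (fun k => (pt_zero 0 t n).symm.le.trans (pt_mono ht n (Nat.zero_le k)))
    n).aemeasurable.add (S.msum_moments θ ht n).1).add
    (((S.hw.meas t).sub (S.hw.meas 0)).inner measurable_const).aemeasurable

lemma SolData.fourth_moment (S : SolData P ν q K α βt w wt z x η) (θ : E) {t : ℝ} (ht : 0 ≤ t) :
    ∫⁻ ω, ENNReal.ofReal (⟪x t ω - z, θ⟫ ^ 4) ∂P ≤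
      ENNReal.ofReal (c4 K ‖θ‖ * (t ^ 2 + t * Real.exp (-(⟪z, ν⟫ ^ 2 / (2 * t))))) := by
  obtain ⟨ns, hns, hlim⟩ := S.approx ht
  refine lintegral_le_of_tendsto (fun i => ((S.measurable_approx θ ht (ns i)).pow_const 4).ennreal_ofReal)
    (fun i => S.fourth_approx θ ht (hns i)) ?_
  filter_upwards [hlim θ] with ω h1
  exact ⟨_, (ENNReal.continuous_ofReal.tendsto _).comp (h1.pow 4), fun i => le_rfl⟩

lemma SolData.vsum_le (S : SolData P ν q K α βt w wt z x η) (θ : E) :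
    ∀ᵐ ω ∂P, ∀ t, 0 ≤ t → ∀ n, vsum η (pt 0 t n) (gco ν βt θ) x n ω ≤ (K * ‖θ‖) ^ 2 * η t ω := by
  filter_upwards [S.hskew.mono, S.hskew.zero] with ω hm h0 t ht n
  have hinc : ∀ k, 0 ≤ η (pt 0 t n (k+1)) ω - η (pt 0 t n k) ω := fun k =>
    sub_nonneg.2 (hm (pt_mono ht n (Nat.le_succ k)))
  calc vsum η (pt 0 t n) (gco ν βt θ) x n ω
      ≤ ∑ k ∈ Finset.range n, (K * ‖θ‖) ^ 2 * (η (pt 0 t n (k+1)) ω - η (pt 0 t n k) ω) :=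
        Finset.sum_le_sum fun k _ => mul_le_mul_of_nonneg_right
          (pow_le_pow_left₀ (norm_nonneg _) (S.norm_gco θ _) 2) (hinc k)
    _ = (K * ‖θ‖) ^ 2 * (η (pt 0 t n n) ω - η (pt 0 t n 0) ω) := by
        rw [← Finset.mul_sum, Finset.sum_range_sub (fun k => η (pt 0 t n k) ω)]
    _ ≤ _ := by
        rw [pt_zero, h0, sub_zero]
        exact mul_le_mul_of_nonneg_left (hm (pt_mem ht le_rfl).2) (by positivity)

/-- Second moment of the part of the solution produced by the local time, with a weight which depends
on the path of `w` only. -/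
lemma SolData.sq_weighted (S : SolData P ν q K α βt w wt z x η) (θ : E) {t : ℝ} (ht : 0 ≤ t)
    {H : Ω → ENNReal} (hH : Measurable[MeasurableSpace.comap (path w) inferInstance] H)
    (hHt : ∀ ω, H ω ≠ ⊤) :
    ∫⁻ ω, H ω * ENNReal.ofReal ((⟪x t ω - z, θ⟫ - wsum w θ t ω) ^ 2) ∂P ≤
      ∫⁻ ω, H ω * ENNReal.ofReal (2 * ((1 + K) * ‖θ‖) ^ 2 * (η t ω ^ 2 + η t ω)) ∂P := by
  obtain ⟨ns, hns, hlim⟩ := S.approx ht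
  have hK := S.hK
  have hηm := S.skew.mη ht
  have hHm : Measurable H := hH.mono (measurable_path S.hw.meas).comap_le le_rfl
  refine lintegral_le_of_tendsto (F := fun i ω => H ω * ENNReal.ofReal
    (2 * ((1 + K) * ‖θ‖) ^ 2 * η t ω ^ 2) + 2 * (H ω *
      ENNReal.ofReal (msum wt η (pt 0 t (ns i)) (gco ν βt θ) x (ns i) ω ^ 2)))
    (fun i => ?_) (fun i => ?_) ?_
  · have := (S.msum_moments θ ht (ns i)).1
    fun_prop
  · have hm := (S.msum_moments θ ht (ns i)).1
    rw [lintegral_add_left (by fun_prop), lintegral_const_mul'' _ (by fun_prop),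
      (S.msum_moments θ ht (ns i)).2.1 H hH]
    calc _ ≤ ∫⁻ ω, H ω * ENNReal.ofReal (2 * ((1 + K) * ‖θ‖) ^ 2 * η t ω ^ 2) ∂P +
          2 * ∫⁻ ω, H ω * ENNReal.ofReal (((1 + K) * ‖θ‖) ^ 2 * η t ω) ∂P := by
          gcongr 2
          refine lintegral_mono_ae ?_
          filter_upwards [S.vsum_le θ, S.skew.η_nonneg] with ω h1 h2
          gcongr
          refine (h1 t ht (ns i)).trans (mul_le_mul_of_nonneg_right ?_ (h2 t ht))
          gcongr
          linarith
      _ = _ := by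
          rw [← lintegral_const_mul _ (by fun_prop), ← lintegral_add_left (by fun_prop)]
          refine lintegral_congr_ae ?_
          filter_upwards [S.skew.η_nonneg] with ω h2
          have h2' := h2 t ht
          rw [mul_left_comm, ← mul_add, ← ENNReal.ofReal_ofNat 2, ← ENNReal.ofReal_mul (by norm_num),
            ← ENNReal.ofReal_add (by positivity) (by positivity)]
          ring_nf
  · filter_upwards [hlim θ, S.asum_le θ, S.skew.η_nonneg] with ω h1 h2 h3
    refine ⟨_, ENNReal.Tendsto.const_mul ((ENNReal.continuous_ofReal.tendsto _).comp
      ((h1.sub_const (wsum w θ t ω)).pow 2)) (Or.inr (hHt ω)), fun i => ?_⟩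
    simp only [Function.comp]
    have h3' := h3 t ht
    rw [mul_left_comm, ← mul_add, ← ENNReal.ofReal_ofNat 2, ← ENNReal.ofReal_mul (by norm_num),
            ← ENNReal.ofReal_add (by positivity) (by positivity)]
    refine mul_le_mul_right (ENNReal.ofReal_le_ofReal ?_) _
    have h4 := pow_le_pow_left₀ (abs_nonneg _) (h2 t ht (ns i)) 2
    rw [sq_abs, mul_pow] at h4
    generalize asum ν q α θ η (pt 0 t (ns i)) x (ns i) ω = A at *
    generalize msum wt η (pt 0 t (ns i)) (gco ν βt θ) x (ns i) ω = B at *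
    nlinarith [sq_nonneg (A - B)]
end

/-! ### The quadratic variation near the hyperplane -/

section
variable {E : Type} [NormedAddCommGroup E] [InnerProductSpace ℝ E]
variable [MeasurableSpace E] [BorelSpace E] [SecondCountableTopology E] [CompleteSpace E]
variable [FiniteDimensional ℝ E]
variable {P : Measure Ω} [IsProbabilityMeasure P] {ν : E} {q K : ℝ} {α : E → E}
  {βt : E → E →L[ℝ] E} {w wt : ℝ → Ω → E} {z : E} {x : ℝ → Ω → E} {η : ℝ → Ω → ℝ}

lemma SolData.sq_weighted_norm (S : SolData P ν q K α βt w wt z x η) {t : ℝ} (ht : 0 ≤ t)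
    {H : Ω → ENNReal} (hH : Measurable[MeasurableSpace.comap (path w) inferInstance] H)
    (hHt : ∀ ω, H ω ≠ ⊤) :
    ∫⁻ ω, H ω * ENNReal.ofReal (‖x t ω - z - (w t ω - w 0 ω)‖ ^ 2) ∂P ≤
      ∫⁻ ω, H ω * ENNReal.ofReal (2 * Module.finrank ℝ E * (1 + K) ^ 2 * (η t ω ^ 2 + η t ω)) ∂P := by
  have hHm : Measurable H := hH.mono (measurable_path S.hw.meas).comap_le le_rfl
  have hηm := S.skew.mη ht
  have hxm := S.measurable_x ht
  have hwm := S.hw.meas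
  have hK := S.hK
  set b := stdOrthonormalBasis ℝ E
  have hwm' : ∀ i, Measurable (wsum w (b i) t) := fun i =>
    ((hwm t).sub (hwm 0)).inner measurable_const
  calc _ = ∫⁻ ω, ∑ i, H ω * ENNReal.ofReal ((⟪x t ω - z, b i⟫ - wsum w (b i) t ω) ^ 2) ∂P := by
        refine lintegral_congr fun ω => ?_
        rw [← Finset.mul_sum, ← ENNReal.ofReal_sum_of_nonneg fun i _ => sq_nonneg _]
        congr 2
        rw [← b.sum_sq_norm_inner_left]
        refine Finset.sum_congr rfl fun i _ => ?_
        rw [Real.norm_eq_abs, sq_abs, inner_sub_left, wsum]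
    _ = ∑ i, ∫⁻ ω, H ω * ENNReal.ofReal ((⟪x t ω - z, b i⟫ - wsum w (b i) t ω) ^ 2) ∂P :=
        lintegral_finsetSum _ fun i _ => hHm.mul
          ((((hxm.sub_const z).inner measurable_const).sub (hwm' i)).pow_const 2).ennreal_ofReal
    _ ≤ ∑ i, ∫⁻ ω, H ω * ENNReal.ofReal (2 * ((1 + K) * ‖b i‖) ^ 2 * (η t ω ^ 2 + η t ω)) ∂P :=
        Finset.sum_le_sum fun i _ => S.sq_weighted (b i) ht hH hHt
    _ = _ := by
        simp only [b.norm_eq_one, mul_one, Finset.sum_const, Finset.card_univ, Fintype.card_fin]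
        rw [nsmul_eq_mul, ← lintegral_const_mul _ (by fun_prop)]
        refine lintegral_congr_ae ?_
        filter_upwards [S.skew.η_nonneg] with ω h
        have := h t ht
        rw [mul_left_comm, ← ENNReal.ofReal_natCast, ← ENNReal.ofReal_mul (by positivity)]
        ring_nf

/-- The constant in the estimate of `vsum`. -/
def cv (N : ℕ) (K r : ℝ) : ℝ :=
  2 * K * √K * r ^ 2 + 3 * (K ^ 2 * r ^ 2) + 16 * N * (2 * K * √K * r ^ 2) * (1 + K) ^ 2

lemma SolData.measurable_vsum (S : SolData P ν q K α βt w wt z x η) (θ : E) {t : ℝ} (ht : 0 ≤ t)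
    (n : ℕ) : Measurable (vsum η (pt 0 t n) (gco ν βt θ) x n) := by
  have hT : ∀ k, 0 ≤ pt 0 t n k := fun k =>
    (pt_zero 0 t n).symm.le.trans (pt_mono ht n (Nat.zero_le k))
  exact Finset.measurable_fun_sum _ fun k _ =>
    ((((S.continuous_gco θ).measurable.comp (S.measurable_x (hT k))).norm).pow_const 2).mul
      ((S.skew.mη (hT _)).sub (S.skew.mη (hT _)))

/-- The diffusion coefficient may be frozen at the starting point. The distance travelled is small
because of the continuity of `w` off the event `Bad`, and the second moment estimate for the part
produced by the local time. The parameter `s` stands for `t ^ (1/4)`. -/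
lemma SolData.vsum_mean (S : SolData P ν q K α βt w wt z x η) (θ : E) {t s δ : ℝ} (hs : 0 < s)
    (hs1 : s ≤ 1) (hst : s ^ 4 = t) (hδ : 0 < δ) {Bad : Set Ω} (hBm : MeasurableSet Bad)
    (hB : ∀ᵐ ω ∂P, ω ∉ Bad → ∀ u ∈ Set.Icc 0 t, ‖w u ω - w 0 ω‖ ≤ δ)
    (hBp : P Bad ≤ ENNReal.ofReal (δ ^ 2)) {n : ℕ} (hn : n ≠ 0) :
    Integrable (vsum η (pt 0 t n) (gco ν βt θ) x n) P ∧
    |∫ ω, vsum η (pt 0 t n) (gco ν βt θ) x n ω ∂P - ‖gco ν βt θ z‖ ^ 2 * meanLT t ⟪z, ν⟫| ≤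
      cv (Module.finrank ℝ E) K ‖θ‖ * (s + δ) * (s ^ 2 * Real.exp (-(⟪z, ν⟫ ^ 2 / (4 * t)))) := by
  have ht : 0 ≤ t := hst ▸ by positivity
  have hK := S.hK
  have hsq : √t = s ^ 2 := by rw [← hst, show s ^ 4 = (s ^ 2) ^ 2 by ring, Real.sqrt_sq (by positivity)]
  set N := Module.finrank ℝ E
  set e := Real.exp (-(⟪z, ν⟫ ^ 2 / (4 * t))) with he
  have he0 : 0 < e := Real.exp_pos _
  have he1 : e ≤ 1 := Real.exp_le_one_iff.2 (neg_nonpos.2 (by positivity))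
  have he2 : Real.exp (-(⟪z, ν⟫ ^ 2 / (2 * t))) = e ^ 2 := by
    rw [he, ← Real.exp_nat_mul]
    congr 1
    push_cast
    have : t ≠ 0 := hst ▸ by positivity
    field_simp
    ring
  set L : ℝ := 2 * K * √K * ‖θ‖ ^ 2 with hL
  set B : ℝ := K ^ 2 * ‖θ‖ ^ 2 with hBdef
  have hL0 : 0 ≤ L := by positivity
  have hB0 : 0 ≤ B := by positivity
  obtain ⟨hηi, hηm⟩ := S.skew.mean_eta ht
  have hT : ∀ k, 0 ≤ pt 0 t n k := fun k =>
    (pt_zero 0 t n).symm.le.trans (pt_mono ht n (Nat.zero_le k))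
  have hη := fun k => S.skew.mη (hT k)
  have hηt := S.skew.mη ht
  have hvm := S.measurable_vsum θ ht n
  set v := vsum η (pt 0 t n) (gco ν βt θ) x n with hv
  set U : ℕ → Ω → ℝ := fun k ω => ‖x (pt 0 t n k) ω - z - (w (pt 0 t n k) ω - w 0 ω)‖ ^ 2 with hU
  set Δ : ℕ → Ω → ℝ := fun k ω => η (pt 0 t n (k+1)) ω - η (pt 0 t n k) ω with hΔ
  have hUm : ∀ k, Measurable (U k) := fun k => (((S.measurable_x (hT k)).sub_const z).sub
    ((S.hw.meas _).sub (S.hw.meas _))).norm.pow_const 2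
  have hΔm : ∀ k, Measurable (Δ k) := fun k => (hη (k+1)).sub (hη k)
  -- the bound of the error at a given `ω`
  have hpt : ∀ᵐ ω ∂P, |v ω - ‖gco ν βt θ z‖ ^ 2 * η t ω| ≤
      (L * (s + δ) * η t ω + B * (δ / (s ^ 2 * e)) * η t ω ^ 2) +
      (B * (s ^ 2 * e / δ) * Bad.indicator 1 ω + L / s * ∑ k ∈ Finset.range n, Δ k ω * U k ω) := by
    filter_upwards [S.hskew.mono, S.hskew.zero, S.skew.η_nonneg, hB] with ω hm h0 hη0 hb
    have hinc : ∀ k, 0 ≤ Δ k ω := fun k => sub_nonneg.2 (hm (pt_mono ht n (Nat.le_succ k)))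
    have htel : ∑ k ∈ Finset.range n, Δ k ω = η t ω := by
      rw [Finset.sum_range_sub (fun k => η (pt 0 t n k) ω), pt_zero, h0, sub_zero, pt_self 0 t hn]
    have hi : 0 ≤ Bad.indicator (1 : Ω → ℝ) ω := Set.indicator_nonneg (fun _ _ => zero_le_one) _
    have hterm : ∀ k ∈ Finset.range n, |‖gco ν βt θ (x (pt 0 t n k) ω)‖ ^ 2 - ‖gco ν βt θ z‖ ^ 2| ≤
        L * (s + δ) + B * Bad.indicator 1 ω + L / s * U k ω := by
      intro k hk
      have hU0 : 0 ≤ L / s * U k ω := by positivity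
      by_cases hω : ω ∈ Bad
      · rw [Set.indicator_of_mem hω]
        have := S.gco_sq_bdd θ (x (pt 0 t n k) ω) z
        have : 0 ≤ L * (s + δ) := by positivity
        simp only [Pi.one_apply]
        linarith
      · rw [Set.indicator_of_notMem hω]
        have h1 := S.gco_sq_lip θ (x (pt 0 t n k) ω) z
        have h2 := hb hω _ (pt_mem ht (Finset.mem_range.1 hk).le)
        set y := x (pt 0 t n k) ω - z - (w (pt 0 t n k) ω - w 0 ω) with hy
        have h3 : ‖x (pt 0 t n k) ω - z‖ ≤ ‖y‖ + δ := by
          have h31 : x (pt 0 t n k) ω - z = y + (w (pt 0 t n k) ω - w 0 ω) := by rw [hy]; abel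
          rw [h31]
          exact (norm_add_le _ _).trans (by linarith)
        have h4 : ‖y‖ ≤ s + ‖y‖ ^ 2 / s := by
          rw [← sub_nonneg]
          have : s + ‖y‖ ^ 2 / s - ‖y‖ = ((‖y‖ - s / 2) ^ 2 + 3 / 4 * s ^ 2) / s := by
            field_simp
            ring
          rw [this]
          positivity
        calc _ ≤ L * ‖x (pt 0 t n k) ω - z‖ := h1
          _ ≤ L * (s + ‖y‖ ^ 2 / s + δ) := by gcongr; linarith
          _ = _ := by simp only [hU, ← hy]; ring
    have hη0t := hη0 t ht
    have hyoung : η t ω * Bad.indicator 1 ω ≤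
        δ / (s ^ 2 * e) * η t ω ^ 2 + s ^ 2 * e / δ * Bad.indicator 1 ω := by
      by_cases hω : ω ∈ Bad
      · rw [Set.indicator_of_mem hω, Pi.one_apply, mul_one, mul_one, ← sub_nonneg]
        have : δ / (s ^ 2 * e) * η t ω ^ 2 + s ^ 2 * e / δ - η t ω =
            ((δ * η t ω - s ^ 2 * e / 2) ^ 2 + 3 / 4 * (s ^ 2 * e) ^ 2) / (δ * (s ^ 2 * e)) := by
          field_simp
          ring
        rw [this]
        positivity
      · rw [Set.indicator_of_notMem hω, mul_zero, mul_zero, add_zero]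
        positivity
    calc |v ω - ‖gco ν βt θ z‖ ^ 2 * η t ω|
        = |∑ k ∈ Finset.range n,
            (‖gco ν βt θ (x (pt 0 t n k) ω)‖ ^ 2 - ‖gco ν βt θ z‖ ^ 2) * Δ k ω| := by
          simp only [hv, vsum, sub_mul, Finset.sum_sub_distrib, ← Finset.mul_sum, htel]
          rfl
      _ ≤ ∑ k ∈ Finset.range n, (L * (s + δ) + B * Bad.indicator 1 ω + L / s * U k ω) * Δ k ω := by
          refine (Finset.abs_sum_le_sum_abs _ _).trans (Finset.sum_le_sum fun k hk => ?_)
          rw [abs_mul, abs_of_nonneg (hinc k)]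
          exact mul_le_mul_of_nonneg_right (hterm k hk) (hinc k)
      _ = L * (s + δ) * η t ω + B * (η t ω * Bad.indicator 1 ω) +
            L / s * ∑ k ∈ Finset.range n, Δ k ω * U k ω := by
          simp only [add_mul, Finset.sum_add_distrib, ← Finset.mul_sum, htel, mul_assoc]
          rw [Finset.sum_congr rfl fun k _ => mul_comm (U k ω) (Δ k ω)]
          ring
      _ ≤ _ := by
          have := mul_le_mul_of_nonneg_left hyoung hB0
          linarith
  have hvi : Integrable v P := by
    refine Integrable.mono' (hηi.const_mul ((K * ‖θ‖) ^ 2)) hvm.aestronglyMeasurable ?_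
    filter_upwards [S.vsum_le θ, S.hskew.mono] with ω h1 hm
    rw [Real.norm_of_nonneg]
    · exact h1 t ht n
    · exact Finset.sum_nonneg fun k _ => mul_nonneg (sq_nonneg _)
        (sub_nonneg.2 (hm (pt_mono ht n (Nat.le_succ k))))
  refine ⟨hvi, ?_⟩
  obtain ⟨i2, m2⟩ := S.skew.moment_int ht 1
  obtain ⟨-, m1⟩ := S.skew.moment_int ht 0
  have l2 := S.skew.moment_le ht 1
  have l3 := S.skew.moment_le ht 2
  rw [he2, hsq] at m1 m2 l2 l3
  norm_num [Nat.factorial] at m1 m2 l2 l3 i2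
  set c : ℝ := 2 * N * (1 + K) ^ 2 with hc
  have hc0 : 0 ≤ c := by positivity
  have hsum : ∫⁻ ω, ENNReal.ofReal (∑ k ∈ Finset.range n, Δ k ω * U k ω) ∂P ≤
      ENNReal.ofReal (8 * c * (s ^ 4 * e)) := by
    have hinc : ∀ᵐ ω ∂P, ∀ k, 0 ≤ Δ k ω := by
      filter_upwards [S.hskew.mono] with ω hm k
      exact sub_nonneg.2 (hm (pt_mono ht n (Nat.le_succ k)))
    have hHm : ∀ k, Measurable[MeasurableSpace.comap (path w) inferInstance]
        fun ω => ENNReal.ofReal (Δ k ω) := fun k =>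
      ((((S.skew.measη _ (hT (k+1))).mono (natFilt_le_path w _) le_rfl)).sub
        ((S.skew.measη _ (hT k)).mono (natFilt_le_path w _) le_rfl)).ennreal_ofReal
    calc _ = ∫⁻ ω, ∑ k ∈ Finset.range n, ENNReal.ofReal (Δ k ω) * ENNReal.ofReal (U k ω) ∂P := by
          refine lintegral_congr_ae ?_
          filter_upwards [hinc] with ω h
          rw [ENNReal.ofReal_sum_of_nonneg fun k _ => mul_nonneg (h k) (sq_nonneg _)]
          exact Finset.sum_congr rfl fun k _ => ENNReal.ofReal_mul (h k)
      _ = ∑ k ∈ Finset.range n, ∫⁻ ω, ENNReal.ofReal (Δ k ω) * ENNReal.ofReal (U k ω) ∂P :=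
          lintegral_finsetSum _ fun k _ => (hΔm k).ennreal_ofReal.mul (hUm k).ennreal_ofReal
      _ ≤ ∑ k ∈ Finset.range n, ∫⁻ ω, ENNReal.ofReal (Δ k ω) *
            ENNReal.ofReal (c * (η t ω ^ 2 + η t ω)) ∂P := by
          refine Finset.sum_le_sum fun k hk => ?_
          refine (S.sq_weighted_norm (hT k) (hHm k) fun ω => ENNReal.ofReal_ne_top).trans ?_
          refine lintegral_mono_ae ?_
          filter_upwards [S.hskew.mono, S.skew.η_nonneg] with ω hm h0
          have h1 := hm (pt_mem ht (Finset.mem_range.1 hk).le).2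
          have h2 := h0 _ (hT k)
          simp only at h1
          gcongr
      _ = ∫⁻ ω, ∑ k ∈ Finset.range n, ENNReal.ofReal (Δ k ω) *
            ENNReal.ofReal (c * (η t ω ^ 2 + η t ω)) ∂P :=
          (lintegral_finsetSum _ fun k _ => (hΔm k).ennreal_ofReal.mul (by fun_prop)).symm
      _ = ∫⁻ ω, ENNReal.ofReal c * ENNReal.ofReal (η t ω ^ 3) +
            ENNReal.ofReal c * ENNReal.ofReal (η t ω ^ 2) ∂P := by
          refine lintegral_congr_ae ?_
          filter_upwards [hinc, S.skew.η_nonneg, S.hskew.zero] with ω h1 h2 h0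
          have h2' := h2 t ht
          rw [← Finset.sum_mul, ← ENNReal.ofReal_sum_of_nonneg fun k _ => h1 k,
            Finset.sum_range_sub (fun k => η (pt 0 t n k) ω), pt_zero, h0, sub_zero, pt_self 0 t hn,
            ← ENNReal.ofReal_mul h2', ← ENNReal.ofReal_mul hc0, ← ENNReal.ofReal_mul hc0,
            ← ENNReal.ofReal_add (by positivity) (by positivity)]
          ring_nf
      _ ≤ ENNReal.ofReal c * ENNReal.ofReal (6 * (s ^ 2) ^ 3 * e ^ 2) +
            ENNReal.ofReal c * ENNReal.ofReal (2 * (s ^ 2) ^ 2 * e ^ 2) := by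
          rw [lintegral_add_left (by fun_prop), lintegral_const_mul _ (by fun_prop),
            lintegral_const_mul _ (by fun_prop)]
          gcongr
      _ ≤ _ := by
          rw [← ENNReal.ofReal_mul hc0, ← ENNReal.ofReal_mul hc0,
            ← ENNReal.ofReal_add (by positivity) (by positivity)]
          refine ENNReal.ofReal_le_ofReal ?_
          have h1 : (s ^ 2) ^ 3 * e ^ 2 ≤ s ^ 4 * e := by
            have : s ^ 2 * e ≤ 1 := mul_le_one₀ (pow_le_one₀ hs.le hs1) he0.le he1
            calc (s ^ 2) ^ 3 * e ^ 2 = s ^ 4 * e * (s ^ 2 * e) := by ring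
              _ ≤ s ^ 4 * e * 1 := by gcongr
              _ = _ := mul_one _
          have h2 : (s ^ 2) ^ 2 * e ^ 2 ≤ s ^ 4 * e := by
            calc (s ^ 2) ^ 2 * e ^ 2 = s ^ 4 * e * e := by ring
              _ ≤ s ^ 4 * e * 1 := by gcongr
              _ = _ := mul_one _
          have h3 := mul_le_mul_of_nonneg_left h1 hc0
          have h4 := mul_le_mul_of_nonneg_left h2 hc0
          linarith
  have hmain : ∫⁻ ω, ENNReal.ofReal |v ω - ‖gco ν βt θ z‖ ^ 2 * η t ω| ∂P ≤
      ENNReal.ofReal (cv N K ‖θ‖ * (s + δ) * (s ^ 2 * e)) := by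
    have k1 : 0 ≤ L * (s + δ) := by positivity
    have k2 : 0 ≤ B * (δ / (s ^ 2 * e)) := by positivity
    have k3 : 0 ≤ B * (s ^ 2 * e / δ) := by positivity
    have k4 : 0 ≤ L / s := by positivity
    have hsm : Measurable fun ω => ∑ k ∈ Finset.range n, Δ k ω * U k ω :=
      Finset.measurable_fun_sum _ fun k _ => (hΔm k).mul (hUm k)
    have him : Measurable (Bad.indicator (1 : Ω → ENNReal)) := measurable_one.indicator hBm
    calc _ ≤ ∫⁻ ω, (ENNReal.ofReal (L * (s + δ)) * ENNReal.ofReal (η t ω) +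
            ENNReal.ofReal (B * (δ / (s ^ 2 * e))) * ENNReal.ofReal (η t ω ^ 2)) +
            (ENNReal.ofReal (B * (s ^ 2 * e / δ)) * Bad.indicator 1 ω + ENNReal.ofReal (L / s) *
              ENNReal.ofReal (∑ k ∈ Finset.range n, Δ k ω * U k ω)) ∂P := by
          refine lintegral_mono_ae ?_
          filter_upwards [hpt, S.skew.η_nonneg, S.hskew.mono] with ω h1 h2 hm
          have hi : ENNReal.ofReal (Bad.indicator 1 ω) = Bad.indicator 1 ω := by
            by_cases hω : ω ∈ Bad <;> simp [hω]
          have h2' := h2 t ht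
          have h3 : 0 ≤ Bad.indicator (1 : Ω → ℝ) ω := Set.indicator_nonneg (fun _ _ => zero_le_one) _
          have h4 : 0 ≤ ∑ k ∈ Finset.range n, Δ k ω * U k ω := Finset.sum_nonneg fun k _ =>
            mul_nonneg (sub_nonneg.2 (hm (pt_mono ht n (Nat.le_succ k)))) (sq_nonneg _)
          rw [← hi, ← ENNReal.ofReal_mul k1, ← ENNReal.ofReal_mul k2, ← ENNReal.ofReal_mul k3,
            ← ENNReal.ofReal_mul k4, ← ENNReal.ofReal_add (by positivity) (by positivity),
            ← ENNReal.ofReal_add (by positivity) (by positivity),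
            ← ENNReal.ofReal_add (by positivity) (by positivity)]
          exact ENNReal.ofReal_le_ofReal h1
      _ ≤ (ENNReal.ofReal (L * (s + δ)) * ENNReal.ofReal (s ^ 2 * e ^ 2) +
            ENNReal.ofReal (B * (δ / (s ^ 2 * e))) * ENNReal.ofReal (2 * (s ^ 2) ^ 2 * e ^ 2)) +
            (ENNReal.ofReal (B * (s ^ 2 * e / δ)) * ENNReal.ofReal (δ ^ 2) + ENNReal.ofReal (L / s) *
              ENNReal.ofReal (8 * c * (s ^ 4 * e))) := by
          rw [lintegral_add_left (by fun_prop), lintegral_add_left (by fun_prop),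
            lintegral_add_left (by fun_prop), lintegral_const_mul _ (by fun_prop),
            lintegral_const_mul _ (by fun_prop), lintegral_const_mul _ (by fun_prop),
            lintegral_const_mul _ (by fun_prop), lintegral_indicator_one hBm]
          gcongr
          have l1 := S.skew.moment_le ht 0
          rw [he2, hsq] at l1
          simpa using l1
      _ ≤ _ := by
          rw [← ENNReal.ofReal_mul k1, ← ENNReal.ofReal_mul k2, ← ENNReal.ofReal_mul k3,
            ← ENNReal.ofReal_mul k4, ← ENNReal.ofReal_add (by positivity) (by positivity),
            ← ENNReal.ofReal_add (by positivity) (by positivity),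
            ← ENNReal.ofReal_add (by positivity) (by positivity)]
          refine ENNReal.ofReal_le_ofReal ?_
          have e1 : L * (s + δ) * (s ^ 2 * e ^ 2) ≤ L * (s + δ) * (s ^ 2 * e) := by
            have : e ^ 2 ≤ e := pow_le_of_le_one he0.le he1 two_ne_zero
            gcongr
          have e2 : B * (δ / (s ^ 2 * e)) * (2 * (s ^ 2) ^ 2 * e ^ 2) = 2 * B * δ * (s ^ 2 * e) := by
            field_simp
          have e3 : B * (s ^ 2 * e / δ) * δ ^ 2 = B * δ * (s ^ 2 * e) := by
            field_simp
          have e4 : L / s * (8 * c * (s ^ 4 * e)) = 16 * N * L * (1 + K) ^ 2 * s * (s ^ 2 * e) := by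
            rw [hc]
            field_simp
            ring
          rw [e2, e3, e4, cv, ← hL, ← hBdef]
          have f1 : 0 ≤ 3 * B * s * (s ^ 2 * e) := by positivity
          have f2 : 0 ≤ 16 * N * L * (1 + K) ^ 2 * δ * (s ^ 2 * e) := by positivity
          calc _ ≤ L * (s + δ) * (s ^ 2 * e) + 2 * B * δ * (s ^ 2 * e) + (B * δ * (s ^ 2 * e) +
                16 * N * L * (1 + K) ^ 2 * s * (s ^ 2 * e)) + (3 * B * s * (s ^ 2 * e) +
                16 * N * L * (1 + K) ^ 2 * δ * (s ^ 2 * e)) := by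
                refine (add_le_add_left (add_le_add_left e1 _) _).trans ?_
                exact le_add_of_nonneg_right (add_nonneg f1 f2)
            _ = _ := by ring
  have hdi : Integrable (fun ω => |v ω - ‖gco ν βt θ z‖ ^ 2 * η t ω|) P :=
    (hvi.sub (hηi.const_mul (‖gco ν βt θ z‖ ^ 2))).abs
  calc |∫ ω, v ω ∂P - ‖gco ν βt θ z‖ ^ 2 * meanLT t ⟪z, ν⟫|
      = |∫ ω, (v ω - ‖gco ν βt θ z‖ ^ 2 * η t ω) ∂P| := by
        rw [integral_sub hvi (hηi.const_mul _), integral_const_mul, hηm]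
    _ ≤ ∫ ω, |v ω - ‖gco ν βt θ z‖ ^ 2 * η t ω| ∂P := abs_integral_le_integral_abs
    _ ≤ _ := by
        rw [← ENNReal.ofReal_le_ofReal_iff (by unfold cv; positivity),
          ofReal_integral_eq_lintegral_ofReal hdi (Eventually.of_forall fun _ => abs_nonneg _)]
        exact hmain
end

section
variable {E : Type} [NormedAddCommGroup E] [InnerProductSpace ℝ E]
variable [MeasurableSpace E] [BorelSpace E] [SecondCountableTopology E] [CompleteSpace E]
variable [FiniteDimensional ℝ E]
variable {P : Measure Ω} [IsProbabilityMeasure P] {ν : E} {q K : ℝ} {α : E → E}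
  {βt : E → E →L[ℝ] E} {w wt : ℝ → Ω → E} {z : E} {x : ℝ → Ω → E} {η : ℝ → Ω → ℝ}

/-- The constant in the estimate of the second moment. -/
def c2 (N : ℕ) (K r : ℝ) : ℝ := 6 * ((1 + K) * r) ^ 2 + (K * r) ^ 2 + r ^ 2 + cv N K r

lemma sq_expand_le {A m W s e : ℝ} (hs : 0 < s) (he : 0 < e) :
    |(A + m + W) ^ 2 - W ^ 2 - m ^ 2 - 2 * (W * m)| ≤
      (1 + 1 / s + 1 / e) * A ^ 2 + s * m ^ 2 + e * W ^ 2 := by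
  have h1 : ∀ {c : ℝ} (y : ℝ), 0 < c → |2 * (A * y)| ≤ 1 / c * A ^ 2 + c * y ^ 2 := by
    intro c y hc
    rw [abs_le, ← sub_nonneg, ← sub_nonneg (b := 2 * (A * y))]
    have e1 : 2 * (A * y) - -(1 / c * A ^ 2 + c * y ^ 2) = (A + c * y) ^ 2 / c := by
      field_simp
      ring
    have e2 : 1 / c * A ^ 2 + c * y ^ 2 - 2 * (A * y) = (A - c * y) ^ 2 / c := by
      field_simp
      ring
    rw [e1, e2]
    constructor <;> positivity
  calc _ = |A ^ 2 + 2 * (A * m) + 2 * (A * W)| := by ring_nf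
    _ ≤ |A ^ 2| + |2 * (A * m)| + |2 * (A * W)| := abs_add_three _ _ _
    _ ≤ A ^ 2 + (1 / s * A ^ 2 + s * m ^ 2) + (1 / e * A ^ 2 + e * W ^ 2) := by
        rw [abs_of_nonneg (sq_nonneg A)]
        gcongr
        · exact h1 m hs
        · exact h1 W he
    _ = _ := by ring

/-- The main contributions come from the noise and from the quadratic variation `vsum`. The part
`asum` has size `√t` on an event of probability of order `√t` only and drops out, and there is no
cross term as `msum` is centred given the path of `w`. -/
lemma SolData.sq_approx (S : SolData P ν q K α βt w wt z x η) (θ : E) {s t δ : ℝ} (hs : 0 < s)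
    (hs1 : s ≤ 1) (hst : s ^ 4 = t) (hδ : 0 < δ) {Bad : Set Ω} (hBm : MeasurableSet Bad)
    (hB : ∀ᵐ ω ∂P, ω ∉ Bad → ∀ u ∈ Set.Icc 0 t, ‖w u ω - w 0 ω‖ ≤ δ)
    (hBp : P Bad ≤ ENNReal.ofReal (δ ^ 2)) {n : ℕ} (hn : n ≠ 0) :
    |∫ ω, (asum ν q α θ η (pt 0 t n) x n ω + msum wt η (pt 0 t n) (gco ν βt θ) x n ω +
        wsum w θ t ω) ^ 2 ∂P - ‖θ‖ ^ 2 * t - ‖gco ν βt θ z‖ ^ 2 * meanLT t ⟪z, ν⟫| ≤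
      c2 (Module.finrank ℝ E) K ‖θ‖ * (s + δ) *
        (s ^ 2 * Real.exp (-(⟪z, ν⟫ ^ 2 / (4 * t)))) := by
  have ht : 0 ≤ t := hst ▸ by positivity
  have hK := S.hK
  have hsq : √t = s ^ 2 := by rw [← hst, show s ^ 4 = (s ^ 2) ^ 2 by ring, Real.sqrt_sq (by positivity)]
  obtain ⟨hvi, hv⟩ := S.vsum_mean θ hs hs1 hst hδ hBm hB hBp hn
  set e := Real.exp (-(⟪z, ν⟫ ^ 2 / (4 * t))) with he
  have he0 : 0 < e := Real.exp_pos _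
  have he1 : e ≤ 1 := Real.exp_le_one_iff.2 (neg_nonpos.2 (by positivity))
  have he2 : Real.exp (-(⟪z, ν⟫ ^ 2 / (2 * t))) = e ^ 2 := by
    rw [he, ← Real.exp_nat_mul]
    congr 1
    push_cast
    have : t ≠ 0 := hst ▸ by positivity
    field_simp
    ring
  have hee : e ^ 2 ≤ e := pow_le_of_le_one he0.le he1 two_ne_zero
  obtain ⟨hηi, hηm⟩ := S.skew.mean_eta ht
  obtain ⟨i2, m2⟩ := S.skew.moment_int ht 1
  obtain ⟨-, m1⟩ := S.skew.moment_int ht 0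
  rw [he2, hsq] at m1 m2
  norm_num [Nat.factorial] at m1 m2 i2
  obtain ⟨am, mm2, -, mm0⟩ := S.msum_moments θ ht n
  obtain ⟨w4, -, w2, -⟩ := wsum_moments S.hw θ ht
  have hW2 : MemLp (wsum w θ t) 2 P := w4.mono_exponent (by norm_num)
  have hAm : Measurable (asum ν q α θ η (pt 0 t n) x n) := S.measurable_asum θ
    (fun k => (pt_zero 0 t n).symm.le.trans (pt_mono ht n (Nat.zero_le k))) n
  have hAle : ∀ᵐ ω ∂P, asum ν q α θ η (pt 0 t n) x n ω ^ 2 ≤ ((1 + K) * ‖θ‖) ^ 2 * η t ω ^ 2 := by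
    filter_upwards [S.asum_le θ] with ω h
    rw [← mul_pow, ← sq_abs]
    exact pow_le_pow_left₀ (abs_nonneg _) (h t ht n) 2
  have hvle : ∀ᵐ ω ∂P, vsum η (pt 0 t n) (gco ν βt θ) x n ω ≤ (K * ‖θ‖) ^ 2 * η t ω := by
    filter_upwards [S.vsum_le θ] with ω h using h t ht n
  have hv0 : 0 ≤ᵐ[P] vsum η (pt 0 t n) (gco ν βt θ) x n := by
    filter_upwards [S.hskew.mono] with ω hm
    exact Finset.sum_nonneg fun k _ => mul_nonneg (sq_nonneg _)
      (sub_nonneg.2 (hm (pt_mono ht n (Nat.le_succ k))))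
  have hwpath : Measurable[MeasurableSpace.comap (path w) inferInstance] (wsum w θ t) :=
    (((measurable_natFilt w ht le_rfl).mono (natFilt_le_path w t) le_rfl).sub
      ((measurable_natFilt w le_rfl ht).mono (natFilt_le_path w t) le_rfl)).inner
      measurable_const
  set A := asum ν q α θ η (pt 0 t n) x n
  set m := msum wt η (pt 0 t n) (gco ν βt θ) x n
  set v := vsum η (pt 0 t n) (gco ν βt θ) x n
  set W := wsum w θ t
  have hAi : Integrable (fun ω => A ω ^ 2) P := by
    refine (i2.const_mul (((1 + K) * ‖θ‖) ^ 2)).mono' (hAm.pow_const 2).aestronglyMeasurable ?_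
    filter_upwards [hAle] with ω h
    rwa [Real.norm_of_nonneg (sq_nonneg _)]
  have hA2 : MemLp A 2 P := (memLp_two_iff_integrable_sq hAm.aestronglyMeasurable).2 hAi
  have hmv := mm2 (fun _ => 1) measurable_const
  simp only [one_mul] at hmv
  have hm0 : 0 ≤ᵐ[P] fun ω => m ω ^ 2 := Eventually.of_forall fun _ => sq_nonneg _
  have hmi : Integrable (fun ω => m ω ^ 2) P := by
    refine (lintegral_ofReal_ne_top_iff_integrable (am.pow_const 2).aestronglyMeasurable hm0).1 ?_
    rw [hmv]
    exact (lintegral_ofReal_ne_top_iff_integrable hvi.aestronglyMeasurable hv0).2 hvi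
  have hme : ∫ ω, m ω ^ 2 ∂P = ∫ ω, v ω ∂P := by
    rw [integral_eq_lintegral_of_nonneg_ae hm0 hmi.aestronglyMeasurable, hmv,
      integral_eq_lintegral_of_nonneg_ae hv0 hvi.aestronglyMeasurable]
  have hm2 : MemLp m 2 P := (memLp_two_iff_integrable_sq am.aestronglyMeasurable).2 hmi
  have hWm : Integrable (fun ω => W ω * m ω) P := hW2.integrable_mul hm2
  have hWi : Integrable (fun ω => W ω ^ 2) P := hW2.integrable_sq
  have hYi : Integrable (fun ω => (A ω + m ω + W ω) ^ 2) P := ((hA2.add hm2).add hW2).integrable_sq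
  have hYWi : Integrable (fun ω => (A ω + m ω + W ω) ^ 2 - W ω ^ 2) P := hYi.sub hWi
  have hYWmi : Integrable (fun ω => (A ω + m ω + W ω) ^ 2 - W ω ^ 2 - m ω ^ 2) P := hYWi.sub hmi
  have hAb : ∫ ω, A ω ^ 2 ∂P ≤ ((1 + K) * ‖θ‖) ^ 2 * (2 * (s ^ 2) ^ 2 * e ^ 2) := by
    refine (integral_mono_ae hAi (i2.const_mul _) hAle).trans ?_
    rw [integral_const_mul]
    gcongr
  have hmb : ∫ ω, m ω ^ 2 ∂P ≤ (K * ‖θ‖) ^ 2 * (s ^ 2 * e ^ 2) := by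
    rw [hme]
    refine (integral_mono_ae hvi (hηi.const_mul _) hvle).trans ?_
    rw [integral_const_mul]
    gcongr
  have hdiff : |∫ ω, (A ω + m ω + W ω) ^ 2 ∂P - ‖θ‖ ^ 2 * t - ∫ ω, v ω ∂P| ≤
      (6 * ((1 + K) * ‖θ‖) ^ 2 + (K * ‖θ‖) ^ 2 + ‖θ‖ ^ 2) * s * (s ^ 2 * e) := by
    have e1 : ∫ ω, (A ω + m ω + W ω) ^ 2 ∂P - ‖θ‖ ^ 2 * t - ∫ ω, v ω ∂P =
        ∫ ω, ((A ω + m ω + W ω) ^ 2 - W ω ^ 2 - m ω ^ 2 - 2 * (W ω * m ω)) ∂P := by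
      rw [integral_sub hYWmi (hWm.const_mul 2), integral_sub hYWi hmi,
        integral_sub hYi hWi, integral_const_mul, mm0 W hwpath hWm, w2, hme]
      ring
    rw [e1]
    refine abs_integral_le_integral_abs.trans ?_
    have hd : Integrable (fun ω => |(A ω + m ω + W ω) ^ 2 - W ω ^ 2 - m ω ^ 2 - 2 * (W ω * m ω)|) P :=
      (hYWmi.sub (hWm.const_mul 2)).abs
    have hr : Integrable (fun ω => (1 + 1 / s + 1 / e) * A ω ^ 2 + s * m ω ^ 2) P :=
      (hAi.const_mul _).add (hmi.const_mul s)
    refine (integral_mono hd (hr.add (hWi.const_mul e)) fun ω => sq_expand_le hs he0).trans ?_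
    simp only [Pi.add_apply]
    rw [integral_add hr (hWi.const_mul e),
      integral_add (hAi.const_mul _) (hmi.const_mul s), integral_const_mul, integral_const_mul,
      integral_const_mul, w2, ← hst]
    calc _ ≤ (1 + 1 / s + 1 / e) * (((1 + K) * ‖θ‖) ^ 2 * (2 * (s ^ 2) ^ 2 * e ^ 2)) +
          s * ((K * ‖θ‖) ^ 2 * (s ^ 2 * e ^ 2)) + e * (‖θ‖ ^ 2 * s ^ 4) := by gcongr
      _ = 2 * ((1 + K) * ‖θ‖) ^ 2 * ((s ^ 4 * e ^ 2) + s ^ 3 * e ^ 2 + s ^ 4 * e) +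
          (K * ‖θ‖) ^ 2 * (s ^ 3 * e ^ 2) + ‖θ‖ ^ 2 * (s ^ 4 * e) := by
            field_simp
      _ ≤ 2 * ((1 + K) * ‖θ‖) ^ 2 * ((s ^ 3 * e) + s ^ 3 * e + s ^ 3 * e) +
          (K * ‖θ‖) ^ 2 * (s ^ 3 * e) + ‖θ‖ ^ 2 * (s ^ 3 * e) := by
            have hs4 : s ^ 4 ≤ s ^ 3 := pow_le_pow_of_le_one hs.le hs1 (by norm_num)
            gcongr
      _ = _ := by ring
  have hfin : c2 (Module.finrank ℝ E) K ‖θ‖ * (s + δ) * (s ^ 2 * e) =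
      (6 * ((1 + K) * ‖θ‖) ^ 2 + (K * ‖θ‖) ^ 2 + ‖θ‖ ^ 2) * s * (s ^ 2 * e) +
      cv (Module.finrank ℝ E) K ‖θ‖ * (s + δ) * (s ^ 2 * e) +
      (6 * ((1 + K) * ‖θ‖) ^ 2 + (K * ‖θ‖) ^ 2 + ‖θ‖ ^ 2) * δ * (s ^ 2 * e) := by
    rw [c2]
    ring
  have hpos : 0 ≤ (6 * ((1 + K) * ‖θ‖) ^ 2 + (K * ‖θ‖) ^ 2 + ‖θ‖ ^ 2) * δ * (s ^ 2 * e) := by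
    positivity
  rw [hfin]
  refine (abs_le.2 ⟨?_, ?_⟩)
  · linarith [(abs_le.1 hdiff).1, (abs_le.1 hv).1]
  · linarith [(abs_le.1 hdiff).2, (abs_le.1 hv).2]

/-- The approximations are bounded in `L⁴`, so their second moments converge. -/
lemma SolData.sq_moment (S : SolData P ν q K α βt w wt z x η) (θ : E) {s t δ : ℝ} (hs : 0 < s)
    (hs1 : s ≤ 1) (hst : s ^ 4 = t) (hδ : 0 < δ) {Bad : Set Ω} (hBm : MeasurableSet Bad)
    (hB : ∀ᵐ ω ∂P, ω ∉ Bad → ∀ u ∈ Set.Icc 0 t, ‖w u ω - w 0 ω‖ ≤ δ)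
    (hBp : P Bad ≤ ENNReal.ofReal (δ ^ 2)) :
    |∫ ω, ⟪x t ω - z, θ⟫ ^ 2 ∂P - ‖θ‖ ^ 2 * t - ‖gco ν βt θ z‖ ^ 2 * meanLT t ⟪z, ν⟫| ≤
      c2 (Module.finrank ℝ E) K ‖θ‖ * (s + δ) *
        (s ^ 2 * Real.exp (-(⟪z, ν⟫ ^ 2 / (4 * t)))) := by
  have ht : 0 ≤ t := hst ▸ by positivity
  obtain ⟨ns, hns, hlim⟩ := S.approx ht
  have hm : ∀ i, AEStronglyMeasurable (fun ω => (asum ν q α θ η (pt 0 t (ns i)) x (ns i) ω +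
      msum wt η (pt 0 t (ns i)) (gco ν βt θ) x (ns i) ω + wsum w θ t ω) ^ 2) P := fun i =>
    ((S.measurable_approx θ ht (ns i)).pow_const 2).aestronglyMeasurable
  have hT := (tendsto_integral_of_sq_bdd hm (g := fun ω => ⟪x t ω - z, θ⟫ ^ 2)
    (C := ENNReal.ofReal (c4 K ‖θ‖ * (t ^ 2 + t * Real.exp (-(⟪z, ν⟫ ^ 2 / (2 * t))))))
    (tendstoInMeasure_of_tendsto_ae hm ?_) ENNReal.ofReal_ne_top fun i => ?_).2
  · refine le_of_tendsto ((hT.sub_const _).sub_const _).abs (Eventually.of_forall fun i => ?_)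
    exact S.sq_approx θ hs hs1 hst hδ hBm hB hBp (hns i)
  · filter_upwards [hlim θ] with ω h using h.pow 2
  · refine le_trans (le_of_eq (lintegral_congr fun ω => ?_)) (S.fourth_approx θ ht (hns i))
    rw [Real.enorm_eq_ofReal (sq_nonneg _), ← ENNReal.ofReal_pow (sq_nonneg _)]
    ring_nf

/-- With high probability the noise moves little in a short time. -/
lemma exists_bad (hw : IsWiener P w) {δ : ℝ} (hδ : 0 < δ) :
    ∃ t₀ > 0, ∃ Bad : Set Ω, MeasurableSet Bad ∧ P Bad ≤ ENNReal.ofReal (δ ^ 2) ∧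
      ∀ᵐ ω ∂P, ω ∉ Bad → ∀ u ∈ Set.Icc 0 t₀, ‖w u ω - w 0 ω‖ ≤ δ := by
  set B : ℕ → Set Ω := fun m => ⋃ r : ℚ, {ω | (0 ≤ (r : ℝ) ∧ (r : ℝ) ≤ 1 / (m + 1)) ∧
    δ < ‖w r ω - w 0 ω‖} with hBd
  have hBm : ∀ m, MeasurableSet (B m) := fun m => MeasurableSet.iUnion fun r =>
    (MeasurableSet.const _).inter (measurableSet_lt measurable_const
      ((hw.meas _).sub (hw.meas _)).norm)
  have hanti : Antitone B := by
    intro m m' hmm ω hω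
    obtain ⟨r, ⟨h0, h1⟩, h2⟩ := Set.mem_iUnion.1 hω
    exact Set.mem_iUnion.2 ⟨r, ⟨h0, h1.trans (by gcongr)⟩, h2⟩
  have hzero : P (⋂ m, B m) = 0 := by
    refine measure_eq_zero_iff_ae_notMem.2 ?_
    filter_upwards [hw.cont] with ω hc hω
    have h0 : (fun u => ‖w u ω - w 0 ω‖) 0 < δ := by simpa using hδ
    obtain ⟨ρ, hρ, hball⟩ := Metric.isOpen_iff.1
      (isOpen_lt (hc.sub continuous_const).norm continuous_const) 0 h0
    obtain ⟨m, hm⟩ := exists_nat_one_div_lt hρ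
    obtain ⟨r, ⟨hr0, hr1⟩, hr2⟩ := Set.mem_iUnion.1 (Set.mem_iInter.1 hω m)
    refine lt_asymm hr2 (hball ?_)
    rw [Metric.mem_ball, Real.dist_eq, sub_zero, abs_of_nonneg hr0]
    exact hr1.trans_lt hm
  have hlim := tendsto_measure_iInter_atTop (μ := P) (fun m => (hBm m).nullMeasurableSet) hanti
    ⟨0, measure_ne_top _ _⟩
  rw [hzero] at hlim
  obtain ⟨m, hm⟩ := (hlim.eventually_le_const
    (show (0 : ENNReal) < ENNReal.ofReal (δ ^ 2) by positivity)).exists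
  refine ⟨1 / (2 * (m + 1)), by positivity, B m, hBm m, hm, ?_⟩
  filter_upwards [hw.cont] with ω hc hω u hu
  by_contra! hlt
  obtain ⟨ρ, hρ, hball⟩ := Metric.isOpen_iff.1
    (isOpen_lt continuous_const (hc.sub continuous_const).norm) u hlt
  have hum : u < 1 / (m + 1 : ℝ) := by
    refine hu.2.trans_lt ?_
    gcongr
    linarith [show (0 : ℝ) < m + 1 by positivity]
  obtain ⟨r, hr1, hr2⟩ := exists_rat_btwn (lt_min (show u < u + ρ by linarith) hum)
  refine hω (Set.mem_iUnion.2 ⟨r, ⟨hu.1.trans hr1.le, (hr2.trans_le (min_le_right _ _)).le⟩, ?_⟩)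
  refine hball ?_
  rw [Metric.mem_ball, Real.dist_eq, abs_of_pos (sub_pos.2 hr1)]
  linarith [hr2.trans_le (min_le_left _ _)]

/-- The second moment, uniformly in the starting point. -/
lemma exists_sq_moment (hw : IsWiener P w) {K : ℝ} (hK : 0 < K) (θ : E) {ε : ℝ} (hε : 0 < ε) :
    ∃ t₀ > 0, ∀ t, 0 < t → t < t₀ → ∀ (ν : E) (q : ℝ) (α : E → E) (βt : E → E →L[ℝ] E)
      (wt : ℝ → Ω → E) (z : E) (x : ℝ → Ω → E) (η : ℝ → Ω → ℝ),
      SolData P ν q K α βt w wt z x η →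
      |∫ ω, ⟪x t ω - z, θ⟫ ^ 2 ∂P - ‖θ‖ ^ 2 * t - ‖gco ν βt θ z‖ ^ 2 * meanLT t ⟪z, ν⟫| ≤
        ε * (√t * Real.exp (-(⟪z, ν⟫ ^ 2 / (4 * t)))) := by
  set c := c2 (Module.finrank ℝ E) K ‖θ‖ with hc
  have hc0 : 0 ≤ c := by rw [hc, c2, cv]; positivity
  set δ := ε / (2 * (c + 1)) with hδd
  have hδ : 0 < δ := by positivity
  obtain ⟨t₁, ht₁, Bad, hBm, hBp, hB⟩ := exists_bad hw hδ
  refine ⟨min t₁ (min 1 δ ^ 4), lt_min ht₁ (by positivity), fun t ht htt ν q α βt wt z x η S => ?_⟩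
  set s := t ^ (1 / 4 : ℝ) with hsd
  have hs : 0 < s := by positivity
  have hst : s ^ 4 = t := by
    rw [hsd, ← Real.rpow_natCast, ← Real.rpow_mul ht.le]
    norm_num
  have hs' : s < min 1 δ := by
    refine lt_of_pow_lt_pow_left₀ 4 (by positivity) ?_
    rw [hst]
    exact htt.trans_le (min_le_right _ _)
  have hs1 : s ≤ 1 := (hs'.trans_le (min_le_left _ _)).le
  have hsδ : s ≤ δ := (hs'.trans_le (min_le_right _ _)).le
  have hsq : √t = s ^ 2 := by rw [← hst, show s ^ 4 = (s ^ 2) ^ 2 by ring, Real.sqrt_sq (by positivity)]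
  have hB' : ∀ᵐ ω ∂P, ω ∉ Bad → ∀ u ∈ Set.Icc 0 t, ‖w u ω - w 0 ω‖ ≤ δ := by
    filter_upwards [hB] with ω h hω u hu
    exact h hω u ⟨hu.1, hu.2.trans (htt.trans_le (min_le_left _ _)).le⟩
  refine (S.sq_moment θ hs hs1 hst hδ hBm hB' hBp).trans ?_
  rw [hsq, ← hc]
  refine mul_le_mul_of_nonneg_right ?_ (by positivity)
  calc c * (s + δ) ≤ (c + 1) * (δ + δ) := by gcongr; linarith
    _ = ε := by rw [hδd]; field_simp; ring

end

/-! ### Integrals concentrating on the hyperplane -/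

section
variable {d : ℕ} {ν : EuclideanSpace ℝ (Fin (d + 1))}
  {J : EuclideanSpace ℝ (Fin d) →ₗᵢ[ℝ] EuclideanSpace ℝ (Fin (d + 1))}

lemma norm_sq_split (hν : ‖ν‖ = 1) (hJν : ∀ y, ⟪J y, ν⟫ = 0) (y : EuclideanSpace ℝ (Fin d)) (b : ℝ) :
    ‖J y + b • ν‖ ^ 2 = ‖y‖ ^ 2 + b ^ 2 := by
  rw [norm_add_sq_real, inner_smul_right, hJν, J.norm_map, norm_smul, hν, Real.norm_eq_abs, mul_one,
    sq_abs]
  ring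

lemma inner_split (hν : ‖ν‖ = 1) (hJν : ∀ y, ⟪J y, ν⟫ = 0) (y : EuclideanSpace ℝ (Fin d)) (b : ℝ) :
    ⟪J y + b • ν, ν⟫ = b := by
  simp [inner_add_left, inner_smul_left, hJν, hν]

/-- Coordinates `z = J y + b ν` preserve Lebesgue measure. -/
lemma measurePreserving_split (hν : ‖ν‖ = 1) (hJν : ∀ y, ⟪J y, ν⟫ = 0) :
    MeasurePreserving (fun p : EuclideanSpace ℝ (Fin d) × ℝ => J p.1 + p.2 • ν) volume volume ∧
    MeasurableEmbedding (fun p : EuclideanSpace ℝ (Fin d) × ℝ => J p.1 + p.2 • ν) := by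
  let L : WithLp 2 (EuclideanSpace ℝ (Fin d) × ℝ) →ₗᵢ[ℝ] EuclideanSpace ℝ (Fin (d + 1)) :=
    { toFun := fun p => J p.fst + p.snd • ν
      map_add' := fun p p' => by simp only [WithLp.add_fst, WithLp.add_snd, map_add]; module
      map_smul' := fun c p => by
        simp only [WithLp.smul_fst, WithLp.smul_snd, map_smul, RingHom.id_apply, smul_eq_mul]; module
      norm_map' := fun p => by
        refine (sq_eq_sq₀ (norm_nonneg _) (norm_nonneg _)).1 ?_
        rw [WithLp.prod_norm_sq_eq_of_L2, Real.norm_eq_abs, sq_abs]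
        exact norm_sq_split hν hJν _ _ }
  have hr : Module.finrank ℝ (WithLp 2 (EuclideanSpace ℝ (Fin d) × ℝ)) =
      Module.finrank ℝ (EuclideanSpace ℝ (Fin (d + 1))) := by
    rw [(WithLp.linearEquiv 2 ℝ (EuclideanSpace ℝ (Fin d) × ℝ)).finrank_eq]
    simp
  let L' := L.toLinearIsometryEquiv hr
  have h1 := L'.measurePreserving.comp (WithLp.volume_preserving_toLp (EuclideanSpace ℝ (Fin d)) ℝ)
  have h2 : MeasurableEmbedding (L' ∘ WithLp.toLp 2) :=
    L'.toHomeomorph.measurableEmbedding.comp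
      (MeasurableEquiv.toLp 2 (EuclideanSpace ℝ (Fin d) × ℝ)).measurableEmbedding
  exact ⟨h1, h2⟩

/-- An approximation of the identity in the direction `ν` only. -/
lemma tendsto_concentrate (hν : ‖ν‖ = 1) (hJν : ∀ y, ⟪J y, ν⟫ = 0)
    {Φ : EuclideanSpace ℝ (Fin (d + 1)) → ℝ} (hΦ : Continuous Φ) (hΦs : HasCompactSupport Φ)
    {k : ℝ → ℝ} (hk : Integrable k) :
    Tendsto (fun t : ℝ => (√t)⁻¹ * ∫ z, Φ z * k (⟪z, ν⟫ / √t)) (nhdsWithin 0 (Set.Ioi 0))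
      (nhds ((∫ y, Φ (J y)) * ∫ b, k b)) := by
  obtain ⟨hmp, hme⟩ := measurePreserving_split hν hJν
  obtain ⟨M, hM⟩ := hΦs.exists_bound_of_continuous hΦ
  obtain ⟨R, hR⟩ := hΦs.isCompact.isBounded.exists_norm_le
  have key : ∀ t : ℝ, 0 < t → (√t)⁻¹ * ∫ z, Φ z * k (⟪z, ν⟫ / √t) =
      ∫ p : EuclideanSpace ℝ (Fin d) × ℝ, Φ (J p.1 + (√t * p.2) • ν) * k p.2 := by
    intro t ht
    have hs : 0 < √t := Real.sqrt_pos.2 ht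
    have hmap : Measure.map (Prod.map id (√t * ·)) (volume : Measure (EuclideanSpace ℝ (Fin d) × ℝ)) =
        ENNReal.ofReal (√t)⁻¹ • volume := by
      rw [Measure.volume_eq_prod, ← Measure.map_prod_map _ _ measurable_id (by fun_prop),
        Measure.map_id, Real.map_volume_mul_left hs.ne', Measure.prod_smul_right,
        abs_of_pos (inv_pos.2 hs)]
    have hemb : MeasurableEmbedding (Prod.map id (√t * ·) :
        EuclideanSpace ℝ (Fin d) × ℝ → EuclideanSpace ℝ (Fin d) × ℝ) :=
      MeasurableEmbedding.id.prodMap (Homeomorph.mulLeft₀ √t hs.ne').measurableEmbedding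
    rw [← hmp.integral_comp hme, ← smul_eq_mul, ← ENNReal.toReal_ofReal (inv_nonneg.2 hs.le),
      ← integral_smul_measure, ← hmap, hemb.integral_map]
    refine integral_congr_ae (Eventually.of_forall fun p => ?_)
    simp only [Prod.map_fst, Prod.map_snd, id, inner_split hν hJν]
    rw [mul_div_cancel_left₀ _ hs.ne']
  have hlim : Tendsto (fun t : ℝ => ∫ p : EuclideanSpace ℝ (Fin d) × ℝ,
      Φ (J p.1 + (√t * p.2) • ν) * k p.2) (nhdsWithin 0 (Set.Ioi 0))
      (nhds (∫ p : EuclideanSpace ℝ (Fin d) × ℝ, Φ (J p.1) * k p.2)) := by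
    have hbint : Integrable (fun p : EuclideanSpace ℝ (Fin d) × ℝ =>
        ((Metric.closedBall 0 R).indicator (fun _ => M) p.1) * ‖k p.2‖) :=
      ((integrable_indicator_iff Metric.isClosed_closedBall.measurableSet).2
        (integrableOn_const (isCompact_closedBall _ _).measure_ne_top)).mul_prod hk.norm
    refine tendsto_integral_filter_of_dominated_convergence _ (Eventually.of_forall fun t => ?_)
      (Eventually.of_forall fun t => Eventually.of_forall fun p => ?_) hbint
      (Eventually.of_forall fun p => ?_)
    · refine AEStronglyMeasurable.mul (Continuous.aestronglyMeasurable ?_)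
        hk.aestronglyMeasurable.comp_snd
      exact hΦ.comp (by fun_prop)
    · rw [norm_mul]
      refine mul_le_mul_of_nonneg_right ?_ (norm_nonneg _)
      by_cases h : p.1 ∈ Metric.closedBall 0 R
      · rw [Set.indicator_of_mem h]
        exact hM _
      · rw [Set.indicator_of_notMem h, norm_le_zero_iff]
        by_contra h0
        refine h (mem_closedBall_zero_iff.2 (le_trans ?_ (hR _ (subset_tsupport _ h0))))
        refine (sq_le_sq₀ (norm_nonneg _) (norm_nonneg _)).1 ?_
        rw [norm_sq_split hν hJν]
        exact le_add_of_nonneg_right (sq_nonneg _)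
    · refine Tendsto.mul_const _ ?_
      have : Continuous fun t : ℝ => Φ (J p.1 + (√t * p.2) • ν) := hΦ.comp (by fun_prop)
      have := (this.tendsto 0).mono_left (nhdsWithin_le_nhds (s := Set.Ioi 0))
      simpa using this
  have hprod := integral_prod_mul (μ := (volume : Measure (EuclideanSpace ℝ (Fin d))))
    (ν := (volume : Measure ℝ)) (fun y => Φ (J y)) k
  rw [← hprod]
  exact hlim.congr' (by filter_upwards [self_mem_nhdsWithin] with t ht using (key t ht).symm)

end

lemma meanLT_scale {t : ℝ} (ht : 0 < t) (a : ℝ) : meanLT t a = √t * meanLT 1 (a / √t) := by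
  have hs : 0 < √t := Real.sqrt_pos.2 ht
  have h := intervalIntegral.mul_integral_comp_mul_left (a := 0) (b := 1) (c := t)
    (f := fun τ => (√(2 * Real.pi * τ))⁻¹ * Real.exp (-(a ^ 2 / (2 * τ))))
  rw [mul_zero, mul_one] at h
  rw [meanLT, ← h, meanLT, ← intervalIntegral.integral_const_mul, ← intervalIntegral.integral_const_mul]
  refine intervalIntegral.integral_congr fun u _ => ?_
  rw [show 2 * Real.pi * (t * u) = t * (2 * Real.pi * u) by ring, Real.sqrt_mul ht.le, mul_inv, div_pow,
    Real.sq_sqrt ht.le, show a ^ 2 / (2 * (t * u)) = a ^ 2 / t / (2 * u) by rw [div_div]; ring_nf]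
  have : t = √t * √t := (Real.mul_self_sqrt ht.le).symm
  nth_rewrite 1 [this]
  field_simp

lemma measurable_meanLT : Measurable (meanLT 1) := by
  have h : StronglyMeasurable fun p : ℝ × ℝ =>
      (√(2 * Real.pi * p.2))⁻¹ * Real.exp (-(p.1 ^ 2 / (2 * p.2))) :=
    Measurable.stronglyMeasurable (by fun_prop)
  have h2 := (h.integral_prod_right' (ν := volume.restrict (Set.Ioc (0:ℝ) 1))).measurable
  convert h2 using 2 with a
  rw [meanLT, intervalIntegral.integral_of_le zero_le_one]

/-- The mean local time is the integral of the heat kernel over time, and the heat kernel has total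
mass one in space. -/
lemma integral_meanLT : Integrable (meanLT 1) ∧ ∫ b, meanLT 1 b = 1 := by
  have hnn : ∀ b, 0 ≤ meanLT 1 b := fun b => meanLT_nonneg zero_le_one b
  have hl : ∫⁻ b, ENNReal.ofReal (meanLT 1 b) = 1 := by
    have h1 : ∀ b, ENNReal.ofReal (meanLT 1 b) = ∫⁻ u in Set.Ioc (0:ℝ) 1,
        ENNReal.ofReal ((√(2 * Real.pi * u))⁻¹ * Real.exp (-(b ^ 2 / (2 * u)))) := by
      intro b
      rw [meanLT, intervalIntegral.integral_of_le zero_le_one, ofReal_integral_eq_lintegral_ofReal]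
      · exact integrableOn_meanLT b
      · exact Eventually.of_forall fun u => by positivity
    simp_rw [h1]
    rw [lintegral_lintegral_swap (Measurable.aemeasurable (by fun_prop))]
    have h2 : ∀ u ∈ Set.Ioc (0:ℝ) 1, ∫⁻ b : ℝ,
        ENNReal.ofReal ((√(2 * Real.pi * u))⁻¹ * Real.exp (-(b ^ 2 / (2 * u)))) = 1 := by
      intro u hu
      rw [← lintegral_gaussianPDF_eq_one 0 (v := u.toNNReal) (by simpa using hu.1)]
      refine lintegral_congr fun b => ?_
      rw [gaussianPDF, gaussianPDFReal, Real.coe_toNNReal _ hu.1.le, sub_zero, neg_div]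
    rw [setLIntegral_congr_fun measurableSet_Ioc h2]
    simp
  have hi : Integrable (meanLT 1) :=
    (lintegral_ofReal_ne_top_iff_integrable measurable_meanLT.aestronglyMeasurable
      (Eventually.of_forall hnn)).1 (by rw [hl]; exact ENNReal.one_ne_top)
  refine ⟨hi, ?_⟩
  rw [integral_eq_lintegral_of_nonneg_ae (Eventually.of_forall hnn) hi.aestronglyMeasurable, hl]
  rfl

/-! ### Integration over the starting points -/

section
variable {d : ℕ}
variable {P : Measure Ω} [IsProbabilityMeasure P] {ν : EuclideanSpace ℝ (Fin (d + 1))} {q K : ℝ}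
  {α : EuclideanSpace ℝ (Fin (d + 1)) → EuclideanSpace ℝ (Fin (d + 1))}
  {βt : EuclideanSpace ℝ (Fin (d + 1)) →
    EuclideanSpace ℝ (Fin (d + 1)) →L[ℝ] EuclideanSpace ℝ (Fin (d + 1))}
  {w wt : ℝ → Ω → EuclideanSpace ℝ (Fin (d + 1))}
  {X : EuclideanSpace ℝ (Fin (d + 1)) → ℝ → Ω → EuclideanSpace ℝ (Fin (d + 1))}
  {η : EuclideanSpace ℝ (Fin (d + 1)) → ℝ → Ω → ℝ}
  {J : EuclideanSpace ℝ (Fin d) →ₗᵢ[ℝ] EuclideanSpace ℝ (Fin (d + 1))}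
  {φ : EuclideanSpace ℝ (Fin (d + 1)) → ℝ}

lemma SolData.norm_fourth_moment {z : EuclideanSpace ℝ (Fin (d + 1))}
    {x : ℝ → Ω → EuclideanSpace ℝ (Fin (d + 1))} {η : ℝ → Ω → ℝ}
    (S : SolData P ν q K α βt w wt z x η) {t : ℝ} (ht : 0 ≤ t) :
    ∫ ω, ‖x t ω - z‖ ^ 4 ∂P ≤
      (d + 1) ^ 2 * c4 K 1 * (t ^ 2 + t * Real.exp (-(⟪z, ν⟫ ^ 2 / (2 * t)))) := by
  have hc4 := S.c4_nonneg (r := 1)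
  have hm : ∀ i, Measurable fun ω => ⟪x t ω - z, EuclideanSpace.basisFun (Fin (d + 1)) ℝ i⟫ := fun i =>
    ((S.measurable_x ht).sub_const z).inner measurable_const
  rw [integral_eq_lintegral_of_nonneg_ae (Eventually.of_forall fun _ => by positivity)
    (((S.measurable_x ht).sub_const z).norm.pow_const 4).aestronglyMeasurable]
  refine ENNReal.toReal_le_of_le_ofReal (by positivity) ?_
  set b := EuclideanSpace.basisFun (Fin (d + 1)) ℝ with hb
  set C := c4 K 1 * (t ^ 2 + t * Real.exp (-(⟪z, ν⟫ ^ 2 / (2 * t)))) with hC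
  have hC0 : 0 ≤ C := by positivity
  calc _ ≤ ∫⁻ ω, ∑ i, ENNReal.ofReal (d + 1) * ENNReal.ofReal (⟪x t ω - z, b i⟫ ^ 4) ∂P := by
        refine lintegral_mono fun ω => ?_
        simp_rw [← ENNReal.ofReal_mul (show (0:ℝ) ≤ d + 1 by positivity)]
        rw [← ENNReal.ofReal_sum_of_nonneg fun i _ => by positivity, ← Finset.mul_sum]
        refine ENNReal.ofReal_le_ofReal ?_
        have h1 := sq_sum_le_card_mul_sum_sq (s := Finset.univ)
          (f := fun i => ⟪x t ω - z, b i⟫ ^ 2)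
        have h2 := b.sum_sq_norm_inner_left (x t ω - z)
        simp only [Real.norm_eq_abs, sq_abs] at h2
        rw [h2, Finset.card_univ, Fintype.card_fin] at h1
        simp only [← pow_mul] at h1
        push_cast at h1
        exact h1
    _ ≤ ∑ i : Fin (d + 1), ENNReal.ofReal (d + 1) * ENNReal.ofReal C := by
        rw [lintegral_finsetSum _ fun i _ => ((hm i).pow_const 4).ennreal_ofReal.const_mul _]
        refine Finset.sum_le_sum fun i _ => ?_
        rw [lintegral_const_mul _ ((hm i).pow_const 4).ennreal_ofReal]
        have := S.fourth_moment (b i) ht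
        rw [b.norm_eq_one] at this
        gcongr
    _ = _ := by
        rw [Finset.sum_const, Finset.card_univ, Fintype.card_fin, nsmul_eq_mul,
          ← ENNReal.ofReal_mul (by positivity), ← ENNReal.ofReal_natCast,
          ← ENNReal.ofReal_mul (by positivity), hC]
        push_cast
        ring_nf

lemma integrable_exp_neg_sq_div {c : ℝ} (hc : 0 < c) :
    Integrable fun b : ℝ => Real.exp (-(b ^ 2 / c)) := by
  have := integrable_exp_neg_mul_sq (inv_pos.2 hc)
  refine this.congr (Eventually.of_forall fun b => ?_)
  simp only
  congr 1
  field_simp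

lemma exp_scale {t c : ℝ} (ht : 0 ≤ t) (a : ℝ) :
    Real.exp (-((a / √t) ^ 2 / c)) = Real.exp (-(a ^ 2 / (c * t))) := by
  rw [div_pow, Real.sq_sqrt ht, div_div, mul_comm]

/-- Starting points at distance of order `√t` from the hyperplane have measure of order `√t`, which
makes the contribution of the local time to the fourth moment of order `t ^ (3/2)`. -/
lemma tendsto_fourth (hν : ‖ν‖ = 1) (hJν : ∀ y, ⟪J y, ν⟫ = 0)
    (S : ∀ z, SolData P ν q K α βt w wt z (X z) (η z)) (hφc : Continuous φ)
    (hφs : HasCompactSupport φ) :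
    Tendsto (fun t : ℝ => (1 / t) * ∫ z, φ z * ∫ ω, ‖X z t ω - z‖ ^ 4 ∂P)
      (nhdsWithin 0 (Set.Ioi 0)) (nhds 0) := by
  set C := (d + 1) ^ 2 * c4 K 1 with hC
  have hC0 : 0 ≤ C := by
    have := (S 0).c4_nonneg (r := 1)
    positivity
  have hcon := tendsto_concentrate hν hJν hφc.abs hφs.norm (integrable_exp_neg_sq_div (c := 2) two_pos)
  have hφi : Integrable φ := hφc.integrable_of_hasCompactSupport hφs
  set l := (∫ y, |φ (J y)|) * ∫ b : ℝ, Real.exp (-(b ^ 2 / 2)) with hl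
  have ht0 : Tendsto (fun t : ℝ => t) (nhdsWithin 0 (Set.Ioi 0)) (nhds 0) :=
    tendsto_id.mono_left nhdsWithin_le_nhds
  have hs0 : Tendsto (fun t : ℝ => √t) (nhdsWithin 0 (Set.Ioi 0)) (nhds 0) := by
    simpa using (Real.continuous_sqrt.tendsto 0).mono_left (nhdsWithin_le_nhds (s := Set.Ioi 0))
  have hlim := (((ht0.mul_const (∫ z, |φ z|)).add (hs0.mul hcon)).const_mul C)
  rw [zero_mul, zero_mul, add_zero, mul_zero] at hlim
  refine squeeze_zero_norm' ?_ hlim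
  filter_upwards [self_mem_nhdsWithin] with t ht
  have ht : 0 < t := ht
  have hs : 0 < √t := Real.sqrt_pos.2 ht
  have hi2 : Integrable fun z => |φ z| * Real.exp (-((⟪z, ν⟫ / √t) ^ 2 / 2)) := by
    refine Integrable.mul_bdd (c := 1) hφi.abs (by fun_prop) (Eventually.of_forall fun z => ?_)
    rw [Real.norm_of_nonneg (Real.exp_pos _).le, Real.exp_le_one_iff, neg_nonpos]
    positivity
  have hb : ‖∫ z, φ z * ∫ ω, ‖X z t ω - z‖ ^ 4 ∂P‖ ≤
      ∫ z, (C * t ^ 2 * |φ z| + C * t * (|φ z| * Real.exp (-((⟪z, ν⟫ / √t) ^ 2 / 2)))) := by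
    refine norm_integral_le_of_norm_le ((hφi.abs.const_mul _).add (hi2.const_mul _))
      (Eventually.of_forall fun z => ?_)
    rw [norm_mul, Real.norm_eq_abs, Real.norm_of_nonneg (integral_nonneg fun _ => by positivity),
      exp_scale ht.le]
    refine (mul_le_mul_of_nonneg_left ((S z).norm_fourth_moment ht.le) (abs_nonneg _)).trans_eq ?_
    rw [← hC]
    ring
  rw [integral_add (hφi.abs.const_mul _) (hi2.const_mul _), integral_const_mul, integral_const_mul] at hb
  rw [norm_mul, Real.norm_of_nonneg (by positivity)]
  refine (mul_le_mul_of_nonneg_left hb (by positivity)).trans_eq ?_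
  have hst : √t * (√t)⁻¹ = 1 := mul_inv_cancel₀ hs.ne'
  rw [← mul_assoc (√t), hst]
  field_simp

/-- Uniformly in the starting point, the second moment has the asymptotics of `exists_sq_moment`. The
errors, multiplied by `φ`, contribute as much as `√t` times the measure of a layer of width `√t`. -/
lemma tendsto_second (hν : ‖ν‖ = 1) (hJν : ∀ y, ⟪J y, ν⟫ = 0)
    (S : ∀ z, SolData P ν q K α βt w wt z (X z) (η z))
    (hXmeas : ∀ t : ℝ, 0 ≤ t →
      Measurable fun p : EuclideanSpace ℝ (Fin (d + 1)) × Ω => X p.1 t p.2)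
    (θ : EuclideanSpace ℝ (Fin (d + 1))) (hφc : Continuous φ) (hφs : HasCompactSupport φ) :
    Tendsto (fun t : ℝ => (1 / t) * ∫ z, φ z * ∫ ω, ⟪X z t ω - z, θ⟫ ^ 2 ∂P)
      (nhdsWithin 0 (Set.Ioi 0))
      (nhds (‖θ‖ ^ 2 * (∫ z, φ z) + ∫ y, φ (J y) * ‖gco ν βt θ (J y)‖ ^ 2)) := by
  have hg : Continuous fun z => φ z * ‖gco ν βt θ z‖ ^ 2 :=
    hφc.mul (((S 0).continuous_gco θ).norm.pow 2)
  have hgs : HasCompactSupport fun z => φ z * ‖gco ν βt θ z‖ ^ 2 := hφs.mul_right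
  have hgi : Integrable fun z => φ z * ‖gco ν βt θ z‖ ^ 2 := hg.integrable_of_hasCompactSupport hgs
  have hφi : Integrable φ := hφc.integrable_of_hasCompactSupport hφs
  obtain ⟨mi, m1⟩ := integral_meanLT
  have hmain := tendsto_concentrate hν hJν hg hgs mi
  have hcon := tendsto_concentrate hν hJν hφc.abs hφs.norm (integrable_exp_neg_sq_div (c := 4) (by norm_num))
  rw [m1, mul_one] at hmain
  set l := (∫ y, |φ (J y)|) * ∫ b : ℝ, Real.exp (-(b ^ 2 / 4)) with hl
  have hl0 : 0 ≤ l := mul_nonneg (integral_nonneg fun _ => abs_nonneg _)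
    (integral_nonneg fun _ => (Real.exp_pos _).le)
  have hmain' := hmain.const_add (‖θ‖ ^ 2 * ∫ z, φ z)
  -- it remains to see that the error tends to zero
  refine hmain'.congr_dist ?_
  refine (Metric.tendsto_nhds).2 fun ε hε => ?_
  obtain ⟨t₀, ht₀, hmom⟩ := exists_sq_moment (S 0).hw (S 0).hK θ
    (show 0 < ε / (l + 1) by positivity)
  filter_upwards [self_mem_nhdsWithin, Ioo_mem_nhdsGT ht₀, hcon.eventually_lt_const (lt_add_one l)]
    with t ht htt hlt
  have ht : 0 < t := ht
  have hs : 0 < √t := Real.sqrt_pos.2 ht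
  set δ := ε / (l + 1) with hδ
  set k : EuclideanSpace ℝ (Fin (d + 1)) → ℝ := fun z => meanLT 1 (⟪z, ν⟫ / √t)
  set m : EuclideanSpace ℝ (Fin (d + 1)) → ℝ := fun z => ∫ ω, ⟪X z t ω - z, θ⟫ ^ 2 ∂P
  have hmm : StronglyMeasurable m := by
    have : Measurable fun p : EuclideanSpace ℝ (Fin (d + 1)) × Ω => ⟪X p.1 t p.2 - p.1, θ⟫ ^ 2 :=
      (((hXmeas t ht.le).sub measurable_fst).inner measurable_const).pow_const 2
    exact this.stronglyMeasurable.integral_prod_right'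
  have hkm : Measurable k := measurable_meanLT.comp (by fun_prop)
  have hi1 : Integrable fun z => φ z * ‖gco ν βt θ z‖ ^ 2 * k z := by
    refine Integrable.mul_bdd (c := 1) hgi hkm.aestronglyMeasurable (Eventually.of_forall fun z => ?_)
    rw [Real.norm_of_nonneg (meanLT_nonneg zero_le_one _)]
    refine (meanLT_le zero_le_one _).trans ?_
    rw [Real.sqrt_one, one_mul, Real.exp_le_one_iff, neg_nonpos]
    positivity
  have hi2 : Integrable fun z => |φ z| * Real.exp (-((⟪z, ν⟫ / √t) ^ 2 / 4)) := by
    refine Integrable.mul_bdd (c := 1) hφi.abs (by fun_prop) (Eventually.of_forall fun z => ?_)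
    rw [Real.norm_of_nonneg (Real.exp_pos _).le, Real.exp_le_one_iff, neg_nonpos]
    positivity
  have herr : ∀ z, ‖φ z * m z - (t * ‖θ‖ ^ 2 * φ z + √t * (φ z * ‖gco ν βt θ z‖ ^ 2 * k z))‖ ≤
      δ * √t * (|φ z| * Real.exp (-((⟪z, ν⟫ / √t) ^ 2 / 4))) := by
    intro z
    have h := hmom t ht htt.2 _ _ _ _ _ _ _ _ (S z)
    rw [meanLT_scale ht, ← exp_scale ht.le] at h
    calc _ = |φ z| * |m z - ‖θ‖ ^ 2 * t - ‖gco ν βt θ z‖ ^ 2 * (√t * k z)| := by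
          rw [← abs_mul, Real.norm_eq_abs]
          ring_nf
      _ ≤ |φ z| * (δ * (√t * Real.exp (-((⟪z, ν⟫ / √t) ^ 2 / 4)))) := by gcongr
      _ = _ := by ring
  have hT : Integrable fun z => t * ‖θ‖ ^ 2 * φ z + √t * (φ z * ‖gco ν βt θ z‖ ^ 2 * k z) :=
    (hφi.const_mul _).add (hi1.const_mul _)
  have hD : Integrable fun z => φ z * m z -
      (t * ‖θ‖ ^ 2 * φ z + √t * (φ z * ‖gco ν βt θ z‖ ^ 2 * k z)) :=
    (hi2.const_mul (δ * √t)).mono' ((hφc.aestronglyMeasurable.mul hmm.aestronglyMeasurable).sub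
      hT.aestronglyMeasurable) (Eventually.of_forall herr)
  have hM : Integrable fun z => φ z * m z := (hD.add hT).congr (Eventually.of_forall fun z => by simp)
  have hst : √t * √t = t := Real.mul_self_sqrt ht.le
  have hti : 1 / t * √t = (√t)⁻¹ := by
    nth_rewrite 1 [← hst]
    field_simp
  have e1 : ‖θ‖ ^ 2 * (∫ z, φ z) + (√t)⁻¹ * ∫ z, φ z * ‖gco ν βt θ z‖ ^ 2 * k z =
      1 / t * ∫ z, (t * ‖θ‖ ^ 2 * φ z + √t * (φ z * ‖gco ν βt θ z‖ ^ 2 * k z)) := by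
    rw [integral_add (hφi.const_mul _) (hi1.const_mul _), integral_const_mul, integral_const_mul,
      mul_add, ← mul_assoc (1 / t) √t, hti]
    field_simp
  rw [Real.dist_eq, sub_zero, abs_of_nonneg dist_nonneg, dist_comm, Real.dist_eq, e1, ← mul_sub,
    ← integral_sub hM hT, abs_mul, abs_of_pos (by positivity)]
  calc _ ≤ 1 / t * ∫ z, δ * √t * (|φ z| * Real.exp (-((⟪z, ν⟫ / √t) ^ 2 / 4))) := by
        refine mul_le_mul_of_nonneg_left ?_ (by positivity)
        exact norm_integral_le_of_norm_le (hi2.const_mul _) (Eventually.of_forall herr)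
    _ = δ * ((√t)⁻¹ * ∫ z, |φ z| * Real.exp (-((⟪z, ν⟫ / √t) ^ 2 / 4))) := by
        rw [integral_const_mul, ← hti]
        ring
    _ < δ * (l + 1) := by gcongr
    _ = ε := by rw [hδ]; field_simp

end

/-- Generalized diffusion matrix identification: for every `θ` and every
continuous compactly supported `φ`,
`lim_{t↓0} (1/t) ∫ φ(z) E(x(t,z)-z, θ)² dz = (θ,θ) ∫ φ + ∫_S (β(z)θ, θ) φ(z) dσ_z`
with `β = β̃²`, and `lim_{t↓0} (1/t) ∫ φ(z) E|x(t,z)-z|⁴ dz = 0`. -/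
theorem generalized_diffusion_matrix_identification
    {d : ℕ}
    (P : Measure Ω) [IsProbabilityMeasure P]
    (ν : EuclideanSpace ℝ (Fin (d + 1))) (hν : ‖ν‖ = 1)
    (q : ℝ) (hq : q ∈ Set.Icc (-1 : ℝ) 1)
    (α : EuclideanSpace ℝ (Fin (d + 1)) → EuclideanSpace ℝ (Fin (d + 1)))
    (βt : EuclideanSpace ℝ (Fin (d + 1)) →
      EuclideanSpace ℝ (Fin (d + 1)) →L[ℝ] EuclideanSpace ℝ (Fin (d + 1)))
    (hαS : ∀ v, ⟪α v, ν⟫ = 0) (hβS : ∀ v u, ⟪βt v u, ν⟫ = 0)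
    (K : ℝ) (hK : 0 < K)
    (hbd : ∀ v, ⟪v, ν⟫ = 0 → ‖α v‖ + ‖βt v‖ ≤ K)
    (hlip : ∀ v v', ⟪v, ν⟫ = 0 → ⟪v', ν⟫ = 0 →
      ‖α v - α v'‖ ^ 2 + ‖βt v - βt v'‖ ^ 2 ≤ K * ‖v - v'‖ ^ 2)
    (w : ℝ → Ω → EuclideanSpace ℝ (Fin (d + 1))) (hw : IsWiener P w)
    (wt : ℝ → Ω → EuclideanSpace ℝ (Fin (d + 1))) (hwt : IsWienerIn P ν wt)
    (hind : IndepProc P w wt)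
    (X : EuclideanSpace ℝ (Fin (d + 1)) → ℝ → Ω → EuclideanSpace ℝ (Fin (d + 1)))
    (η : EuclideanSpace ℝ (Fin (d + 1)) → ℝ → Ω → ℝ)
    (hXmeas : ∀ t : ℝ, 0 ≤ t →
      Measurable fun p : EuclideanSpace ℝ (Fin (d + 1)) × Ω => X p.1 t p.2)
    (hskew : ∀ z, IsSkewLT P q (fun t ω => ⟪w t ω, ν⟫) ⟪z, ν⟫
      (fun t ω => ⟪X z t ω, ν⟫) (η z))
    (hsol : ∀ z, SolvesFrom P (MFilt w wt (η z)) ν q α βt w (η z)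
      (fun u ω => wt (η z u ω) ω) 0 (fun _ => z) (X z))
    (J : EuclideanSpace ℝ (Fin d) →ₗᵢ[ℝ] EuclideanSpace ℝ (Fin (d + 1)))
    (hJ : LinearMap.range J.toLinearMap = (Submodule.span ℝ {ν})ᗮ)
    (hsym : ∀ v a b, ⟪βt v a, b⟫ = ⟪a, βt v b⟫)
    (θ : EuclideanSpace ℝ (Fin (d + 1)))
    (φ : EuclideanSpace ℝ (Fin (d + 1)) → ℝ)
    (hφc : Continuous φ) (hφs : HasCompactSupport φ) :
    Tendsto
      (fun t : ℝ => (1 / t) * ∫ z, φ z * ∫ ω, ‖X z t ω - z‖ ^ 4 ∂P)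
      (nhdsWithin 0 (Set.Ioi 0)) (nhds 0) ∧
    Tendsto
      (fun t : ℝ => (1 / t) * ∫ z, φ z * ∫ ω, ⟪X z t ω - z, θ⟫ ^ 2 ∂P)
      (nhdsWithin 0 (Set.Ioi 0))
      (nhds (⟪θ, θ⟫ * (∫ z, φ z) +
        ∫ y : EuclideanSpace ℝ (Fin d), ⟪(βt (J y)) ((βt (J y)) θ), θ⟫ * φ (J y))) := by
  have hJν : ∀ y, ⟪J y, ν⟫ = 0 := fun y => by
    have : J y ∈ (Submodule.span ℝ {ν})ᗮ := hJ ▸ LinearMap.mem_range_self J.toLinearMap y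
    exact Submodule.mem_orthogonal_singleton_iff_inner_left.1 this
  have S : ∀ z, SolData P ν q K α βt w wt z (X z) (η z) := fun z =>
    ⟨hν, hq, hβS, hK, hbd, hlip, hw, hwt, hind, hskew z, hsol z, hsym⟩
  refine ⟨tendsto_fourth hν hJν S hφc hφs, ?_⟩
  have h := tendsto_second hν hJν S hXmeas θ hφc hφs
  have e : ∀ y, φ (J y) * ‖gco ν βt θ (J y)‖ ^ 2 = ⟪(βt (J y)) ((βt (J y)) θ), θ⟫ * φ (J y) :=
    fun y => by
      have hp : projS ν (J y) = J y := by simp [projS, hJν y]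
      rw [gco, hp, hsym, real_inner_self_eq_norm_sq, mul_comm]
  simp_rw [e, ← real_inner_self_eq_norm_sq θ] at h
  exact h
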